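/- arXiv:1604.00284 — 2 statements merged into one kernel-verified Lean document; each statement's English description precedes it below -/
import Mathlib

section
/- Let ω ≥ 1 be an integer and δ ∈ (0,1/8) be fixed, and let η > 0. The series ζ_{E₂}(s) = Σ_{k≥1} E_{2,k}(s) converges absolutely and locally uniformly on the strip {s ∈ ℂ : 1 < Re(s) < 2}, and its sum extends to a meromorphic function on ℂ which is holomorphic at s = 0. Moreover, for fixed ω and δ, the derivative at 0 of this extension satisfies ζ_{E₂}'(0) = -(ζ(-1)/ω)·(5 + 2γ - 2·log 2 - 2·log ω) + (1/(6ω))·log(η) + o(1) as η → 0⁺. -/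
open MeasureTheory Filter

/-- `A₁(u) = ((5 - cosh(η)²)·cosh(η)·sinh(η)²/8) · u·(1 + u²sinh(η)²)^{-5/2}`. -/
noncomputable def coneA1 (η u : ℝ) : ℝ :=
  ((5 - Real.cosh η ^ 2) * Real.cosh η * Real.sinh η ^ 2 / 8) *
    (u * (1 + u ^ 2 * Real.sinh η ^ 2) ^ (-(5 : ℝ) / 2))

/-- `A₂(u) = -(cosh(η)·sinh(η)⁴/8) · u³·(1 + u²sinh(η)²)^{-5/2}`. -/
noncomputable def coneA2 (η u : ℝ) : ℝ :=
  -(Real.cosh η * Real.sinh η ^ 4 / 8) *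
    (u ^ 3 * (1 + u ^ 2 * Real.sinh η ^ 2) ^ (-(5 : ℝ) / 2))

/-- `A₃(u) = (u/(24(u²-1)²))·(2 + 3cosh(η)⁵·(1 + u²sinh(η)²)^{-5/2}
  - 5cosh(η)³·(1 + u²sinh(η)²)^{-3/2})` (the singularity at `u = 1` is removable). -/
noncomputable def coneA3 (η u : ℝ) : ℝ :=
  (u / (24 * (u ^ 2 - 1) ^ 2)) *
    (2 + 3 * Real.cosh η ^ 5 * (1 + u ^ 2 * Real.sinh η ^ 2) ^ (-(5 : ℝ) / 2) -
      5 * Real.cosh η ^ 3 * (1 + u ^ 2 * Real.sinh η ^ 2) ^ (-(3 : ℝ) / 2))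

/-- `E_{2,k}(s) = (2 sin(πs)/π)·(1/(kω))·∫_{k^{δ-1}/ω}^{∞} (k²ω²u² - 1/4)^{-s} ·
  (A₁(u) + A₂(u) + A₃(u)) du`. -/
noncomputable def coneE2 (ω : ℕ) (η δ : ℝ) (k : ℕ) (s : ℂ) : ℂ :=
  (2 * Complex.sin ((Real.pi : ℂ) * s) / (Real.pi : ℂ)) * (1 / ((k : ℂ) * (ω : ℂ))) *
    ∫ u in Set.Ioi ((k : ℝ) ^ (δ - 1) / ω),
      (((k : ℝ) ^ 2 * (ω : ℝ) ^ 2 * u ^ 2 - 1 / 4 : ℝ) : ℂ) ^ (-s) *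
        ((coneA1 η u + coneA2 η u + coneA3 η u : ℝ) : ℂ)

namespace ConeAux
open Set Topology

lemma holo_integral {μ : Measure ℝ} {F : ℂ → ℝ → ℂ} {U : Set ℂ} (hU : IsOpen U)
    {bound : ℝ → ℝ} (hb : Integrable bound μ)
    (hm : ∀ s ∈ U, AEStronglyMeasurable (F s) μ)
    (hd : ∀ᵐ a ∂μ, DifferentiableOn ℂ (fun s => F s a) U)
    (hle : ∀ᵐ a ∂μ, ∀ s ∈ U, ‖F s a‖ ≤ bound a) :
    DifferentiableOn ℂ (fun s => ∫ a, F s a ∂μ) U := by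
  intro s0 hs0
  obtain ⟨R, hR, hRU⟩ := Metric.isOpen_iff.1 hU s0 hs0
  set r := R / 2 with hr
  have hr0 : 0 < r := by positivity
  have hsub : ∀ x ∈ Metric.ball s0 r, Metric.closedBall x (r / 2) ⊆ U := by
    intro x hx y hy
    apply hRU
    rw [Metric.mem_ball] at *
    rw [Metric.mem_closedBall] at hy
    have := dist_triangle y x s0
    linarith
  have hballU : Metric.ball s0 r ⊆ U := fun x hx => hsub x hx (by simp; positivity)
  have key := hasDerivAt_integral_of_dominated_loc_of_deriv_le (μ := μ) (F := F)
    (F' := fun s a => deriv (fun s => F s a) s) (x₀ := s0) (s := Metric.ball s0 r)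
    (bound := fun a => bound a / (r / 2)) (Metric.ball_mem_nhds _ hr0)
    (by
      filter_upwards [hU.mem_nhds hs0] with x hx using hm x hx)
    (hb.mono' (hm s0 hs0) (by filter_upwards [hle] with a ha using ha s0 hs0))
    (by
      have hpos : ∀ n : ℕ, 0 < r / (n + 2 : ℝ) := fun n => by positivity
      have hlt : ∀ n : ℕ, r / (n + 2 : ℝ) < r := fun n => by
        rw [div_lt_iff₀ (by positivity)]
        have : (0:ℝ) ≤ n := Nat.cast_nonneg n
        nlinarith
      refine aestronglyMeasurable_of_tendsto_ae (u := atTop) (f := fun (n : ℕ) (a : ℝ) =>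
        ((r / (n + 2 : ℝ) : ℝ) : ℂ)⁻¹ * (F (s0 + ((r / (n + 2 : ℝ) : ℝ) : ℂ)) a - F s0 a)) ?_ ?_
      · intro n
        refine AEStronglyMeasurable.const_mul ?_ _
        refine (hm _ (hballU ?_)).sub (hm _ hs0)
        simp only [Metric.mem_ball, dist_self_add_left, Complex.norm_real, Real.norm_eq_abs]
        rw [abs_of_pos (hpos n)]; exact hlt n
      · filter_upwards [hd] with a ha
        have h1 : HasDerivAt (fun s => F s a) (deriv (fun s => F s a) s0) s0 :=
          ((ha s0 hs0).differentiableAt (hU.mem_nhds hs0)).hasDerivAt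
        have h2 := h1.tendsto_slope_zero
        have h3 : Tendsto (fun n : ℕ => ((r / (n + 2 : ℝ) : ℝ) : ℂ)) atTop (𝓝[≠] 0) := by
          rw [tendsto_nhdsWithin_iff]
          constructor
          · have : Tendsto (fun n : ℕ => r / (n + 2 : ℝ)) atTop (𝓝 0) := by
              apply Tendsto.const_div_atTop
              exact tendsto_atTop_add_const_right _ _ tendsto_natCast_atTop_atTop
            have h4 := (Complex.continuous_ofReal.tendsto 0).comp this
            simpa [Function.comp_def] using h4
          · filter_upwards with n
            have := (hpos n).ne'
            simp only [mem_compl_iff, mem_singleton_iff]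
            exact_mod_cast this
        have h5 := h2.comp h3
        simpa [Function.comp_def, smul_eq_mul] using h5)
    (by
      filter_upwards [hd, hle] with a had hal x hx
      refine Complex.norm_deriv_le_of_forall_mem_sphere_norm_le (by positivity) ?_ ?_
      · refine DifferentiableOn.diffContOnCl ?_
        refine had.mono ?_
        rw [closure_ball _ (by positivity)]
        exact hsub x hx
      · intro z hz
        exact hal z (hsub x hx (Metric.sphere_subset_closedBall hz)))
    (hb.div_const _)
    (by
      filter_upwards [hd] with a had x hx
      exact ((had x (hballU hx)).differentiableAt (hU.mem_nhds (hballU hx))).hasDerivAt)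
  exact key.2.differentiableAt.differentiableWithinAt

/-- Coefficients of `(1-p)^{-s}`. -/
noncomputable def cc (j : ℕ) (s : ℂ) : ℂ := (∏ i ∈ Finset.range j, (s + i)) / (j.factorial : ℂ)

lemma cc_zero (s : ℂ) : cc 0 s = 1 := by simp [cc]

lemma cc_diff (j : ℕ) : Differentiable ℂ (cc j) := by
  unfold cc
  fun_prop

lemma cc_eq (j : ℕ) (s : ℂ) : Ring.choose (s + j - 1) j = cc j s := by
  rw [← Ring.multichoose_eq, cc, eq_div_iff (by exact_mod_cast j.factorial_ne_zero)]
  have h := Ring.factorial_nsmul_multichoose_eq_ascPochhammer s j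
  rw [nsmul_eq_mul, Polynomial.ascPochhammer_smeval_eq_eval] at h
  rw [mul_comm, h]
  clear h
  induction j with
  | zero => simp
  | succ n ih => rw [ascPochhammer_succ_eval, ih, Finset.prod_range_succ]

lemma cc_norm_le {ρ : ℝ} {s : ℂ} (hs : ‖s‖ ≤ ρ) (j : ℕ) : ‖cc j s‖ ≤ ‖cc j (ρ : ℂ)‖ := by
  unfold cc
  rw [norm_div, norm_div, norm_prod, norm_prod]
  gcongr with i hi
  have h0 : 0 ≤ ρ := (norm_nonneg s).trans hs
  have : ‖(ρ : ℂ) + i‖ = ρ + i := by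
    have : (ρ : ℂ) + i = ((ρ + i : ℝ) : ℂ) := by push_cast; rfl
    rw [this, Complex.norm_real, Real.norm_eq_abs, abs_of_nonneg (by positivity)]
  rw [this]
  refine (norm_add_le _ _).trans ?_
  simp [hs]

lemma cc_hasSum (s p : ℂ) (hp : ‖p‖ < 1) : HasSum (fun j => cc j s * p ^ j) ((1 - p) ^ (-s)) := by
  have h := Complex.one_div_one_sub_cpow_hasFPowerSeriesOnBall_zero s
  have h1 := h.hasSum (y := p) (by
    simp only [Metric.eball, edist_eq_enorm_sub, enorm_eq_nnnorm, sub_zero, mem_setOf_eq]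
    exact_mod_cast hp)
  simp only [zero_add, FormalMultilinearSeries.ofScalars_apply_eq, smul_eq_mul] at h1
  rw [Complex.cpow_neg, inv_eq_one_div]
  simpa only [cc_eq] using h1

lemma cc_summable (s : ℂ) : Summable (fun j => ‖cc j s‖ * (1 / 4 : ℝ) ^ j) := by
  have h := (cc_hasSum s (1/2) (by norm_num)).summable
  have h2 := h.tendsto_atTop_zero
  obtain ⟨M, hM⟩ := (h2.norm.bddAbove_range)
  have hM' : ∀ j, ‖cc j s * (1/2) ^ j‖ ≤ M := fun j => hM ⟨j, rfl⟩
  refine Summable.of_nonneg_of_le (fun j => by positivity) (fun j => ?_)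
    ((summable_geometric_of_lt_one (r := (1/2 : ℝ)) (by norm_num) (by norm_num)).mul_left M)
  have := hM' j
  rw [norm_mul, norm_pow] at this
  have e : (1/4 : ℝ) ^ j = (1/2)^j * (1/2)^j := by rw [← mul_pow]; norm_num
  rw [e, ← mul_assoc]
  gcongr
  simpa using this

/-- Remainder of `(1-p)^{-s}`. -/
noncomputable def RR (J : ℕ) (s : ℂ) (p : ℝ) : ℂ :=
  (1 - (p : ℂ)) ^ (-s) - ∑ j ∈ Finset.range J, cc j s * (p : ℂ) ^ j

lemma RR_bound (ρ : ℝ) (J : ℕ) : ∃ C : ℝ, 0 ≤ C ∧ ∀ s : ℂ, ‖s‖ ≤ ρ → ∀ p : ℝ, 0 ≤ p → p ≤ 1 / 4 →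
    ‖RR J s p‖ ≤ C * p ^ J := by
  have hS := (cc_summable (ρ : ℂ))
  have hS' : Summable (fun i => ‖cc (i + J) (ρ : ℂ)‖ * (1 / 4 : ℝ) ^ i) := by
    have := ((summable_nat_add_iff J).2 hS).mul_right ((4:ℝ)^J)
    refine this.congr fun i => ?_
    rw [mul_assoc, pow_add, mul_assoc, ← mul_pow]; norm_num
  refine ⟨∑' i, ‖cc (i + J) (ρ : ℂ)‖ * (1 / 4 : ℝ) ^ i, tsum_nonneg fun i => by positivity, ?_⟩
  intro s hs p hp0 hp
  have h := cc_hasSum s p (by rw [Complex.norm_real, Real.norm_eq_abs, abs_of_nonneg hp0]; linarith)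
  have h1 := (hasSum_nat_add_iff' J).2 h
  rw [RR, ← h1.tsum_eq, ← tsum_mul_right]
  have hle : ∀ i, ‖cc (i + J) s * (p : ℂ) ^ (i + J)‖ ≤ ‖cc (i + J) (ρ : ℂ)‖ * (1 / 4 : ℝ) ^ i * p ^ J := by
    intro i
    rw [norm_mul, norm_pow, Complex.norm_real, Real.norm_eq_abs, abs_of_nonneg hp0, pow_add, ← mul_assoc]
    gcongr
    exact cc_norm_le hs _
  exact tsum_of_norm_bounded (hS'.mul_right _).hasSum hle

lemma RR_diff (J : ℕ) (p : ℝ) (hp : p < 1) : Differentiable ℂ (fun s => RR J s p) := by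
  unfold RR
  refine Differentiable.sub ?_ (Differentiable.fun_sum fun j _ => (cc_diff j).mul_const _)
  intro s
  refine DifferentiableAt.const_cpow (by fun_prop) (Or.inl ?_)
  have : (1 - (p:ℂ)) = ((1 - p : ℝ) : ℂ) := by push_cast; rfl
  rw [this]
  exact_mod_cast (by linarith : (1 - p) ≠ 0 )

lemma RR_one_zero (p : ℝ) : RR 1 0 p = 0 := by simp [RR, cc]

end ConeAux

namespace ConeAux
open Set Topology

lemma cpow_pos' {x : ℝ} (hx : 0 < x) (e : ℂ) : (x : ℂ) ^ e = Complex.exp ((Real.log x : ℂ) * e) := by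
  rw [Complex.cpow_def_of_ne_zero (by exact_mod_cast hx.ne'), Complex.ofReal_log hx.le]

lemma norm_cpow' {x : ℝ} (hx : 0 < x) (e : ℂ) : ‖(x : ℂ) ^ e‖ = x ^ e.re :=
  Complex.norm_cpow_eq_rpow_re_of_pos hx e

lemma contOn_cpow (e : ℂ) : ContinuousOn (fun u : ℝ => (u : ℂ) ^ e) (Ioi 0) := by
  intro u hu
  have h : ContinuousAt (fun x : ℂ => x ^ e) (u : ℂ) :=
    continuousAt_cpow_const (Complex.ofReal_mem_slitPlane.2 hu)
  exact (ContinuousAt.comp (f := fun u : ℝ => (u : ℂ)) h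
    Complex.continuous_ofReal.continuousAt).continuousWithinAt

lemma contOn_kernel {ρ : ℝ → ℝ} (hc : ContinuousOn ρ (Ioi 0)) (e : ℂ) :
    ContinuousOn (fun u : ℝ => (u : ℂ) ^ e * (ρ u : ℂ)) (Ioi 0) :=
  (contOn_cpow e).mul (Complex.continuous_ofReal.comp_continuousOn hc)

lemma meas_kernel {ρ : ℝ → ℝ} (hc : ContinuousOn ρ (Ioi 0)) (e : ℂ) {S : Set ℝ} (hS : MeasurableSet S)
    (h : S ⊆ Ioi 0) :
    AEStronglyMeasurable (fun u : ℝ => (u : ℂ) ^ e * (ρ u : ℂ)) (volume.restrict S) :=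
  ((contOn_kernel hc e).mono h).aestronglyMeasurable hS

lemma diff_cpow_neg2 {u : ℝ} (hu : 0 < u) : Differentiable ℂ (fun z : ℂ => (u : ℂ) ^ (-(2 * z))) := by
  intro z
  refine DifferentiableAt.const_cpow (by fun_prop) (Or.inl ?_)
  exact_mod_cast hu.ne'

lemma intOn_rpow_zero {c e : ℝ} (hc : 0 ≤ c) (he : -1 < e) : IntegrableOn (fun u : ℝ => u ^ e) (Ioc 0 c) :=
  (intervalIntegrable_iff_integrableOn_Ioc_of_le hc).1 (intervalIntegral.intervalIntegrable_rpow' he)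

lemma near0_bound {ρ : ℝ → ℝ} {C : ℝ} {P : ℕ}
    (hC : ∀ u : ℝ, 0 < u → u ≤ 1 → |ρ u| ≤ C * u ^ P) (z : ℂ) {u : ℝ} (h0 : 0 < u) (h1 : u ≤ 1) :
    ‖(u : ℂ) ^ (-(2 * z)) * (ρ u : ℂ)‖ ≤ C * u ^ ((P : ℝ) - 2 * z.re) := by
  rw [norm_mul, norm_cpow' h0, Complex.norm_real, Real.norm_eq_abs]
  have e : (-(2 * z)).re = - (2 * z.re) := by simp
  rw [e]
  calc u ^ (-(2 * z.re)) * |ρ u| ≤ u ^ (-(2 * z.re)) * (C * u ^ P) := by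
        gcongr; exact hC u h0 h1
    _ = C * u ^ ((P : ℝ) - 2 * z.re) := by
        rw [sub_eq_add_neg, Real.rpow_add h0, Real.rpow_natCast]; ring

lemma near0_int {ρ : ℝ → ℝ} (hc : ContinuousOn ρ (Ioi 0)) {C : ℝ} {P : ℕ}
    (hC : ∀ u : ℝ, 0 < u → u ≤ 1 → |ρ u| ≤ C * u ^ P) {c : ℝ} (hc0 : 0 < c) (hc1 : c ≤ 1)
    {z : ℂ} (hz : 2 * z.re < P + 1) :
    IntegrableOn (fun u : ℝ => (u : ℂ) ^ (-(2 * z)) * (ρ u : ℂ)) (Ioc 0 c) := by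
  refine Integrable.mono' ((intOn_rpow_zero hc0.le (e := P - 2 * z.re) (by linarith)).const_mul C)
    (meas_kernel hc _ measurableSet_Ioc Ioc_subset_Ioi_self) ?_
  filter_upwards [ae_restrict_mem measurableSet_Ioc] with u hu
  exact near0_bound hC z hu.1 (hu.2.trans hc1)

lemma near0_norm {ρ : ℝ → ℝ} {C : ℝ} {P : ℕ}
    (hC : ∀ u : ℝ, 0 < u → u ≤ 1 → |ρ u| ≤ C * u ^ P) {c : ℝ} (hc0 : 0 < c) (hc1 : c ≤ 1)
    {z : ℂ} (hz : 2 * z.re < P + 1) :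
    ‖∫ u in Ioc 0 c, (u : ℂ) ^ (-(2 * z)) * (ρ u : ℂ)‖ ≤
      C * (c ^ ((P : ℝ) + 1 - 2 * z.re) / ((P : ℝ) + 1 - 2 * z.re)) := by
  have h := norm_integral_le_of_norm_le
    (f := fun u : ℝ => (u : ℂ) ^ (-(2 * z)) * (ρ u : ℂ)) (μ := volume.restrict (Ioc 0 c))
    ((intOn_rpow_zero hc0.le (e := P - 2 * z.re) (by linarith)).const_mul C) (by
      filter_upwards [ae_restrict_mem measurableSet_Ioc] with u hu
      exact near0_bound hC z hu.1 (hu.2.trans hc1))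
  refine h.trans (le_of_eq ?_)
  rw [integral_const_mul, ← intervalIntegral.integral_of_le hc0.le, integral_rpow (Or.inl (by linarith)),
    Real.zero_rpow (by linarith), sub_zero]
  ring_nf

lemma near0_diff {ρ : ℝ → ℝ} (hc : ContinuousOn ρ (Ioi 0)) {C : ℝ} {P : ℕ}
    (hC : ∀ u : ℝ, 0 < u → u ≤ 1 → |ρ u| ≤ C * u ^ P) {c : ℝ} (hc0 : 0 < c) (hc1 : c ≤ 1)
    {z : ℂ} (hz : 2 * z.re < P + 1) :
    DifferentiableAt ℂ (fun z : ℂ => ∫ u in Ioc 0 c, (u : ℂ) ^ (-(2 * z)) * (ρ u : ℂ)) z := by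
  obtain ⟨σ, h1, h2⟩ := exists_between (show z.re < (P + 1) / 2 by linarith)
  have hU : IsOpen {z : ℂ | z.re < σ} := isOpen_lt Complex.continuous_re continuous_const
  have hC0 : 0 ≤ C := by
    have := hC 1 one_pos le_rfl
    simp at this
    exact (abs_nonneg _).trans this
  refine (holo_integral (μ := volume.restrict (Ioc 0 c)) hU (bound := fun u => C * u ^ ((P : ℝ) - 2 * σ))
    ((intOn_rpow_zero hc0.le (by linarith)).const_mul C)
    (fun s _ => meas_kernel hc _ measurableSet_Ioc Ioc_subset_Ioi_self) ?_ ?_).differentiableAt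
    (hU.mem_nhds h1)
  · filter_upwards [ae_restrict_mem measurableSet_Ioc] with u hu
    exact ((diff_cpow_neg2 hu.1).mul_const _).differentiableOn
  · filter_upwards [ae_restrict_mem measurableSet_Ioc] with u hu s hs
    refine (near0_bound hC s hu.1 (hu.2.trans hc1)).trans ?_
    refine mul_le_mul_of_nonneg_left ?_ hC0
    refine Real.rpow_le_rpow_of_exponent_ge hu.1 (hu.2.trans hc1) ?_
    have : s.re < σ := hs
    linarith

lemma inf_bound {ρ : ℝ → ℝ} {C : ℝ} {P : ℕ}
    (hC : ∀ u : ℝ, 1 ≤ u → |ρ u| ≤ C * u⁻¹ ^ P) (z : ℂ) {u : ℝ} (h1 : 1 ≤ u) :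
    ‖(u : ℂ) ^ (-(2 * z)) * (ρ u : ℂ)‖ ≤ C * u ^ (-(P : ℝ) - 2 * z.re) := by
  have h0 : 0 < u := by linarith
  rw [norm_mul, norm_cpow' h0, Complex.norm_real, Real.norm_eq_abs]
  have e : (-(2 * z)).re = - (2 * z.re) := by simp
  rw [e]
  calc u ^ (-(2 * z.re)) * |ρ u| ≤ u ^ (-(2 * z.re)) * (C * u⁻¹ ^ P) := by
        gcongr; exact hC u h1
    _ = C * u ^ (-(P : ℝ) - 2 * z.re) := by
        rw [sub_eq_add_neg, Real.rpow_add h0, Real.rpow_neg h0.le (P : ℝ), Real.rpow_natCast, inv_pow]; ring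

lemma intOn_rpow_inf {e : ℝ} (he : e < -1) : IntegrableOn (fun u : ℝ => u ^ e) (Ioi 1) :=
  integrableOn_Ioi_rpow_of_lt he one_pos

lemma Ioi_one_sub : Ioi (1 : ℝ) ⊆ Ioi 0 := Ioi_subset_Ioi zero_le_one

lemma inf_int {ρ : ℝ → ℝ} (hc : ContinuousOn ρ (Ioi 0)) {C : ℝ} {P : ℕ}
    (hC : ∀ u : ℝ, 1 ≤ u → |ρ u| ≤ C * u⁻¹ ^ P)
    {z : ℂ} (hz : 1 < 2 * z.re + P) :
    IntegrableOn (fun u : ℝ => (u : ℂ) ^ (-(2 * z)) * (ρ u : ℂ)) (Ioi 1) := by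
  refine Integrable.mono' ((intOn_rpow_inf (e := -P - 2 * z.re) (by linarith)).const_mul C)
    (meas_kernel hc _ measurableSet_Ioi Ioi_one_sub) ?_
  filter_upwards [ae_restrict_mem measurableSet_Ioi] with u hu
  exact inf_bound hC z (le_of_lt hu)

lemma inf_diff {ρ : ℝ → ℝ} (hc : ContinuousOn ρ (Ioi 0)) {C : ℝ} {P : ℕ}
    (hC : ∀ u : ℝ, 1 ≤ u → |ρ u| ≤ C * u⁻¹ ^ P)
    {z : ℂ} (hz : 1 < 2 * z.re + P) :
    DifferentiableAt ℂ (fun z : ℂ => ∫ u in Ioi (1:ℝ), (u : ℂ) ^ (-(2 * z)) * (ρ u : ℂ)) z := by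
  obtain ⟨σ, h1, h2⟩ := exists_between (show (1 - (P:ℝ)) / 2 < z.re by linarith)
  have hU : IsOpen {z : ℂ | σ < z.re} := isOpen_lt continuous_const Complex.continuous_re
  have hC0 : 0 ≤ C := by
    have := hC 1 le_rfl
    simp at this
    exact (abs_nonneg _).trans this
  refine (holo_integral (μ := volume.restrict (Ioi 1)) hU (bound := fun u => C * u ^ (-(P : ℝ) - 2 * σ))
    ((intOn_rpow_inf (by linarith)).const_mul C)
    (fun s _ => meas_kernel hc _ measurableSet_Ioi Ioi_one_sub) ?_ ?_).differentiableAt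
    (hU.mem_nhds h2)
  · filter_upwards [ae_restrict_mem measurableSet_Ioi] with u hu
    exact ((diff_cpow_neg2 (Ioi_one_sub hu)).mul_const _).differentiableOn
  · filter_upwards [ae_restrict_mem measurableSet_Ioi] with u hu s hs
    refine (inf_bound hC s (le_of_lt hu)).trans ?_
    refine mul_le_mul_of_nonneg_left ?_ hC0
    refine Real.rpow_le_rpow_of_exponent_le (le_of_lt hu) ?_
    have : σ < s.re := hs
    linarith

/-- explicit power integrals -/
lemma pow_int_zero (m : ℕ) {c : ℝ} (hc0 : 0 < c) (hc1 : c ≤ 1) {z : ℂ} (hz : (2 * m + 2 - 2 * z : ℂ) ≠ 0) :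
    ∫ u in Ioc c 1, (u : ℂ) ^ (-(2 * z)) * ((u ^ (2 * m + 1) : ℝ) : ℂ) =
      (1 - (c : ℂ) ^ (2 * m + 2 - 2 * z : ℂ)) / (2 * m + 2 - 2 * z) := by
  have h1 : ∫ u in Ioc c 1, (u : ℂ) ^ (-(2 * z)) * ((u ^ (2 * m + 1) : ℝ) : ℂ) =
      ∫ u in Ioc c 1, (u : ℂ) ^ (2 * m + 1 - 2 * z : ℂ) := by
    refine setIntegral_congr_fun measurableSet_Ioc fun u hu => ?_
    have hu0 : (u : ℂ) ≠ 0 := by exact_mod_cast (hc0.trans hu.1).ne'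
    rw [sub_eq_add_neg, Complex.cpow_add _ _ hu0, mul_comm]
    congr 1
    have : (2 * m + 1 : ℂ) = ((2 * m + 1 : ℕ) : ℂ) := by push_cast; ring
    rw [this, Complex.cpow_natCast]
    push_cast; ring
  rw [h1, ← intervalIntegral.integral_of_le hc1, integral_cpow]
  · have e : (2 * m + 1 - 2 * z + 1 : ℂ) = 2 * m + 2 - 2 * z := by ring
    rw [e]
    simp
  · right
    constructor
    · intro h; apply hz; linear_combination h
    · rw [uIcc_of_le hc1]; intro h; exact absurd h.1 (by linarith)

lemma pow_int_inf (n : ℕ) {z : ℂ} (hz : -1 < 2 * z.re + n) :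
    ∫ u in Ioi (1:ℝ), (u : ℂ) ^ (-(2 * z)) * ((u⁻¹ ^ (n + 2) : ℝ) : ℂ) = 1 / (2 * z + 1 + n) := by
  have h1 : ∫ u in Ioi (1:ℝ), (u : ℂ) ^ (-(2 * z)) * ((u⁻¹ ^ (n + 2) : ℝ) : ℂ) =
      ∫ u in Ioi (1:ℝ), (u : ℂ) ^ (-(2 * z) - (n + 2) : ℂ) := by
    refine setIntegral_congr_fun measurableSet_Ioi fun u hu => ?_
    have hu0 : (u : ℂ) ≠ 0 := by exact_mod_cast (zero_lt_one.trans hu).ne'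
    rw [sub_eq_add_neg, Complex.cpow_add _ _ hu0]
    congr 1
    have : (n + 2 : ℂ) = ((n + 2 : ℕ) : ℂ) := by push_cast; ring
    rw [this, Complex.cpow_neg, Complex.cpow_natCast]
    push_cast; rw [inv_pow]
  rw [h1, integral_Ioi_cpow_of_lt _ one_pos]
  · simp only [Complex.ofReal_one, Complex.one_cpow]
    have : (2 * z + 1 + n : ℂ) ≠ 0 := by
      intro h
      have := congrArg Complex.re h
      simp at this; linarith
    rw [neg_div, ← div_neg]; congr 1; ring
  · simp; linarith

lemma zsum {a : ℂ} (ha : 1 < a.re) :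
    HasSum (fun k : ℕ => (((k : ℝ) + 1 : ℝ) : ℂ) ^ (-a)) (riemannZeta a) := by
  rw [zeta_eq_tsum_one_div_nat_add_one_cpow ha]
  have h := (Complex.summable_one_div_nat_cpow (p := a)).2 ha
  have h1 := ((summable_nat_add_iff 1).2 h).hasSum
  have e : (fun k : ℕ => (((k : ℝ) + 1 : ℝ) : ℂ) ^ (-a)) = fun n : ℕ => 1 / ((n : ℂ) + 1) ^ a := by
    funext k
    rw [Complex.cpow_neg, one_div]; push_cast; rfl
  rw [e]
  simpa using h1

noncomputable def KK (k : ℕ) : ℝ := (k : ℝ) + 1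
lemma KK_pos (k : ℕ) : 0 < KK k := by unfold KK; positivity
lemma KK_one (k : ℕ) : 1 ≤ KK k := by unfold KK; simp
noncomputable def uk (w δ : ℝ) (k : ℕ) : ℝ := KK k ^ (δ - 1) / w

lemma uk_pos {w : ℝ} (hw : 1 ≤ w) (δ : ℝ) (k : ℕ) : 0 < uk w δ k := by
  have := KK_pos k
  unfold uk; positivity

lemma uk_le {w δ : ℝ} (hw : 1 ≤ w) (hδ : δ < 1) (k : ℕ) : uk w δ k ≤ 1 := by
  unfold uk
  rw [div_le_one (by linarith)]
  exact (Real.rpow_le_one_of_one_le_of_nonpos (KK_one k) (by linarith)).trans hw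

lemma log_uk {w : ℝ} (hw : 1 ≤ w) (δ : ℝ) (k : ℕ) :
    Real.log (uk w δ k) = (δ - 1) * Real.log (KK k) - Real.log w := by
  have := KK_pos k
  unfold uk
  rw [Real.log_div (by positivity) (by linarith), Real.log_rpow this]

lemma log_kw {w : ℝ} (hw : 1 ≤ w) (k : ℕ) :
    Real.log (KK k * w) = Real.log (KK k) + Real.log w :=
  Real.log_mul (KK_pos k).ne' (by linarith)

lemma sum_sq : Summable (fun k : ℕ => 1 / KK k ^ 2) := by
  have := (summable_nat_add_iff 1).2 (Real.summable_one_div_nat_pow.2 (by norm_num : 1 < 2))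
  refine this.congr fun k => ?_
  unfold KK; push_cast; rfl

end ConeAux

namespace ConeAux
open Set Topology

/-- The properties of the amplitude needed for the continuation. -/
structure Good (A : ℝ → ℝ) : Prop where
  cont : ContinuousOn A (Ioi 0)
  zero : ∀ N : ℕ, ∃ b : ℕ → ℝ, ∃ C : ℝ, ∀ u : ℝ, 0 < u → u ≤ 1 →
    |A u - ∑ m ∈ Finset.range N, b m * u ^ (2 * m + 1)| ≤ C * u ^ (2 * N + 1)
  infty : ∀ N : ℕ, ∃ d : ℕ → ℝ, ∃ C : ℝ, ∀ u : ℝ, 1 ≤ u →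
    |A u - ∑ n ∈ Finset.range N, d n * u⁻¹ ^ (n + 2)| ≤ C * u⁻¹ ^ (N + 2)

noncomputable def WW (w δ : ℝ) (ρ : ℝ → ℝ) (k : ℕ) (z : ℂ) : ℂ :=
  ((KK k * w : ℝ) : ℂ) ^ (-(1 + 2 * z)) * ∫ u in Ioc 0 (uk w δ k), (u : ℂ) ^ (-(2 * z)) * (ρ u : ℂ)

lemma exp_est {w δ : ℝ} (hw : 1 ≤ w) (hδ0 : 0 < δ) (hδ1 : δ < 1 / 8) (N k : ℕ) {σ : ℝ}
    (h1 : -((N : ℝ) + 1) < σ) :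
    (KK k * w) ^ (-(1 + 2 * σ)) * (uk w δ k) ^ (2 * (N : ℝ) + 2 - 2 * σ) ≤ 1 / KK k ^ 2 := by
  have hK := KK_pos k
  have hlK : 0 ≤ Real.log (KK k) := Real.log_nonneg (KK_one k)
  have hlw : 0 ≤ Real.log w := Real.log_nonneg hw
  have hN : (0 : ℝ) ≤ N := Nat.cast_nonneg N
  rw [Real.rpow_def_of_pos (by positivity), Real.rpow_def_of_pos (uk_pos hw δ k), log_uk hw, log_kw hw,
    ← Real.exp_add]
  have e2 : 1 / KK k ^ 2 = Real.exp (-2 * Real.log (KK k)) := by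
    have : KK k ^ 2 = Real.exp (2 * Real.log (KK k)) := by
      rw [two_mul, Real.exp_add, Real.exp_log hK]; ring
    rw [this, one_div, ← Real.exp_neg]; ring_nf
  rw [e2]
  apply Real.exp_le_exp.2
  have h3 : -1 - 2 * δ * σ - (1 - δ) * (2 * N + 2) ≤ -2 := by nlinarith
  have h4 := mul_le_mul_of_nonneg_left h3 hlK
  have h5 := mul_nonneg hlw (by linarith : (0:ℝ) ≤ 3 + 2 * N)
  nlinarith

lemma W_bound {w δ : ℝ} (hw : 1 ≤ w) (hδ0 : 0 < δ) (hδ1 : δ < 1 / 8) {ρ : ℝ → ℝ} {C : ℝ} {N : ℕ}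
    (hC : ∀ u : ℝ, 0 < u → u ≤ 1 → |ρ u| ≤ C * u ^ (2 * N + 1)) (k : ℕ) {z : ℂ}
    (h1 : -((N : ℝ) + 1) < z.re) (h2 : z.re < N + 1) :
    ‖WW w δ ρ k z‖ ≤ C / (2 * N + 2 - 2 * z.re) * (1 / KK k ^ 2) := by
  have hC0 : 0 ≤ C := by
    have := hC 1 one_pos le_rfl
    simp at this
    exact (abs_nonneg _).trans this
  have hK := KK_pos k
  have hn := near0_norm hC (uk_pos hw δ k) (uk_le hw (by linarith) k) (z := z)
    (by push_cast; linarith)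
  rw [WW, norm_mul, norm_cpow' (by positivity)]
  have e : (-(1 + 2 * z)).re = -(1 + 2 * z.re) := by simp
  rw [e]
  have e3 : (((2 * N + 1 : ℕ) : ℝ) + 1 - 2 * z.re) = 2 * (N : ℝ) + 2 - 2 * z.re := by push_cast; ring
  rw [e3] at hn
  have hpos : 0 < 2 * (N : ℝ) + 2 - 2 * z.re := by linarith
  have he := exp_est hw hδ0 hδ1 N k h1
  calc _ ≤ (KK k * w) ^ (-(1 + 2 * z.re)) * (C * ((uk w δ k) ^ (2 * (N:ℝ) + 2 - 2 * z.re) / (2 * (N:ℝ) + 2 - 2 * z.re))) := by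
        gcongr
    _ = C / (2 * N + 2 - 2 * z.re) * ((KK k * w) ^ (-(1 + 2 * z.re)) * (uk w δ k) ^ (2 * (N : ℝ) + 2 - 2 * z.re)) := by
        ring
    _ ≤ _ := by gcongr

lemma diff_kw {w : ℝ} (hw : 1 ≤ w) (k : ℕ) : Differentiable ℂ (fun z : ℂ => ((KK k * w : ℝ) : ℂ) ^ (-(1 + 2 * z))) := by
  intro z
  refine DifferentiableAt.const_cpow (by fun_prop) (Or.inl ?_)
  have := KK_pos k
  exact_mod_cast (by positivity : KK k * w ≠ 0)

lemma W_summable {w δ : ℝ} (hw : 1 ≤ w) (hδ0 : 0 < δ) (hδ1 : δ < 1 / 8) {ρ : ℝ → ℝ} {C : ℝ} {N : ℕ}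
    (hC : ∀ u : ℝ, 0 < u → u ≤ 1 → |ρ u| ≤ C * u ^ (2 * N + 1)) {z : ℂ}
    (h1 : -((N : ℝ) + 1) < z.re) (h2 : z.re < N + 1) : Summable (fun k => WW w δ ρ k z) :=
  Summable.of_norm_bounded (sum_sq.mul_left _) fun k => W_bound hw hδ0 hδ1 hC k h1 h2

lemma W_diff {w δ : ℝ} (hw : 1 ≤ w) (hδ0 : 0 < δ) (hδ1 : δ < 1 / 8) {ρ : ℝ → ℝ}
    (hc : ContinuousOn ρ (Ioi 0)) {C : ℝ} {N : ℕ}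
    (hC : ∀ u : ℝ, 0 < u → u ≤ 1 → |ρ u| ≤ C * u ^ (2 * N + 1)) {z : ℂ}
    (h1 : -((N : ℝ) + 1) < z.re) (h2 : z.re < N + 1) :
    DifferentiableAt ℂ (fun z => ∑' k, WW w δ ρ k z) z := by
  obtain ⟨σ, h3, h4⟩ := exists_between h2
  have hC0 : 0 ≤ C := by
    have := hC 1 one_pos le_rfl
    simp at this
    exact (abs_nonneg _).trans this
  have hU : IsOpen ({z : ℂ | z.re < σ} ∩ {z : ℂ | -((N : ℝ) + 1) < z.re}) :=
    (isOpen_lt Complex.continuous_re continuous_const).inter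
      (isOpen_lt continuous_const Complex.continuous_re)
  refine (Complex.differentiableOn_tsum_of_summable_norm (u := fun k => C / (2 * N + 2 - 2 * σ) * (1 / KK k ^ 2))
    (sum_sq.mul_left _) ?_ hU ?_).differentiableAt (hU.mem_nhds ⟨h3, h1⟩)
  · rintro k s ⟨hs1, hs2⟩
    have hs1' : s.re < σ := hs1
    refine DifferentiableAt.differentiableWithinAt ?_
    refine (diff_kw hw k s).mul ?_
    exact near0_diff hc hC (uk_pos hw δ k) (uk_le hw (by linarith) k) (by push_cast; linarith)
  · rintro k s ⟨hs1, hs2⟩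
    have hs1' : s.re < σ := hs1
    have hK := KK_pos k
    refine (W_bound hw hδ0 hδ1 hC k hs2 (hs1'.trans h4)).trans ?_
    have : 0 < 2 * (N:ℝ) + 2 - 2 * σ := by linarith
    gcongr

lemma kw_split {w : ℝ} (hw : 1 ≤ w) (k : ℕ) (e : ℂ) :
    ((KK k * w : ℝ) : ℂ) ^ e = (((k : ℝ) + 1 : ℝ) : ℂ) ^ e * (w : ℂ) ^ e := by
  have := KK_pos k
  rw [cpow_pos' (by positivity), cpow_pos' (x := w) (by linarith), log_kw hw]
  have h2 : (((k : ℝ) + 1 : ℝ) : ℂ) = ((KK k : ℝ) : ℂ) := rfl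
  rw [h2, cpow_pos' this, ← Complex.exp_add]
  push_cast; ring_nf

lemma kw_hasSum {w : ℝ} (hw : 1 ≤ w) {z : ℂ} (hz : 0 < z.re) :
    HasSum (fun k => ((KK k * w : ℝ) : ℂ) ^ (-(1 + 2 * z)))
      ((w : ℂ) ^ (-(1 + 2 * z)) * riemannZeta (1 + 2 * z)) := by
  have h := (zsum (a := 1 + 2 * z) (by simp; linarith)).mul_left ((w : ℂ) ^ (-(1 + 2 * z)))
  refine h.congr_fun fun k => ?_
  rw [kw_split hw, mul_comm]

lemma kwuk_hasSum {w δ : ℝ} (hw : 1 ≤ w) (hδ0 : 0 < δ) (hδ1 : δ < 1 / 8) (m : ℕ) {z : ℂ} (hz : 0 < z.re) :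
    HasSum (fun k => ((KK k * w : ℝ) : ℂ) ^ (-(1 + 2 * z)) * ((uk w δ k : ℝ) : ℂ) ^ (2 * m + 2 - 2 * z))
      ((w : ℂ) ^ (-(2 * m + 3 : ℂ)) * riemannZeta (1 + 2 * z + (1 - δ) * (2 * m + 2 - 2 * z))) := by
  have h := (zsum (a := 1 + 2 * z + (1 - δ) * (2 * m + 2 - 2 * z)) (by
    simp
    have : (0:ℝ) ≤ m := Nat.cast_nonneg m
    nlinarith [mul_pos hδ0 hz])).mul_left ((w : ℂ) ^ (-(2 * m + 3 : ℂ)))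
  refine h.congr_fun fun k => ?_
  have hK := KK_pos k
  have h2 : (((k : ℝ) + 1 : ℝ) : ℂ) = ((KK k : ℝ) : ℂ) := rfl
  rw [kw_split hw, h2, cpow_pos' hK, cpow_pos' hK, cpow_pos' (x := w) (by linarith), cpow_pos' (x := w) (by linarith),
    cpow_pos' (uk_pos hw δ k), log_uk hw, ← Complex.exp_add, ← Complex.exp_add, ← Complex.exp_add]
  push_cast; ring_nf

noncomputable def qq (w δ : ℝ) (A : ℝ → ℝ) (k : ℕ) (z : ℂ) : ℂ :=
  ∫ u in Ioi (uk w δ k), (u : ℂ) ^ (-(2 * z)) * (A u : ℂ)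

lemma int_Ioc {A : ℝ → ℝ} (hc : ContinuousOn A (Ioi 0)) {c : ℝ} (hc0 : 0 < c) (z : ℂ) :
    IntegrableOn (fun u : ℝ => (u : ℂ) ^ (-(2 * z)) * (A u : ℂ)) (Ioc c 1) :=
  (((contOn_kernel hc _).mono (fun u hu => lt_of_lt_of_le hc0 hu.1)).integrableOn_compact
    isCompact_Icc).mono_set Ioc_subset_Icc_self

lemma qq_int {A : ℝ → ℝ} (hA : Good A) {c : ℝ} (hc0 : 0 < c) (hc1 : c ≤ 1) {z : ℂ} (hz : -1 / 2 < z.re) :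
    IntegrableOn (fun u : ℝ => (u : ℂ) ^ (-(2 * z)) * (A u : ℂ)) (Ioi c) := by
  obtain ⟨d, C, hC⟩ := hA.infty 0
  rw [← Ioc_union_Ioi_eq_Ioi hc1]
  refine (int_Ioc hA.cont hc0 z).union (inf_int hA.cont (C := C) (P := 2) ?_ (by push_cast; linarith))
  simpa using hC

lemma qq_split {A : ℝ → ℝ} (hA : Good A) {c : ℝ} (hc0 : 0 < c) (hc1 : c ≤ 1) {z : ℂ} (hz : -1 / 2 < z.re) :
    ∫ u in Ioi c, (u : ℂ) ^ (-(2 * z)) * (A u : ℂ) =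
      (∫ u in Ioc c 1, (u : ℂ) ^ (-(2 * z)) * (A u : ℂ)) +
        ∫ u in Ioi (1 : ℝ), (u : ℂ) ^ (-(2 * z)) * (A u : ℂ) := by
  have h := qq_int hA hc0 hc1 hz
  rw [← Ioc_union_Ioi_eq_Ioi hc1] at h ⊢
  exact setIntegral_union (Ioc_disjoint_Ioi le_rfl) measurableSet_Ioi (h.mono_set subset_union_left)
    (h.mono_set subset_union_right)

lemma analytic_of_diff {f : ℂ → ℂ} {z : ℂ} {U : Set ℂ} (hU : IsOpen U) (hz : z ∈ U)
    (h : ∀ s ∈ U, DifferentiableAt ℂ f s) : AnalyticAt ℂ f z :=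
  Complex.analyticAt_iff_eventually_differentiableAt.2 (by
    filter_upwards [hU.mem_nhds hz] with s hs using h s hs)

lemma mero_zeta (s : ℂ) : MeromorphicAt riemannZeta s := by
  have h : MeromorphicAt (fun s => (s - 1)⁻¹ * riemannZeta₁ s) s := by
    have h1 : MeromorphicAt riemannZeta₁ s :=
      (Complex.analyticAt_iff_eventually_differentiableAt.2
        (Eventually.of_forall fun s => differentiable_riemannZeta₁ s)).meromorphicAt
    have h2 : MeromorphicAt (fun s : ℂ => (s - 1)) s := by
      have : AnalyticAt ℂ (fun s : ℂ => (s - 1)) s := by fun_prop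
      exact this.meromorphicAt
    exact h2.inv.mul h1
  refine h.congr ?_
  have : ∀ᶠ x in 𝓝[≠] s, x ≠ 1 := by
    rcases eq_or_ne s 1 with rfl | hs
    · exact self_mem_nhdsWithin
    · exact nhdsWithin_le_nhds (isOpen_ne.mem_nhds hs)
  filter_upwards [this] with x hx
  rw [riemannZeta_eq_inv_sub_mul hx]

lemma mero_of_entire {f : ℂ → ℂ} (h : Differentiable ℂ f) (s : ℂ) : MeromorphicAt f s :=
  (Complex.analyticAt_iff_eventually_differentiableAt.2 (Eventually.of_forall fun s => h s)).meromorphicAt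

end ConeAux

namespace ConeAux
open Set Topology

lemma kernel_expand {A : ℝ → ℝ} (z : ℂ) (N : ℕ) (b : ℕ → ℝ) (g : ℕ → ℝ → ℝ) (u : ℝ) :
    (u : ℂ) ^ (-(2 * z)) * (A u : ℂ) =
      (u : ℂ) ^ (-(2 * z)) * ((A u - ∑ m ∈ Finset.range N, b m * g m u : ℝ) : ℂ) +
      ∑ m ∈ Finset.range N, (b m : ℂ) * ((u : ℂ) ^ (-(2 * z)) * ((g m u : ℝ) : ℂ)) := by
  push_cast
  rw [mul_sub, Finset.mul_sum]
  rw [sub_add, sub_eq_self.2]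
  rw [sub_eq_zero]
  refine Finset.sum_congr rfl fun m _ => by ring

lemma int_expand {A : ℝ → ℝ} (z : ℂ) (N : ℕ) (b : ℕ → ℝ) (g : ℕ → ℝ → ℝ) (S : Set ℝ)
    (h1 : IntegrableOn (fun u : ℝ => (u : ℂ) ^ (-(2 * z)) *
      ((A u - ∑ m ∈ Finset.range N, b m * g m u : ℝ) : ℂ)) S)
    (h2 : ∀ m, IntegrableOn (fun u : ℝ => (u : ℂ) ^ (-(2 * z)) * ((g m u : ℝ) : ℂ)) S) :
    ∫ u in S, (u : ℂ) ^ (-(2 * z)) * (A u : ℂ) =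
      (∫ u in S, (u : ℂ) ^ (-(2 * z)) * ((A u - ∑ m ∈ Finset.range N, b m * g m u : ℝ) : ℂ)) +
      ∑ m ∈ Finset.range N, (b m : ℂ) * ∫ u in S, (u : ℂ) ^ (-(2 * z)) * ((g m u : ℝ) : ℂ) := by
  simp_rw [kernel_expand (A := A) z N b g]
  rw [integral_add h1 (integrable_finsetSum _ fun m _ => (h2 m).const_mul _),
    integral_finsetSum _ fun m _ => (h2 m).const_mul _]
  simp_rw [integral_const_mul]

lemma Q_exists {w δ : ℝ} (hw : 1 ≤ w) (hδ0 : 0 < δ) (hδ1 : δ < 1 / 8) {A : ℝ → ℝ} (hA : Good A) (N : ℕ) :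
    ∃ Qf : ℂ → ℂ,
      (∀ z : ℂ, -((N : ℝ) + 1) / 2 < z.re → z.re < N + 1 → MeromorphicAt Qf z) ∧
      (∀ z : ℂ, 0 < z.re → z.re < N + 1 → (∀ m : ℕ, z ≠ m + 1) →
        HasSum (fun k => ((KK k * w : ℝ) : ℂ) ^ (-(1 + 2 * z)) * qq w δ A k z) (Qf z)) := by
  obtain ⟨b, C, hC⟩ := hA.zero N
  obtain ⟨d, D, hD⟩ := hA.infty N
  set ρ0 : ℝ → ℝ := fun u => A u - ∑ m ∈ Finset.range N, b m * u ^ (2 * m + 1) with hρ0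
  set ρI : ℝ → ℝ := fun u => A u - ∑ n ∈ Finset.range N, d n * u⁻¹ ^ (n + 2) with hρI
  have c0 : ContinuousOn ρ0 (Ioi 0) := hA.cont.sub (by fun_prop)
  have cI : ContinuousOn ρI (Ioi 0) := by
    refine hA.cont.sub (continuousOn_finsetSum _ fun n _ => continuousOn_const.mul ?_)
    exact (continuousOn_id.inv₀ fun x hx => (ne_of_gt hx)).pow _
  have hN0 : (0 : ℝ) ≤ N := Nat.cast_nonneg N
  set M : ℂ → ℂ := fun z => (∑ m ∈ Finset.range N, (b m : ℂ) * (2 * m + 2 - 2 * z)⁻¹) +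
    (∫ u in Ioc (0:ℝ) 1, (u : ℂ) ^ (-(2 * z)) * (ρ0 u : ℂ)) +
    (∑ n ∈ Finset.range N, (d n : ℂ) * (2 * z + 1 + n)⁻¹) +
    ∫ u in Ioi (1:ℝ), (u : ℂ) ^ (-(2 * z)) * (ρI u : ℂ) with hM
  set Q : ℂ → ℂ := fun z => ((w : ℂ) ^ (-(1 + 2 * z)) * riemannZeta (1 + 2 * z)) * M z -
    (∑ m ∈ Finset.range N, ((b m : ℂ) * (2 * m + 2 - 2 * z)⁻¹) * ((w : ℂ) ^ (-(2 * m + 3 : ℂ)) *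
      riemannZeta (1 + 2 * z + (1 - δ) * (2 * m + 2 - 2 * z)))) - ∑' k, WW w δ ρ0 k z with hQ
  refine ⟨Q, ?_, ?_⟩
  · intro z hz1 hz2
    have hU1 : IsOpen {z : ℂ | -((N : ℝ) + 1) / 2 < z.re} := isOpen_lt continuous_const Complex.continuous_re
    have hU2 : IsOpen {z : ℂ | z.re < N + 1} := isOpen_lt Complex.continuous_re continuous_const
    have hlin : ∀ f : ℂ → ℂ, Differentiable ℂ f → MeromorphicAt (fun z => (f z)⁻¹) z :=
      fun f hf => (mero_of_entire hf z).inv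
    have hzeta : ∀ f : ℂ → ℂ, Differentiable ℂ f → MeromorphicAt (fun z => riemannZeta (f z)) z := by
      intro f hf
      exact (mero_zeta (f z)).comp_analyticAt (Complex.analyticAt_iff_eventually_differentiableAt.2
        (Eventually.of_forall fun s => hf s))
    have hMm : MeromorphicAt M z := by
      refine ((MeromorphicAt.add ?_ ?_).add ?_).add ?_
      · exact MeromorphicAt.fun_sum fun m _ => (MeromorphicAt.const _ _).mul (hlin (fun z => 2 * m + 2 - 2 * z) (by fun_prop))
      · exact (analytic_of_diff hU2 hz2 fun s hs => near0_diff c0 hC one_pos le_rfl (by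
          have : s.re < N + 1 := hs
          push_cast; linarith)).meromorphicAt
      · exact MeromorphicAt.fun_sum fun m _ => (MeromorphicAt.const _ _).mul (hlin (fun z => 2 * z + 1 + m) (by fun_prop))
      · exact (analytic_of_diff hU1 hz1 fun s hs => inf_diff cI hD (by
          have : -((N : ℝ) + 1) / 2 < s.re := hs
          push_cast; linarith)).meromorphicAt
    have hw' : MeromorphicAt (fun z : ℂ => (w : ℂ) ^ (-(1 + 2 * z))) z := by
      refine mero_of_entire (fun s => DifferentiableAt.const_cpow (by fun_prop) (Or.inl ?_)) z
      exact_mod_cast (by linarith : w ≠ 0)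
    refine MeromorphicAt.sub (MeromorphicAt.sub ?_ ?_) ?_
    · exact (hw'.mul (hzeta _ (by fun_prop))).mul hMm
    · exact MeromorphicAt.fun_sum fun m _ =>
        ((MeromorphicAt.const _ _).mul (hlin (fun z => 2 * m + 2 - 2 * z) (by fun_prop))).mul
        ((MeromorphicAt.const _ _).mul (hzeta (fun z => 1 + 2 * z + (1 - δ) * (2 * m + 2 - 2 * z)) (by fun_prop)))
    · refine (analytic_of_diff (hU1.inter hU2) ⟨hz1, hz2⟩ fun s hs => W_diff hw hδ0 hδ1 c0 hC ?_ hs.2).meromorphicAt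
      have : -((N : ℝ) + 1) / 2 < s.re := hs.1
      linarith
  · intro z hz0 hz2 hzm
    have hne : ∀ m : ℕ, (2 * m + 2 - 2 * z : ℂ) ≠ 0 := by
      intro m h
      apply hzm m
      linear_combination (-1/2 : ℂ) * h
    have hq : ∀ k, qq w δ A k z = M z - (∑ m ∈ Finset.range N, ((b m : ℂ) * (2 * m + 2 - 2 * z)⁻¹) *
        ((uk w δ k : ℝ) : ℂ) ^ (2 * m + 2 - 2 * z)) -
        ∫ u in Ioc 0 (uk w δ k), (u : ℂ) ^ (-(2 * z)) * (ρ0 u : ℂ) := by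
      intro k
      have hu0 := uk_pos hw δ k
      have hu1 := uk_le hw (by linarith : δ < 1) k
      rw [qq, qq_split hA hu0 hu1 (by linarith)]
      rw [int_expand z N b (fun m u => u ^ (2 * m + 1)) (Ioc (uk w δ k) 1) (int_Ioc c0 hu0 z)
        (fun m => int_Ioc (A := fun u => u ^ (2 * m + 1)) (by fun_prop) hu0 z)]
      rw [int_expand z N d (fun n u => u⁻¹ ^ (n + 2)) (Ioi 1) (inf_int cI hD (by push_cast; linarith))
        (fun n => inf_int (ρ := fun u => u⁻¹ ^ (n + 2)) (C := 1) (P := n + 2)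
          ((continuousOn_id.inv₀ fun x hx => (ne_of_gt hx)).pow _) (fun u hu => by
            rw [one_mul, abs_of_nonneg (by positivity)]) (by
            have : (0:ℝ) ≤ n := Nat.cast_nonneg n
            push_cast; linarith))]
      simp only [pow_int_zero _ hu0 hu1 (hne _)]
      have e1 : ∀ n : ℕ, ∫ u in Ioi (1:ℝ), (u : ℂ) ^ (-(2 * z)) * ((u⁻¹ ^ (n + 2) : ℝ) : ℂ) =
          1 / (2 * z + 1 + n) := fun n => pow_int_inf n (by
            have : (0:ℝ) ≤ n := Nat.cast_nonneg n
            linarith)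
      simp only [e1]
      have e2 : ∫ u in Ioc (0:ℝ) 1, (u : ℂ) ^ (-(2 * z)) * (ρ0 u : ℂ) =
          (∫ u in Ioc 0 (uk w δ k), (u : ℂ) ^ (-(2 * z)) * (ρ0 u : ℂ)) +
          ∫ u in Ioc (uk w δ k) 1, (u : ℂ) ^ (-(2 * z)) * (ρ0 u : ℂ) := by
        have hi := near0_int c0 hC one_pos le_rfl (z := z) (by push_cast; linarith)
        rw [← Ioc_union_Ioc_eq_Ioc hu0.le hu1] at hi ⊢
        exact setIntegral_union (by
          rw [Set.disjoint_left]; intro x hx hx'; exact absurd hx.2 (not_le.2 hx'.1)) measurableSet_Ioc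
          (hi.mono_set subset_union_left) (hi.mono_set subset_union_right)
      rw [hM]
      simp only
      rw [e2]
      have e3 : ∑ m ∈ Finset.range N, (b m : ℂ) * ((1 - ((uk w δ k : ℝ) : ℂ) ^ (2 * m + 2 - 2 * z : ℂ)) / (2 * m + 2 - 2 * z)) =
        (∑ m ∈ Finset.range N, (b m : ℂ) * (2 * m + 2 - 2 * z)⁻¹) - ∑ m ∈ Finset.range N, ((b m : ℂ) * (2 * m + 2 - 2 * z)⁻¹) *
        ((uk w δ k : ℝ) : ℂ) ^ (2 * m + 2 - 2 * z) := by
        rw [← Finset.sum_sub_distrib]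
        refine Finset.sum_congr rfl fun m _ => by ring
      rw [e3]
      simp only [one_div]
      ring
    have s1 := (kw_hasSum hw hz0).mul_right (M z)
    have s2 : HasSum (fun k => ∑ m ∈ Finset.range N, ((b m : ℂ) * (2 * m + 2 - 2 * z)⁻¹) *
      (((KK k * w : ℝ) : ℂ) ^ (-(1 + 2 * z)) * ((uk w δ k : ℝ) : ℂ) ^ (2 * m + 2 - 2 * z)))
      (∑ m ∈ Finset.range N, ((b m : ℂ) * (2 * m + 2 - 2 * z)⁻¹) * ((w : ℂ) ^ (-(2 * m + 3 : ℂ)) *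
      riemannZeta (1 + 2 * z + (1 - δ) * (2 * m + 2 - 2 * z)))) :=
      hasSum_sum fun m _ => (kwuk_hasSum hw hδ0 hδ1 m hz0).mul_left _
    have s3 := (W_summable hw hδ0 hδ1 hC (z := z) (by linarith) hz2).hasSum
    refine ((s1.sub s2).sub s3).congr_fun fun k => ?_
    rw [hq, WW, mul_sub, mul_sub, Finset.mul_sum]
    congr 2
    refine Finset.sum_congr rfl fun m _ => by ring

/-- Full Mellin integral. -/
noncomputable def M0 (A : ℝ → ℝ) (z : ℂ) : ℂ := ∫ u in Ioi (0:ℝ), (u : ℂ) ^ (-(2 * z)) * (A u : ℂ)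

noncomputable def Q0 (w δ : ℝ) (A : ℝ → ℝ) (z : ℂ) : ℂ :=
  ((w : ℂ) ^ (-(1 + 2 * z)) * riemannZeta (1 + 2 * z)) * M0 A z - ∑' k, WW w δ A k z

lemma good_zero {A : ℝ → ℝ} (hA : Good A) : ∃ C : ℝ, ∀ u : ℝ, 0 < u → u ≤ 1 → |A u| ≤ C * u ^ (2 * 0 + 1) := by
  obtain ⟨b, C, hC⟩ := hA.zero 0
  exact ⟨C, by simpa using hC⟩

lemma good_infty {A : ℝ → ℝ} (hA : Good A) : ∃ C : ℝ, ∀ u : ℝ, 1 ≤ u → |A u| ≤ C * u⁻¹ ^ 2 := by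
  obtain ⟨b, C, hC⟩ := hA.infty 0
  exact ⟨C, by simpa using hC⟩

lemma M0_int {A : ℝ → ℝ} (hA : Good A) {z : ℂ} (h1 : -1 / 2 < z.re) (h2 : z.re < 1) :
    IntegrableOn (fun u : ℝ => (u : ℂ) ^ (-(2 * z)) * (A u : ℂ)) (Ioi 0) := by
  obtain ⟨C, hC⟩ := good_zero hA
  rw [← Ioc_union_Ioi_eq_Ioi zero_le_one]
  exact (near0_int hA.cont hC one_pos le_rfl (by push_cast; linarith)).union
    (qq_int hA one_pos le_rfl h1)

lemma qq_zero {w δ : ℝ} (hw : 1 ≤ w) {A : ℝ → ℝ} (hA : Good A) {z : ℂ} (h1 : -1 / 2 < z.re) (h2 : z.re < 1) (k : ℕ) :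
    qq w δ A k z = M0 A z - ∫ u in Ioc 0 (uk w δ k), (u : ℂ) ^ (-(2 * z)) * (A u : ℂ) := by
  have hi := M0_int hA h1 h2
  rw [M0, qq, eq_sub_iff_add_eq, add_comm]
  rw [← Ioc_union_Ioi_eq_Ioi (uk_pos hw δ k).le] at hi ⊢
  exact (setIntegral_union (Ioc_disjoint_Ioi le_rfl) measurableSet_Ioi (hi.mono_set subset_union_left)
    (hi.mono_set subset_union_right)).symm

lemma Q0_hasSum {w δ : ℝ} (hw : 1 ≤ w) (hδ0 : 0 < δ) (hδ1 : δ < 1 / 8) {A : ℝ → ℝ} (hA : Good A)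
    {z : ℂ} (h1 : 0 < z.re) (h2 : z.re < 1) :
    HasSum (fun k => ((KK k * w : ℝ) : ℂ) ^ (-(1 + 2 * z)) * qq w δ A k z) (Q0 w δ A z) := by
  obtain ⟨C, hC⟩ := good_zero hA
  have s1 := (kw_hasSum hw h1).mul_right (M0 A z)
  have s3 := (W_summable hw hδ0 hδ1 hC (z := z) (by push_cast; linarith) (by push_cast; linarith)).hasSum
  refine (s1.sub s3).congr_fun fun k => ?_
  rw [qq_zero hw hA (by linarith) h2, WW, mul_sub]

end ConeAux

namespace ConeAux
open Set Topology

lemma good_g {A : ℝ → ℝ} (hA : Good A) : ∃ C : ℝ, 0 ≤ C ∧ ∀ u : ℝ, 0 < u → |A u| ≤ C * (u * (1 + u ^ 2)⁻¹) := by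
  obtain ⟨C, hC⟩ := good_zero hA
  obtain ⟨D, hD⟩ := good_infty hA
  have hC0 : 0 ≤ C := by
    have := hC 1 one_pos le_rfl
    simp at this
    exact (abs_nonneg _).trans this
  have hD0 : 0 ≤ D := by
    have := hD 1 le_rfl
    simp at this
    exact (abs_nonneg _).trans this
  refine ⟨2 * (C + D), by positivity, fun u hu => ?_⟩
  rcases le_total u 1 with h | h
  · refine (hC u hu h).trans ?_
    simp only [mul_zero, zero_add, pow_one]
    have h1 : (1 : ℝ) / 2 ≤ (1 + u ^ 2)⁻¹ := by
      rw [one_div]; apply inv_anti₀ (by positivity); nlinarith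
    calc C * u ≤ (C + D) * u := by gcongr; linarith
      _ = 2 * (C + D) * (u * (1 / 2)) := by ring
      _ ≤ _ := by gcongr
  · refine (hD u h).trans ?_
    have h1 : u⁻¹ ^ 2 ≤ 2 * (u * (1 + u ^ 2)⁻¹) := by
      rw [inv_pow, ← mul_assoc, ← div_eq_mul_inv, inv_eq_one_div, div_le_div_iff₀ (by positivity) (by positivity)]
      nlinarith [mul_nonneg (sub_nonneg.2 h) (sq_nonneg u)]
    calc D * u⁻¹ ^ 2 ≤ (C + D) * (2 * (u * (1 + u ^ 2)⁻¹)) := by gcongr; linarith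
      _ = _ := by ring

noncomputable def pp (w : ℝ) (k : ℕ) (u : ℝ) : ℝ := 1 / (4 * (KK k * w * u) ^ 2)

noncomputable def HH (w : ℝ) (A : ℝ → ℝ) (J k : ℕ) (s : ℂ) (u : ℝ) : ℂ :=
  ((KK k * w : ℝ) : ℂ) ^ (-(1 + 2 * s)) * ((u : ℂ) ^ (-(2 * s)) * RR J s (pp w k u) * (A u : ℂ))

noncomputable def rr (w δ : ℝ) (A : ℝ → ℝ) (J k : ℕ) (s : ℂ) : ℂ :=
  ∫ u in Ioi (uk w δ k), HH w A J k s u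

lemma kwu_one {w δ : ℝ} (hw : 1 ≤ w) (hδ0 : 0 < δ) (k : ℕ) {u : ℝ} (hu : uk w δ k < u) : 1 ≤ KK k * w * u := by
  have hK := KK_pos k
  have h1 : KK k * w * uk w δ k = KK k ^ δ := by
    unfold uk
    rw [Real.rpow_sub_one hK.ne']
    field_simp
  have h2 : 1 ≤ KK k ^ δ := Real.one_le_rpow (KK_one k) hδ0.le
  calc 1 ≤ KK k * w * uk w δ k := by rw [h1]; exact h2
    _ ≤ _ := by gcongr

lemma pp_nonneg (w : ℝ) (k : ℕ) (u : ℝ) : 0 ≤ pp w k u := by unfold pp; positivity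

lemma pp_le {w : ℝ} {k : ℕ} {u : ℝ} (h : 1 ≤ KK k * w * u) : pp w k u ≤ 1 / 4 := by
  unfold pp
  apply one_div_le_one_div_of_le (by norm_num)
  nlinarith

lemma HH_bound {w δ : ℝ} (hw : 1 ≤ w) (hδ0 : 0 < δ) {A : ℝ → ℝ} (hA : Good A) (ρ : ℝ) (J : ℕ) :
    ∃ C : ℝ, 0 ≤ C ∧ ∀ s : ℂ, ‖s‖ ≤ ρ → 1 / 2 ≤ s.re + J → ∀ k, ∀ u, uk w δ k < u →
      ‖HH w A J k s u‖ ≤ C / KK k ^ 2 * (1 + u ^ 2)⁻¹ := by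
  obtain ⟨C1, hC1, h1⟩ := RR_bound ρ J
  obtain ⟨C2, hC2, h2⟩ := good_g hA
  refine ⟨C1 * C2, by positivity, fun s hs hsJ k u hu => ?_⟩
  have hK := KK_pos k
  have hu0 : 0 < u := (uk_pos hw δ k).trans hu
  have hx := kwu_one hw hδ0 k hu
  have hw0 : 0 < w := by linarith
  have b1 := h1 s hs _ (pp_nonneg w k u) (pp_le hx)
  have b2 := h2 u hu0
  set κ := KK k * w with hκ
  have hκ0 : 0 < κ := by positivity
  unfold HH
  rw [norm_mul, norm_mul, norm_mul, norm_cpow' hκ0, norm_cpow' hu0, Complex.norm_real, Real.norm_eq_abs]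
  have e1 : (-(1 + 2 * s)).re = -1 + -(2 * s.re) := by simp; ring
  have e2 : (-(2 * s)).re = -(2 * s.re) := by simp
  rw [e1, e2, Real.rpow_add hκ0, Real.rpow_neg_one]
  have e3 : pp w k u ^ J = (1 / 4) ^ J * (κ * u) ^ (-(2 * (J : ℝ))) := by
    unfold pp
    rw [Real.rpow_neg (by positivity), Real.rpow_mul (by positivity), Real.rpow_natCast, ← hκ]
    rw [show (κ * u) ^ (2 : ℝ) = (κ * u) ^ 2 by exact_mod_cast Real.rpow_natCast (κ * u) 2]
    rw [← inv_pow, ← mul_pow]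
    congr 1
    field_simp
  calc κ⁻¹ * κ ^ (-(2 * s.re)) * (u ^ (-(2 * s.re)) * ‖RR J s (pp w k u)‖ * |A u|)
      ≤ κ⁻¹ * κ ^ (-(2 * s.re)) * (u ^ (-(2 * s.re)) * (C1 * pp w k u ^ J) * (C2 * (u * (1 + u ^ 2)⁻¹))) := by
        have := pp_nonneg w k u
        gcongr
    _ = κ⁻¹ * ((κ * u) ^ (-(2 * s.re)) * (κ * u) ^ (-(2 * (J : ℝ)))) * (1 / 4) ^ J * (C1 * C2 * (u * (1 + u ^ 2)⁻¹)) := by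
        rw [e3, Real.mul_rpow hκ0.le hu0.le (z := -(2 * s.re))]
        ring
    _ ≤ κ⁻¹ * (κ * u)⁻¹ * 1 * (C1 * C2 * (u * (1 + u ^ 2)⁻¹)) := by
        gcongr
        · rw [← Real.rpow_add (by positivity), ← Real.rpow_neg_one]
          exact Real.rpow_le_rpow_of_exponent_le hx (by linarith)
        · exact pow_le_one₀ (by norm_num) (by norm_num)
    _ = C1 * C2 / κ ^ 2 * (1 + u ^ 2)⁻¹ := by
        field_simp
    _ ≤ _ := by
        gcongr
        nlinarith

lemma HH_cont {w δ : ℝ} (hw : 1 ≤ w) (hδ0 : 0 < δ) {A : ℝ → ℝ} (hA : Good A) (J k : ℕ) (s : ℂ) :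
    ContinuousOn (HH w A J k s) (Ioi (uk w δ k)) := by
  have hK := KK_pos k
  have hw0 : 0 < w := by linarith
  have hsub : Ioi (uk w δ k) ⊆ Ioi 0 := Ioi_subset_Ioi (uk_pos hw δ k).le
  have hp : ContinuousOn (fun u => pp w k u) (Ioi (uk w δ k)) := by
    unfold pp
    refine continuousOn_const.div (by fun_prop) fun u hu => ?_
    have : 0 < u := hsub hu
    positivity
  have hpC : ContinuousOn (fun u => (pp w k u : ℂ)) (Ioi (uk w δ k)) :=
    Complex.continuous_ofReal.comp_continuousOn hp
  unfold HH
  refine continuousOn_const.mul ((((contOn_cpow _).mono hsub).mul ?_).mul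
    (Complex.continuous_ofReal.comp_continuousOn (hA.cont.mono hsub)))
  unfold RR
  refine ContinuousOn.sub ?_ (continuousOn_finsetSum _ fun j _ => continuousOn_const.mul (hpC.pow j))
  refine (continuousOn_const.sub hpC).cpow_const fun u hu => ?_
  have h := pp_le (kwu_one hw hδ0 k hu)
  have : (1 - (pp w k u : ℂ)) = ((1 - pp w k u : ℝ) : ℂ) := by push_cast; rfl
  show (1 - (pp w k u : ℂ)) ∈ Complex.slitPlane
  rw [this]
  exact Complex.ofReal_mem_slitPlane.2 (by linarith)

lemma HH_meas {w δ : ℝ} (hw : 1 ≤ w) (hδ0 : 0 < δ) {A : ℝ → ℝ} (hA : Good A) (J k : ℕ) (s : ℂ) :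
    AEStronglyMeasurable (HH w A J k s) (volume.restrict (Ioi (uk w δ k))) :=
  (HH_cont hw hδ0 hA J k s).aestronglyMeasurable measurableSet_Ioi

lemma HH_int {w δ : ℝ} (hw : 1 ≤ w) (hδ0 : 0 < δ) {A : ℝ → ℝ} (hA : Good A) (J k : ℕ) {s : ℂ}
    (hs : 1 / 2 ≤ s.re + J) : IntegrableOn (HH w A J k s) (Ioi (uk w δ k)) := by
  obtain ⟨C, hC, h⟩ := HH_bound hw hδ0 hA ‖s‖ J
  refine Integrable.mono' ((integrable_inv_one_add_sq.const_mul (C / KK k ^ 2)).integrableOn) (HH_meas hw hδ0 hA J k s) ?_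
  filter_upwards [ae_restrict_mem measurableSet_Ioi] with u hu
  exact h s le_rfl hs k u hu

lemma rr_bound {w δ : ℝ} (hw : 1 ≤ w) (hδ0 : 0 < δ) {A : ℝ → ℝ} (hA : Good A) (ρ : ℝ) (J : ℕ) :
    ∃ C : ℝ, 0 ≤ C ∧ ∀ s : ℂ, ‖s‖ ≤ ρ → 1 / 2 ≤ s.re + J → ∀ k,
      ‖rr w δ A J k s‖ ≤ C * (1 / KK k ^ 2) := by
  obtain ⟨C, hC, h⟩ := HH_bound hw hδ0 hA ρ J
  refine ⟨C * Real.pi, by positivity, fun s hs hsJ k => ?_⟩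
  have hK := KK_pos k
  have h1 := norm_integral_le_of_norm_le (f := HH w A J k s) (μ := volume.restrict (Ioi (uk w δ k)))
    ((integrable_inv_one_add_sq.const_mul (C / KK k ^ 2)).integrableOn) (by
      filter_upwards [ae_restrict_mem measurableSet_Ioi] with u hu
      exact h s hs hsJ k u hu)
  refine h1.trans ?_
  refine (setIntegral_le_integral (integrable_inv_one_add_sq.const_mul (C / KK k ^ 2)) (Eventually.of_forall fun u => by
    show (0:ℝ) ≤ _
    positivity)).trans ?_
  rw [integral_const_mul, integral_univ_inv_one_add_sq]
  apply le_of_eq; ring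

lemma rr_summable {w δ : ℝ} (hw : 1 ≤ w) (hδ0 : 0 < δ) {A : ℝ → ℝ} (hA : Good A) (J : ℕ) {s : ℂ}
    (hs : 1 / 2 ≤ s.re + J) : Summable (fun k => ‖rr w δ A J k s‖) := by
  obtain ⟨C, hC, h⟩ := rr_bound hw hδ0 hA ‖s‖ J
  exact Summable.of_nonneg_of_le (fun k => norm_nonneg _) (fun k => h s le_rfl hs k) (sum_sq.mul_left C)

lemma isOpen_UU (ρ c : ℝ) : IsOpen {s : ℂ | ‖s‖ < ρ ∧ c < s.re} :=
  (isOpen_lt continuous_norm continuous_const).inter (isOpen_lt continuous_const Complex.continuous_re)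

lemma rr_diff {w δ : ℝ} (hw : 1 ≤ w) (hδ0 : 0 < δ) {A : ℝ → ℝ} (hA : Good A) (J k : ℕ) (ρ : ℝ) :
    DifferentiableOn ℂ (rr w δ A J k) {s : ℂ | ‖s‖ < ρ ∧ 1 / 2 - (J : ℝ) < s.re} := by
  obtain ⟨C, hC, h⟩ := HH_bound hw hδ0 hA ρ J
  unfold rr
  refine holo_integral (isOpen_UU _ _) (bound := fun u => C / KK k ^ 2 * (1 + u ^ 2)⁻¹)
    ((integrable_inv_one_add_sq.const_mul (C / KK k ^ 2)).integrableOn) (fun s _ => HH_meas hw hδ0 hA J k s) ?_ ?_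
  · filter_upwards [ae_restrict_mem measurableSet_Ioi] with u hu
    refine Differentiable.differentiableOn ?_
    unfold HH
    have hp := pp_le (kwu_one hw hδ0 k hu)
    have hu0 : 0 < u := (uk_pos hw δ k).trans hu
    exact (diff_kw hw k).mul (((diff_cpow_neg2 hu0).mul (RR_diff J _ (by linarith))).mul_const _)
  · filter_upwards [ae_restrict_mem measurableSet_Ioi] with u hu s hs
    exact h s hs.1.le (by linarith [hs.2]) k u hu

lemma rrsum_diff {w δ : ℝ} (hw : 1 ≤ w) (hδ0 : 0 < δ) {A : ℝ → ℝ} (hA : Good A) (J : ℕ) {s : ℂ}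
    (hs : 1 / 2 - (J : ℝ) < s.re) : DifferentiableAt ℂ (fun s => ∑' k, rr w δ A J k s) s := by
  obtain ⟨C, hC, h⟩ := rr_bound hw hδ0 hA (‖s‖ + 1) J
  have hU := isOpen_UU (‖s‖ + 1) (1 / 2 - (J : ℝ))
  have := Complex.differentiableOn_tsum_of_summable_norm (sum_sq.mul_left C)
    (fun k => rr_diff hw hδ0 hA J k (‖s‖ + 1)) hU (fun k s hs => h s hs.1.le (by linarith [hs.2]) k)
  exact this.differentiableAt (hU.mem_nhds ⟨by linarith, hs⟩)

lemma HH_split {w δ : ℝ} (hw : 1 ≤ w) {A : ℝ → ℝ} (J k : ℕ) (s : ℂ) {u : ℝ} (hu : uk w δ k < u) :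
    HH w A 0 k s u = (∑ j ∈ Finset.range J, cc j s * (1 / 4) ^ j *
      (((KK k * w : ℝ) : ℂ) ^ (-(1 + 2 * (s + j))) * ((u : ℂ) ^ (-(2 * (s + j))) * (A u : ℂ)))) + HH w A J k s u := by
  have hK := KK_pos k
  have hu0 : 0 < u := (uk_pos hw δ k).trans hu
  have hw0 : 0 < w := by linarith
  have hκ0 : 0 < KK k * w := by positivity
  unfold HH RR
  set κ := KK k * w with hκ
  have hκC : (κ : ℂ) ≠ 0 := by exact_mod_cast hκ0.ne'
  have huC : (u : ℂ) ≠ 0 := by exact_mod_cast hu0.ne'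
  have e : ∀ j : ℕ, cc j s * (1 / 4) ^ j * ((κ : ℂ) ^ (-(1 + 2 * (s + j))) * ((u : ℂ) ^ (-(2 * (s + j))) * (A u : ℂ)))
      = (κ : ℂ) ^ (-(1 + 2 * s)) * ((u : ℂ) ^ (-(2 * s)) * (cc j s * (pp w k u : ℂ) ^ j) * (A u : ℂ)) := by
    intro j
    have e1 : (κ : ℂ) ^ (-(1 + 2 * (s + j))) = (κ : ℂ) ^ (-(1 + 2 * s)) * ((κ : ℂ) ^ 2)⁻¹ ^ j := by
      rw [show (-(1 + 2 * (s + j)) : ℂ) = -(1 + 2 * s) + -((2 * j : ℕ) : ℂ) by push_cast; ring,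
        Complex.cpow_add _ _ hκC, Complex.cpow_neg _ ((2 * j : ℕ) : ℂ), Complex.cpow_natCast, pow_mul, inv_pow]
    have e2 : (u : ℂ) ^ (-(2 * (s + j))) = (u : ℂ) ^ (-(2 * s)) * ((u : ℂ) ^ 2)⁻¹ ^ j := by
      rw [show (-(2 * (s + j)) : ℂ) = -(2 * s) + -((2 * j : ℕ) : ℂ) by push_cast; ring,
        Complex.cpow_add _ _ huC, Complex.cpow_neg _ ((2 * j : ℕ) : ℂ), Complex.cpow_natCast, pow_mul, inv_pow]
    have e3 : (pp w k u : ℂ) ^ j = (1 / 4) ^ j * ((κ : ℂ) ^ 2)⁻¹ ^ j * ((u : ℂ) ^ 2)⁻¹ ^ j := by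
      rw [← mul_pow, ← mul_pow]
      congr 1
      unfold pp
      rw [← hκ]
      push_cast
      field_simp
    rw [e1, e2, e3]; ring
  rw [Finset.sum_congr rfl fun j _ => e j]
  rw [← Finset.mul_sum, ← Finset.sum_mul, ← Finset.mul_sum]
  simp only [Finset.range_zero, Finset.sum_empty]
  ring

lemma rr_split {w δ : ℝ} (hw : 1 ≤ w) (hδ0 : 0 < δ) (hδ1 : δ < 1) {A : ℝ → ℝ} (hA : Good A) (J k : ℕ) {s : ℂ}
    (hs : -1 / 2 < s.re) (hs' : 1 / 2 ≤ s.re + J) :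
    rr w δ A 0 k s = (∑ j ∈ Finset.range J, cc j s * (1 / 4) ^ j *
      (((KK k * w : ℝ) : ℂ) ^ (-(1 + 2 * (s + j))) * qq w δ A k (s + j))) + rr w δ A J k s := by
  have hi : ∀ j : ℕ, IntegrableOn (fun u : ℝ => (u : ℂ) ^ (-(2 * (s + j))) * (A u : ℂ)) (Ioi (uk w δ k)) := fun j =>
    qq_int hA (uk_pos hw δ k) (uk_le hw hδ1 k) (by
      have : (0:ℝ) ≤ j := Nat.cast_nonneg j
      simp; linarith)
  unfold rr qq
  rw [setIntegral_congr_fun measurableSet_Ioi (fun u hu => HH_split hw J k s hu)]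
  rw [integral_add (integrable_finsetSum _ fun j _ => ((hi j).const_mul _).const_mul _) (HH_int hw hδ0 hA J k hs'),
    integral_finsetSum _ fun j _ => ((hi j).const_mul _).const_mul _]
  simp_rw [integral_const_mul]

lemma E_rr {w δ : ℝ} (hw : 1 ≤ w) (hδ0 : 0 < δ) {A : ℝ → ℝ} (k : ℕ) (s : ℂ) :
    (1 / ((KK k * w : ℝ) : ℂ)) * ∫ u in Ioi (uk w δ k), ((KK k ^ 2 * w ^ 2 * u ^ 2 - 1 / 4 : ℝ) : ℂ) ^ (-s) * (A u : ℂ)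
      = rr w δ A 0 k s := by
  rw [← integral_const_mul, rr]
  refine setIntegral_congr_fun measurableSet_Ioi fun u hu => ?_
  have hK := KK_pos k
  have hu0 : 0 < u := (uk_pos hw δ k).trans hu
  have hw0 : 0 < w := by linarith
  have hκ0 : 0 < KK k * w := by positivity
  have hx := kwu_one hw hδ0 k hu
  have hp := pp_le hx
  unfold HH RR
  simp only [Finset.range_zero, Finset.sum_empty, sub_zero]
  have e1 : KK k ^ 2 * w ^ 2 * u ^ 2 - 1 / 4 = (KK k * w * u) ^ 2 * (1 - pp w k u) := by
    unfold pp; field_simp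
  have e2 : (1 - (pp w k u : ℂ)) = ((1 - pp w k u : ℝ) : ℂ) := by push_cast; rfl
  have e3 : (1 / ((KK k * w : ℝ) : ℂ)) = Complex.exp (-(Real.log (KK k * w) : ℂ)) := by
    rw [Complex.exp_neg, ← Complex.ofReal_exp, Real.exp_log hκ0, one_div]
  rw [e1, e2, e3, cpow_pos' (mul_pos (by positivity) (by linarith)), cpow_pos' hκ0, cpow_pos' hu0, cpow_pos' (x := 1 - pp w k u) (by linarith),
    Real.log_mul (x := (KK k * w * u) ^ 2) (by positivity) (by linarith), Real.log_pow, Real.log_mul hκ0.ne' hu0.ne']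
  simp only [← mul_assoc, ← Complex.exp_add]
  congr 2
  push_cast; ring

end ConeAux

namespace ConeAux
open Set Topology

noncomputable def sp (s : ℂ) : ℂ := 2 * Complex.sin ((Real.pi : ℂ) * s) / (Real.pi : ℂ)

lemma sp_diff : Differentiable ℂ sp := by unfold sp; fun_prop

noncomputable def SS (w δ : ℝ) (A : ℝ → ℝ) (s : ℂ) : ℂ := ∑' k, sp s * rr w δ A 0 k s

noncomputable def FF (w δ : ℝ) (A : ℝ → ℝ) (Q : ℂ → ℂ) (J : ℕ) (s : ℂ) : ℂ :=
  sp s * ((∑ j ∈ Finset.range J, cc j s * (1 / 4) ^ j * Q (s + j)) + ∑' k, rr w δ A J k s)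

lemma FF_eq {w δ : ℝ} (hw : 1 ≤ w) (hδ0 : 0 < δ) (hδ1 : δ < 1) {A : ℝ → ℝ} (hA : Good A) {Q : ℂ → ℂ} {J : ℕ}
    {s : ℂ} (hs : 1 / 2 ≤ s.re)
    (hQ : ∀ j < J, HasSum (fun k => ((KK k * w : ℝ) : ℂ) ^ (-(1 + 2 * (s + j))) * qq w δ A k (s + j)) (Q (s + j))) :
    FF w δ A Q J s = SS w δ A s := by
  have hJ : (0:ℝ) ≤ J := Nat.cast_nonneg J
  unfold FF SS
  rw [tsum_mul_left]
  congr 1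
  have h1 : HasSum (fun k => ∑ j ∈ Finset.range J, cc j s * (1 / 4) ^ j *
      (((KK k * w : ℝ) : ℂ) ^ (-(1 + 2 * (s + j))) * qq w δ A k (s + j)))
      (∑ j ∈ Finset.range J, cc j s * (1 / 4) ^ j * Q (s + j)) :=
    hasSum_sum fun j hj => (hQ j (Finset.mem_range.1 hj)).mul_left _
  have h2 := (rr_summable hw hδ0 hA J (s := s) (by linarith)).of_norm.hasSum
  rw [← (h1.add h2).tsum_eq]
  refine tsum_congr fun k => ?_
  rw [rr_split hw hδ0 hδ1 hA J k (by linarith) (by linarith)]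

lemma FF_mero {w δ : ℝ} (hw : 1 ≤ w) (hδ0 : 0 < δ) {A : ℝ → ℝ} (hA : Good A) {Q : ℂ → ℂ} {J : ℕ}
    {s : ℂ} (hs : 1 / 2 - (J : ℝ) < s.re) (hQ : ∀ j < J, MeromorphicAt Q (s + j)) :
    MeromorphicAt (FF w δ A Q J) s := by
  refine (mero_of_entire sp_diff s).mul (MeromorphicAt.add ?_ ?_)
  · refine MeromorphicAt.fun_sum fun j hj => (((mero_of_entire (cc_diff j) s).mul (MeromorphicAt.const _ _))).mul ?_
    exact (hQ j (Finset.mem_range.1 hj)).comp_analyticAt (f := Q) (g := fun s => s + j) (by fun_prop)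
  · have hU : IsOpen {s : ℂ | 1 / 2 - (J : ℝ) < s.re} := isOpen_lt continuous_const Complex.continuous_re
    exact (analytic_of_diff hU hs fun s hs => rrsum_diff hw hδ0 hA J hs).meromorphicAt

def Strip (a b : ℝ) : Set ℂ := {s : ℂ | a < s.re ∧ s.re < b}

lemma strip_open (a b : ℝ) : IsOpen (Strip a b) :=
  (isOpen_lt continuous_const Complex.continuous_re).inter (isOpen_lt Complex.continuous_re continuous_const)

lemma strip_conn (a b : ℝ) : IsPreconnected (Strip a b) :=
  ((convex_halfSpace_re_gt a).inter (convex_halfSpace_re_lt b)).isPreconnected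

lemma ident {f g : ℂ → ℂ} {a b : ℝ} (ha : a < 3 / 4) (hb : 3 / 4 < b) (hf : MeromorphicOn f (Strip a b))
    (hg : MeromorphicOn g (Strip a b)) (h : EqOn f g (Strip (1 / 2) 1)) {z : ℂ} (hz : z ∈ Strip a b) :
    f =ᶠ[𝓝[≠] z] g := by
  have hd : MeromorphicOn (f - g) (Strip a b) := hf.sub hg
  have h0 : ((3 / 4 : ℝ) : ℂ) ∈ Strip a b := by
    simp only [Strip, mem_setOf_eq, Complex.ofReal_re]; exact ⟨ha, hb⟩
  have h1 : meromorphicOrderAt (f - g) ((3 / 4 : ℝ) : ℂ) = ⊤ := by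
    rw [meromorphicOrderAt_eq_top_iff]
    apply Filter.Eventually.filter_mono nhdsWithin_le_nhds
    filter_upwards [(strip_open (1 / 2) 1).mem_nhds (x := ((3 / 4 : ℝ) : ℂ)) (by
      simp only [Strip, mem_setOf_eq, Complex.ofReal_re]; norm_num)] with s hs
    simp [h hs]
  have h2 : meromorphicOrderAt (f - g) z = ⊤ := by
    by_contra hne
    exact MeromorphicOn.meromorphicOrderAt_ne_top_of_isPreconnected hd (strip_conn a b) hz h0 hne h1
  rw [meromorphicOrderAt_eq_top_iff] at h2
  filter_upwards [h2] with s hs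
  exact sub_eq_zero.1 hs

/-- The strip continuations. -/
lemma FN_exists {w δ : ℝ} (hw : 1 ≤ w) (hδ0 : 0 < δ) (hδ1 : δ < 1 / 8) {A : ℝ → ℝ} (hA : Good A) (N : ℕ) :
    ∃ F : ℂ → ℂ, MeromorphicOn F (Strip (1 / 2 - N) (N + 2)) ∧
      ∀ s : ℂ, 1 / 2 < s.re → s.re < N + 2 → (∀ m : ℤ, s.re ≠ m) → F s = SS w δ A s := by
  obtain ⟨Q, hQ1, hQ2⟩ := Q_exists hw hδ0 hδ1 hA (2 * N)
  refine ⟨FF w δ A Q N, ?_, ?_⟩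
  · intro s hs
    refine FF_mero hw hδ0 hA hs.1 fun j hj => hQ1 _ ?_ ?_
    · have : (0:ℝ) ≤ j := Nat.cast_nonneg j
      have := hs.1
      push_cast
      simp only [Complex.add_re, Complex.natCast_re]
      linarith
    · have h1 : (j:ℝ) + 1 ≤ N := by exact_mod_cast hj
      have := hs.2
      push_cast
      simp only [Complex.add_re, Complex.natCast_re]
      linarith
  · intro s h1 h2 h3
    refine FF_eq hw hδ0 (by linarith) hA h1.le fun j hj => hQ2 _ ?_ ?_ ?_
    · have : (0:ℝ) ≤ j := Nat.cast_nonneg j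
      simp only [Complex.add_re, Complex.natCast_re]
      linarith
    · have h1 : (j:ℝ) + 1 ≤ N := by exact_mod_cast hj
      push_cast
      simp only [Complex.add_re, Complex.natCast_re]
      linarith
    · intro m hm
      apply h3 ((m : ℤ) + 1 - j)
      have := congrArg Complex.re hm
      simp at this
      push_cast
      linarith

lemma half_not_int {s : ℂ} {a : ℤ} {b c : ℝ} (hb : (a : ℝ) ≤ b) (hc : c ≤ a + 1) (h1 : b < s.re) (h2 : s.re < c) :
    ∀ m : ℤ, s.re ≠ m := by
  intro m hm
  have h3 : (a : ℝ) < m := by rw [← hm]; linarith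
  have h4 : (m : ℝ) < a + 1 := by rw [← hm]; linarith
  have h3' : a < m := by exact_mod_cast h3
  have h4' : m < a + 1 := by exact_mod_cast h4
  omega

lemma glue {w δ : ℝ} (hw : 1 ≤ w) (hδ0 : 0 < δ) (hδ1 : δ < 1 / 8) {A : ℝ → ℝ} (hA : Good A) {G : ℂ → ℂ}
    (hG : ∀ s ∈ Strip (-(1 / 2)) 1, AnalyticAt ℂ G s) (hGS : EqOn G (SS w δ A) (Strip (1 / 2) 1)) :
    ∃ f : ℂ → ℂ, MeromorphicOn f univ ∧ EqOn f (SS w δ A) (Strip 1 2) ∧ f =ᶠ[𝓝 0] G := by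
  choose F hF1 hF2 using FN_exists hw hδ0 hδ1 hA
  have hFS : ∀ N, EqOn (F N) (SS w δ A) (Strip (1 / 2) 1) := by
    intro N s hs
    have hN : (0:ℝ) ≤ N := Nat.cast_nonneg N
    exact hF2 N s hs.1 (by linarith [hs.2]) (half_not_int (a := 0) (b := 1 / 2) (c := 1) (by norm_num) (by norm_num) hs.1 hs.2)
  classical
  set f : ℂ → ℂ := fun s => if ‖s‖ < 1 / 4 then G s else F (⌈|s.re|⌉₊ + 1) s with hf
  refine ⟨f, ?_, ?_, ?_⟩
  · intro z _
    set M := ⌈|z.re|⌉₊ + 3 with hM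
    have hzM : |z.re| + 3 ≤ M := by
      have := Nat.le_ceil |z.re|
      rw [hM]; push_cast; linarith
    have hab := abs_le.1 (le_refl |z.re|)
    have hmono : ∀ N ≤ M, Strip (1 / 2 - N) (N + 2) ⊆ Strip (1 / 2 - M) (M + 2) := by
      intro N hN s hs
      have : (N : ℝ) ≤ M := by exact_mod_cast hN
      exact ⟨by linarith [hs.1], by linarith [hs.2]⟩
    have hzT : z ∈ Strip (1 / 2 - M) (M + 2) := ⟨by linarith, by linarith⟩
    have key : F M =ᶠ[𝓝[≠] z] f := by
      have e1 : ∀ᶠ s in 𝓝[≠] z, ∀ N ∈ Finset.Icc 1 M, z ∈ Strip (1 / 2 - N) (N + 2) → F N s = F M s := by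
        rw [Filter.eventually_all_finset]
        intro N hN
        by_cases hz : z ∈ Strip (1 / 2 - (N:ℝ)) (N + 2)
        · have hN1 : (1:ℝ) ≤ N := by exact_mod_cast (Finset.mem_Icc.1 hN).1
          have := ident (f := F N) (g := F M) (by linarith) (by linarith) (hF1 N)
            (fun s hs => hF1 M s (hmono N (Finset.mem_Icc.1 hN).2 hs))
            (fun s hs => (hFS N hs).trans (hFS M hs).symm) hz
          filter_upwards [this] with s hs _ using hs
        · exact Eventually.of_forall fun s h => absurd h hz
      have e2 : ∀ᶠ s in 𝓝[≠] z, ‖z‖ < 1 / 2 → G s = F M s := by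
        by_cases hz : ‖z‖ < 1 / 2
        · have hre := Complex.abs_re_le_norm z
          have h2 := abs_lt.1 (lt_of_le_of_lt hre hz)
          have hM0 : (3 : ℝ) ≤ M := by linarith [abs_nonneg z.re]
          have := ident (f := G) (g := F M) (a := -(1 / 2)) (b := 1) (by norm_num) (by norm_num)
            (fun s hs => (hG s hs).meromorphicAt)
            (fun s hs => hF1 M s ⟨by linarith [hs.1], by linarith [hs.2]⟩)
            (fun s hs => (hGS hs).trans (hFS M hs).symm) (z := z) ⟨by linarith [h2.1], by linarith [h2.2]⟩
          filter_upwards [this] with s hs _ using hs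
        · exact Eventually.of_forall fun s h => absurd h hz
      have e3 : ∀ᶠ s in 𝓝[≠] z, ‖s - z‖ < 1 / 4 := by
        apply Filter.Eventually.filter_mono nhdsWithin_le_nhds
        filter_upwards [Metric.ball_mem_nhds z (by norm_num : (0:ℝ) < 1 / 4)] with s hs
        simpa [dist_eq_norm] using hs
      filter_upwards [e1, e2, e3] with s h1 h2 h3
      have hre : |s.re - z.re| < 1 / 4 := lt_of_le_of_lt (by simpa using Complex.abs_re_le_norm (s - z)) h3
      rw [hf]
      simp only
      split_ifs with hs
      · refine (h2 ?_).symm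
        have : ‖z‖ ≤ ‖s‖ + ‖s - z‖ := by
          have := norm_sub_le s (s - z)
          simpa using this
        linarith
      · have hr := abs_lt.1 hre
        have hs1 : |s.re| ≤ |z.re| + 1 := by
          rw [abs_le]; constructor <;> linarith
        have hs2 : ⌈|s.re|⌉₊ ≤ ⌈|z.re|⌉₊ + 1 := by
          rw [Nat.ceil_le]
          have := Nat.le_ceil |z.re|
          push_cast; linarith
        refine (h1 _ (Finset.mem_Icc.2 ⟨by omega, by omega⟩) ?_).symm
        have hc := Nat.le_ceil |s.re|
        have hab := abs_le.1 (le_refl |s.re|)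
        push_cast
        exact ⟨by push_cast; linarith, by push_cast; linarith⟩
    exact (hF1 M z hzT).congr key
  · intro s hs
    have h1 := hs.1
    have h2 := hs.2
    have hre := Complex.abs_re_le_norm s
    rw [abs_of_pos (by linarith)] at hre
    rw [hf]
    simp only
    rw [if_neg (by linarith)]
    have hc := Nat.le_ceil |s.re|
    rw [abs_of_pos (by linarith)] at hc ⊢
    refine hF2 _ s (by linarith) (by push_cast; linarith) (half_not_int (a := 1) (b := 1) (c := 2) (by norm_num) (by norm_num) h1 h2)
  · filter_upwards [Metric.ball_mem_nhds (0:ℂ) (by norm_num : (0:ℝ) < 1 / 4)] with s hs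
    have : ‖s‖ < 1 / 4 := by simpa using hs
    rw [hf]
    simp only
    rw [if_pos this]

end ConeAux

namespace ConeAux
open Set Topology

noncomputable def sc : ℂ → ℂ := dslope (fun s : ℂ => Complex.sin ((Real.pi : ℂ) * s) / (Real.pi : ℂ)) 0

lemma sc_diff : Differentiable ℂ sc := by
  have h : Differentiable ℂ (fun s : ℂ => Complex.sin ((Real.pi : ℂ) * s) / (Real.pi : ℂ)) := by fun_prop
  rw [← differentiableOn_univ]
  exact (Complex.differentiableOn_dslope univ_mem).2 h.differentiableOn

lemma sc_ne {s : ℂ} (hs : s ≠ 0) : sc s = Complex.sin ((Real.pi : ℂ) * s) / (Real.pi : ℂ) / s := by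
  rw [sc, dslope_of_ne _ hs, slope_def_field]
  simp

lemma pi_ne : (Real.pi : ℂ) ≠ 0 := by exact_mod_cast Real.pi_ne_zero

lemma sinpi_deriv : HasDerivAt (fun s : ℂ => Complex.sin ((Real.pi : ℂ) * s) / (Real.pi : ℂ)) 1 0 := by
  have h : HasDerivAt (fun s : ℂ => (Real.pi : ℂ) * s) (Real.pi : ℂ) 0 := by
    simpa using (hasDerivAt_id (0:ℂ)).const_mul (Real.pi : ℂ)
  have := (HasDerivAt.csin h).div_const (Real.pi : ℂ)
  simpa [pi_ne] using this

lemma sc_zero : sc 0 = 1 := by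
  rw [sc, dslope_same, sinpi_deriv.deriv]

lemma sc_deriv : HasDerivAt sc 0 0 := by
  have h := (sc_diff 0).hasDerivAt
  have he : (fun x => sc (-x)) = sc := by
    funext s
    by_cases hs : s = 0
    · simp [hs]
    · rw [sc_ne hs, sc_ne (neg_ne_zero.2 hs)]
      rw [mul_neg, Complex.sin_neg, neg_div, neg_div_neg_eq]
  have h2 : deriv (fun x => sc (-x)) 0 = -deriv sc (-0) := deriv_comp_neg sc 0
  rw [he, neg_zero] at h2
  have : deriv sc 0 = 0 := by
    have : (2:ℂ) * deriv sc 0 = 0 := by linear_combination h2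
    simpa using this
  rwa [this] at h

lemma sp_deriv : HasDerivAt sp 2 0 := by
  have := sinpi_deriv.const_mul (2:ℂ)
  have e : sp = fun s : ℂ => 2 * (Complex.sin ((Real.pi : ℂ) * s) / (Real.pi : ℂ)) := by
    funext s; unfold sp; ring
  rw [e]; simpa using this

lemma good_isBigO_top {A : ℝ → ℝ} (hA : Good A) :
    (fun u => (A u : ℂ)) =O[atTop] (fun u : ℝ => u ^ (-(2 : ℝ))) := by
  obtain ⟨C, hC⟩ := good_infty hA
  refine Asymptotics.IsBigO.of_bound C ?_
  filter_upwards [eventually_ge_atTop 1] with u hu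
  rw [Complex.norm_real, Real.norm_eq_abs, Real.norm_eq_abs]
  refine (hC u hu).trans (le_of_eq ?_)
  have hu0 : 0 < u := by linarith
  rw [Real.rpow_neg hu0.le, abs_of_nonneg (by positivity), inv_pow]
  norm_cast

lemma good_isBigO_zero {A : ℝ → ℝ} (hA : Good A) :
    (fun u => (A u : ℂ)) =O[𝓝[>] 0] (fun u : ℝ => u ^ (-(-1 : ℝ))) := by
  obtain ⟨C, hC⟩ := good_zero hA
  refine Asymptotics.IsBigO.of_bound C ?_
  filter_upwards [Ioc_mem_nhdsGT (one_pos : (0:ℝ) < 1)] with u hu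
  rw [Complex.norm_real, Real.norm_eq_abs, Real.norm_eq_abs]
  refine (hC u hu.1 hu.2).trans (le_of_eq ?_)
  simp [abs_of_pos hu.1]

lemma M0_mellin (A : ℝ → ℝ) (z : ℂ) : M0 A z = mellin (fun u => (A u : ℂ)) (1 - 2 * z) := by
  unfold M0 mellin
  congr 1
  funext u
  rw [smul_eq_mul]
  congr 2
  ring

lemma mellin_deriv {A : ℝ → ℝ} (hA : Good A) {s : ℂ} (h1 : -1 < s.re) (h2 : s.re < 2) :
    MellinConvergent (fun t => Real.log t • (A t : ℂ)) s ∧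
      HasDerivAt (mellin fun u => (A u : ℂ)) (mellin (fun t => Real.log t • (A t : ℂ)) s) s :=
  mellin_hasDerivAt_of_isBigO_rpow (a := 2) (b := -1)
    ((Complex.continuous_ofReal.comp_continuousOn hA.cont).locallyIntegrableOn measurableSet_Ioi)
    (good_isBigO_top hA) h2 (good_isBigO_zero hA) h1

lemma M0_diff {A : ℝ → ℝ} (hA : Good A) {z : ℂ} (h1 : -1 / 2 < z.re) (h2 : z.re < 1) : DifferentiableAt ℂ (M0 A) z := by
  have h := (mellin_deriv hA (s := 1 - 2 * z) (by simp; linarith) (by simp; linarith)).2.differentiableAt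
  have e : M0 A = fun z => mellin (fun u => (A u : ℂ)) (1 - 2 * z) := funext (M0_mellin A)
  rw [e]
  exact DifferentiableAt.comp (g := mellin fun u => (A u : ℂ)) (f := fun z : ℂ => 1 - 2 * z) z h (by fun_prop)

noncomputable def I0 (A : ℝ → ℝ) : ℝ := ∫ u in Ioi (0:ℝ), A u
noncomputable def I1 (A : ℝ → ℝ) : ℝ := ∫ u in Ioi (0:ℝ), Real.log u * A u
noncomputable def PP (w δ : ℝ) (A : ℝ → ℝ) : ℝ := ∑' k, (KK k * w)⁻¹ * ∫ u in Ioc 0 (uk w δ k), A u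

lemma M0_zero (A : ℝ → ℝ) : M0 A 0 = (I0 A : ℂ) := by
  unfold M0 I0
  rw [← integral_complex_ofReal]
  simp

lemma M0_deriv {A : ℝ → ℝ} (hA : Good A) : HasDerivAt (M0 A) ((-2 * I1 A : ℝ) : ℂ) 0 := by
  have h := (mellin_deriv hA (s := 1 - 2 * 0) (by simp) (by simp)).2
  have e : M0 A = fun z => mellin (fun u => (A u : ℂ)) (1 - 2 * z) := funext (M0_mellin A)
  have hl : HasDerivAt (fun z : ℂ => 1 - 2 * z) (-2) 0 := by
    simpa using ((hasDerivAt_id (0:ℂ)).const_mul 2).const_sub 1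
  have h2 := HasDerivAt.comp (0:ℂ) h hl
  rw [e]
  refine HasDerivAt.congr_deriv h2 ?_
  rw [mul_comm]
  push_cast
  congr 1
  unfold I1 mellin
  rw [← integral_complex_ofReal]
  refine integral_congr_ae (Eventually.of_forall fun u => ?_)
  simp

lemma log_int {A : ℝ → ℝ} (hA : Good A) : IntegrableOn (fun u => Real.log u * A u) (Ioi 0) := by
  have h := (mellin_deriv hA (s := 1) (by simp) (by simp)).1
  have h2 : IntegrableOn (fun u => ((Real.log u * A u : ℝ) : ℂ)) (Ioi 0) := by
    refine Integrable.congr h (Eventually.of_forall fun u => ?_)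
    simp
  have h3 := h2.re
  unfold IntegrableOn
  simpa using h3

lemma WW_zero {w δ : ℝ} (hw : 1 ≤ w) (A : ℝ → ℝ) (k : ℕ) :
    WW w δ A k 0 = (((KK k * w)⁻¹ * ∫ u in Ioc 0 (uk w δ k), A u : ℝ) : ℂ) := by
  unfold WW
  push_cast
  rw [← integral_complex_ofReal]
  simp [Complex.cpow_neg_one]

noncomputable def GG (w δ : ℝ) (A : ℝ → ℝ) (s : ℂ) : ℂ :=
  (w : ℂ) ^ (-(1 + 2 * s)) * M0 A s * sc s * riemannZeta₁ (1 + 2 * s) +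
    sp s * ((∑' k, rr w δ A 1 k s) - ∑' k, WW w δ A k s)

lemma wpow_diff {w : ℝ} (hw : 1 ≤ w) : Differentiable ℂ (fun z : ℂ => (w : ℂ) ^ (-(1 + 2 * z))) := by
  intro z
  refine DifferentiableAt.const_cpow (by fun_prop) (Or.inl ?_)
  exact_mod_cast (by linarith : w ≠ 0)

lemma GG_diff {w δ : ℝ} (hw : 1 ≤ w) (hδ0 : 0 < δ) (hδ1 : δ < 1 / 8) {A : ℝ → ℝ} (hA : Good A) {s : ℂ}
    (hs : s ∈ Strip (-(1 / 2)) 1) : DifferentiableAt ℂ (GG w δ A) s := by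
  obtain ⟨C, hC⟩ := good_zero hA
  have h1 := hs.1
  have h2 := hs.2
  have hz : DifferentiableAt ℂ (fun s => riemannZeta₁ (1 + 2 * s)) s :=
    DifferentiableAt.comp (g := riemannZeta₁) (f := fun s : ℂ => 1 + 2 * s) s (differentiable_riemannZeta₁ _) (by fun_prop)
  exact ((((wpow_diff hw s).mul (M0_diff hA (by linarith) h2)).mul (sc_diff s)).mul hz).add
    ((sp_diff s).mul ((rrsum_diff hw hδ0 hA 1 (by push_cast; linarith)).sub
      (W_diff hw hδ0 hδ1 hA.cont hC (by push_cast; linarith) (by push_cast; linarith))))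

lemma GG_eq {w δ : ℝ} (hw : 1 ≤ w) (hδ0 : 0 < δ) (hδ1 : δ < 1 / 8) {A : ℝ → ℝ} (hA : Good A) :
    EqOn (GG w δ A) (SS w δ A) (Strip (1 / 2) 1) := by
  intro s hs
  have h1 := hs.1
  have h2 := hs.2
  have hs0 : s ≠ 0 := by
    rintro rfl; simp at h1; linarith
  rw [← FF_eq (Q := Q0 w δ A) (J := 1) hw hδ0 (by linarith) hA h1.le (fun j hj => by
    have : j = 0 := by omega
    subst this
    simpa using Q0_hasSum hw hδ0 hδ1 hA (z := s) (by linarith) h2)]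
  unfold FF GG Q0
  simp only [Finset.sum_range_one, cc_zero, pow_zero, Nat.cast_zero, add_zero, one_mul]
  rw [riemannZeta_eq_inv_sub_mul (s := 1 + 2 * s) (by simpa using hs0), sc_ne hs0]
  unfold sp
  have := pi_ne
  field_simp
  ring

lemma GG_deriv {w δ : ℝ} (hw : 1 ≤ w) (hδ0 : 0 < δ) (hδ1 : δ < 1 / 8) {A : ℝ → ℝ} (hA : Good A) :
    HasDerivAt (GG w δ A) ((w⁻¹ * (-2 * I1 A - 2 * Real.log w * I0 A +
      2 * Real.eulerMascheroniConstant * I0 A) - 2 * PP w δ A : ℝ) : ℂ) 0 := by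
  obtain ⟨C, hC⟩ := good_zero hA
  have hw0 : (w : ℂ) ≠ 0 := by exact_mod_cast (by linarith : w ≠ 0)
  have hl : HasDerivAt (fun z : ℂ => 1 + 2 * z) 2 0 := by
    simpa using ((hasDerivAt_id (0:ℂ)).const_mul 2).const_add 1
  have d1 : HasDerivAt (fun z : ℂ => (w : ℂ) ^ (-(1 + 2 * z))) _ 0 := hl.neg.const_cpow (Or.inl hw0)
  have d2 := M0_deriv hA
  have d3 := sc_deriv
  have d4 : HasDerivAt (fun z : ℂ => riemannZeta₁ (1 + 2 * z)) ((Real.eulerMascheroniConstant : ℂ) * 2) 0 := by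
    have h := (differentiable_riemannZeta₁ (1 + 2 * 0)).hasDerivAt
    have h2 := HasDerivAt.comp (0:ℂ) h hl
    rw [show (1 + 2 * 0 : ℂ) = 1 by ring, deriv_riemannZeta₁_one] at h2
    exact h2
  have d5 := sp_deriv
  have d6 : DifferentiableAt ℂ (fun s => (∑' k, rr w δ A 1 k s) - ∑' k, WW w δ A k s) 0 :=
    (rrsum_diff hw hδ0 hA 1 (by push_cast; simp; norm_num)).sub
      (W_diff hw hδ0 hδ1 hA.cont hC (by simp) (by simp))
  have d := (((d1.mul d2).mul d3).mul d4).add (d5.mul d6.hasDerivAt)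
  unfold GG
  refine d.congr_deriv ?_
  have hrr : ∀ k, rr w δ A 1 k 0 = 0 := by
    intro k; simp [rr, HH, RR_one_zero]
  have hsp : sp 0 = 0 := by simp [sp]
  simp only [hsp, hrr, sc_zero, M0_zero, tsum_zero, Pi.mul_apply, zero_mul, mul_zero, add_zero, zero_sub, mul_one, riemannZeta₁_one,
    Complex.cpow_neg_one, Pi.neg_apply]
  simp only [WW_zero hw]
  rw [← Complex.ofReal_tsum, ← Complex.ofReal_log (by linarith)]
  unfold PP
  push_cast
  ring

theorem abstract_main {w δ : ℝ} (hw : 1 ≤ w) (hδ0 : 0 < δ) (hδ1 : δ < 1 / 8) {A : ℝ → ℝ} (hA : Good A) :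
    ∃ f : ℂ → ℂ, MeromorphicOn f univ ∧ EqOn f (SS w δ A) (Strip 1 2) ∧ AnalyticAt ℂ f 0 ∧
      deriv f 0 = ((w⁻¹ * (-2 * I1 A - 2 * Real.log w * I0 A +
      2 * Real.eulerMascheroniConstant * I0 A) - 2 * PP w δ A : ℝ) : ℂ) := by
  have hG : ∀ s ∈ Strip (-(1 / 2)) 1, AnalyticAt ℂ (GG w δ A) s := fun s hs =>
    analytic_of_diff (strip_open _ _) hs fun s hs => GG_diff hw hδ0 hδ1 hA hs
  obtain ⟨f, h1, h2, h3⟩ := glue hw hδ0 hδ1 hA hG (GG_eq hw hδ0 hδ1 hA)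
  refine ⟨f, h1, h2, ?_, ?_⟩
  · exact (hG 0 (by constructor <;> simp)).congr h3.symm
  · rw [h3.deriv_eq, (GG_deriv hw hδ0 hδ1 hA).deriv]

lemma abstract_summable {w δ : ℝ} (hw : 1 ≤ w) (hδ0 : 0 < δ) {A : ℝ → ℝ} (hA : Good A) {s : ℂ} (hs : 1 / 2 ≤ s.re) :
    Summable (fun k => ‖sp s * rr w δ A 0 k s‖) := by
  simp only [norm_mul]
  exact (rr_summable hw hδ0 hA 0 (by push_cast; linarith)).mul_left _

lemma abstract_unif {w δ : ℝ} (hw : 1 ≤ w) (hδ0 : 0 < δ) {A : ℝ → ℝ} (hA : Good A) :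
    TendstoLocallyUniformlyOn (fun (n : ℕ) (s : ℂ) => ∑ k ∈ Finset.range n, sp s * rr w δ A 0 k s)
      (SS w δ A) atTop {s : ℂ | 1 < s.re ∧ s.re < 2} := by
  have hopen : IsOpen {s : ℂ | 1 < s.re ∧ s.re < 2} := strip_open 1 2
  rw [tendstoLocallyUniformlyOn_iff_forall_isCompact hopen]
  intro K hK hKc
  obtain ⟨ρ, hρ⟩ := hKc.isBounded.exists_norm_le
  obtain ⟨C, hC, h⟩ := rr_bound hw hδ0 hA ρ 0
  obtain ⟨B, hB⟩ := hKc.exists_bound_of_continuousOn (f := sp) sp_diff.continuous.continuousOn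
  refine tendstoUniformlyOn_tsum_nat (u := fun k => B * (C * (1 / KK k ^ 2))) ((sum_sq.mul_left C).mul_left B) ?_
  intro k s hs
  rw [norm_mul]
  have := (hK hs).1
  have h1 := h s (hρ s hs) (by push_cast; linarith) k
  have h2 := hB s hs
  have : 0 ≤ B := (norm_nonneg _).trans h2
  gcongr

end ConeAux

namespace ConeAux
open Set Topology

lemma taylor_unif {g : ℝ → ℝ} (ha : AnalyticAt ℝ g 0) (hc : ContinuousOn g (Icc 0 1)) (N : ℕ) :
    ∃ b : ℕ → ℝ, ∃ C : ℝ, ∀ v : ℝ, 0 < v → v ≤ 1 → |g v - ∑ m ∈ Finset.range N, b m * v ^ m| ≤ C * v ^ N := by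
  obtain ⟨p, hp⟩ := ha
  have h := hp.isBigO_sub_partialSum_pow N
  obtain ⟨C1, hC1⟩ := h.bound
  obtain ⟨ε, hε, hb⟩ := Metric.eventually_nhds_iff.1 hC1
  set r : ℝ → ℝ := fun v => g v - ∑ m ∈ Finset.range N, p.coeff m * v ^ m with hr
  set ε' := min ε 1 / 2 with hε'
  have hε0 : 0 < ε' := by rw [hε']; positivity
  have hεε : ε' < ε := by
    have := min_le_left ε 1
    rw [hε']; linarith
  have hrc : ContinuousOn r (Icc ε' 1) := by
    refine (hc.mono (Icc_subset_Icc_left hε0.le)).sub (by fun_prop)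
  obtain ⟨C2, hC2⟩ := isCompact_Icc.exists_bound_of_continuousOn hrc
  refine ⟨p.coeff, |C1| + |C2| / ε' ^ N, fun v hv0 hv1 => ?_⟩
  rcases lt_or_ge v ε' with hv | hv
  · have h1 := hb (y := v) (by rw [dist_zero_right, Real.norm_eq_abs, abs_of_pos hv0]; linarith)
    simp only [zero_add, FormalMultilinearSeries.partialSum, FormalMultilinearSeries.apply_eq_pow_smul_coeff,
      smul_eq_mul, Real.norm_eq_abs, abs_pow, abs_of_pos hv0] at h1
    have e : ∑ m ∈ Finset.range N, p.coeff m * v ^ m = ∑ m ∈ Finset.range N, v ^ m * p.coeff m :=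
      Finset.sum_congr rfl fun m _ => mul_comm _ _
    rw [e]
    have e3 : |v ^ N| = v ^ N := abs_of_nonneg (by positivity)
    refine h1.trans ?_
    try rw [e3]
    have : 0 ≤ |C2| / ε' ^ N := by positivity
    have h3 := le_abs_self C1
    gcongr
    linarith
  · have h1 := hC2 v ⟨hv, hv1⟩
    rw [Real.norm_eq_abs] at h1
    refine h1.trans ?_
    have e1 : C2 ≤ |C2| / ε' ^ N * ε' ^ N := by
      rw [div_mul_cancel₀ _ (by positivity)]; exact le_abs_self _
    calc C2 ≤ |C2| / ε' ^ N * ε' ^ N := e1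
      _ ≤ (|C1| + |C2| / ε' ^ N) * v ^ N := by
        gcongr
        linarith [abs_nonneg C1]

noncomputable def yy (S v : ℝ) : ℝ := √(1 + v * S)

noncomputable def BB (S C v : ℝ) : ℝ :=
  ((5 - C ^ 2) * C * S / 8 - C * S ^ 2 / 8 * v) / yy S v ^ 5 +
    S ^ 2 * (2 * yy S v ^ 3 + 4 * C * yy S v ^ 2 + 6 * C ^ 2 * yy S v + 3 * C ^ 3) /
      (24 * yy S v ^ 5 * (yy S v + C) ^ 2)

noncomputable def AA (S C u : ℝ) : ℝ := u * BB S C (u ^ 2)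

noncomputable def hh (S C x : ℝ) : ℝ :=
  ((5 - C ^ 2) * C * S / 8 * x ^ 2 - C * S ^ 2 / 8) / √(x ^ 2 + S) ^ 5 +
    S ^ 2 * (2 * √(x ^ 2 + S) ^ 3 + 4 * C * √(x ^ 2 + S) ^ 2 * x + 6 * C ^ 2 * √(x ^ 2 + S) * x ^ 2 + 3 * C ^ 3 * x ^ 3) * x /
      (24 * √(x ^ 2 + S) ^ 5 * (√(x ^ 2 + S) + C * x) ^ 2)

lemma yy_pos {S v : ℝ} (hS : 0 < S) (hv : 0 ≤ v) : 0 < yy S v := by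
  unfold yy; apply Real.sqrt_pos.2; positivity

lemma BB_cd {S C v : ℝ} (hS : 0 < S) (hC : 0 < C) (hv : 0 ≤ v) : ContDiffAt ℝ ⊤ (BB S C) v := by
  have h1 : ContDiffAt ℝ ⊤ (fun v => yy S v) v := by
    unfold yy
    exact ContDiffAt.sqrt (by fun_prop) (by positivity)
  have := yy_pos hS hv
  unfold BB
  refine (ContDiffAt.div (by fun_prop) (h1.pow 5) (by positivity)).add
    (ContDiffAt.div (by fun_prop) (by fun_prop) (by positivity))

lemma hh_cd {S C x : ℝ} (hS : 0 < S) (hC : 0 < C) (hx : 0 ≤ x) : ContDiffAt ℝ ⊤ (hh S C) x := by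
  have h1 : ContDiffAt ℝ ⊤ (fun x => √(x ^ 2 + S)) x :=
    ContDiffAt.sqrt (by fun_prop) (by positivity)
  have : 0 < √(x ^ 2 + S) := Real.sqrt_pos.2 (by positivity)
  unfold hh
  refine (ContDiffAt.div (by fun_prop) (h1.pow 5) (by positivity)).add
    (ContDiffAt.div (by fun_prop) (by fun_prop) (by positivity))

lemma AA_inv {S C u : ℝ} (hS : 0 < S) (hC : 0 < C) (hu : 0 < u) : AA S C u = u⁻¹ ^ 2 * hh S C u⁻¹ := by
  obtain ⟨x, rfl⟩ : ∃ x : ℝ, u = x⁻¹ := ⟨u⁻¹, (inv_inv u).symm⟩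
  have hx : 0 < x := inv_pos.1 hu
  rw [inv_inv]
  have ht : yy S (x⁻¹ ^ 2) = √(x ^ 2 + S) / x := by
    unfold yy
    rw [← Real.sqrt_sq hx.le, ← Real.sqrt_div (by positivity), Real.sqrt_sq hx.le]
    congr 1
    field_simp
  unfold AA BB hh
  rw [ht]
  have : 0 < √(x ^ 2 + S) := Real.sqrt_pos.2 (by positivity)
  set t := √(x ^ 2 + S)
  have h1 : 0 < t / x + C := by positivity
  have h2 : 0 < t + C * x := by positivity
  field_simp

lemma AA_good {S C : ℝ} (hS : 0 < S) (hC : 0 < C) : Good (AA S C) := by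
  refine ⟨?_, ?_, ?_⟩
  · intro u hu
    refine ContinuousAt.continuousWithinAt ?_
    unfold AA
    refine continuousAt_id.mul ?_
    exact ContinuousAt.comp (f := fun u : ℝ => u ^ 2) (g := BB S C) (BB_cd hS hC (sq_nonneg u)).continuousAt (by fun_prop)
  · intro N
    obtain ⟨b, D, h⟩ := taylor_unif (BB_cd hS hC le_rfl).analyticAt
      (fun v hv => (BB_cd hS hC hv.1).continuousAt.continuousWithinAt) N
    refine ⟨b, D, fun u hu0 hu1 => ?_⟩
    have h1 := h (u ^ 2) (by positivity) (by nlinarith)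
    have e : AA S C u - ∑ m ∈ Finset.range N, b m * u ^ (2 * m + 1) =
        u * (BB S C (u ^ 2) - ∑ m ∈ Finset.range N, b m * (u ^ 2) ^ m) := by
      unfold AA
      rw [mul_sub, Finset.mul_sum]
      congr 1
      refine Finset.sum_congr rfl fun m _ => by ring
    rw [e, abs_mul, abs_of_pos hu0]
    calc u * _ ≤ u * (D * (u ^ 2) ^ N) := by gcongr
      _ = _ := by ring
  · intro N
    obtain ⟨b, D, h⟩ := taylor_unif (hh_cd hS hC le_rfl).analyticAt
      (fun v hv => (hh_cd hS hC hv.1).continuousAt.continuousWithinAt) N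
    refine ⟨b, D, fun u hu => ?_⟩
    have hu0 : 0 < u := by linarith
    have h1 := h u⁻¹ (by positivity) (inv_le_one_of_one_le₀ hu)
    have e : AA S C u - ∑ m ∈ Finset.range N, b m * u⁻¹ ^ (m + 2) =
        u⁻¹ ^ 2 * (hh S C u⁻¹ - ∑ m ∈ Finset.range N, b m * u⁻¹ ^ m) := by
      rw [AA_inv hS hC hu0, mul_sub, Finset.mul_sum]
      congr 1
      refine Finset.sum_congr rfl fun m _ => by ring
    rw [e, abs_mul, abs_of_nonneg (by positivity)]
    calc u⁻¹ ^ 2 * _ ≤ u⁻¹ ^ 2 * (D * u⁻¹ ^ N) := by gcongr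
      _ = _ := by ring

lemma rpow_yy {X : ℝ} (hX : 0 < X) (n : ℕ) : X ^ (-(n : ℝ) / 2) = (√X ^ n)⁻¹ := by
  rw [show -(n : ℝ) / 2 = (1 / 2) * (-(n : ℝ)) by ring, Real.rpow_mul hX.le, ← Real.sqrt_eq_rpow,
    Real.rpow_neg (Real.sqrt_nonneg _), Real.rpow_natCast]

end ConeAux

namespace ConeAux
open Set Topology

lemma cone_eq {η u : ℝ} (hη : 0 < η) (hu : 0 < u) (hu1 : u ≠ 1) :
    coneA1 η u + coneA2 η u + coneA3 η u = AA (Real.sinh η ^ 2) (Real.cosh η) u := by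
  have hs : 0 < Real.sinh η := Real.sinh_pos_iff.2 hη
  have hC : 0 < Real.cosh η := Real.cosh_pos η
  have hCS : Real.cosh η ^ 2 = 1 + Real.sinh η ^ 2 := by rw [Real.cosh_sq]; ring
  have hX : 0 < 1 + u ^ 2 * Real.sinh η ^ 2 := by positivity
  have e5 : (1 + u ^ 2 * Real.sinh η ^ 2) ^ (-(5 : ℝ) / 2) = (yy (Real.sinh η ^ 2) (u ^ 2) ^ 5)⁻¹ := by
    have := rpow_yy hX 5
    push_cast at this
    rw [this]; rfl
  have e3 : (1 + u ^ 2 * Real.sinh η ^ 2) ^ (-(3 : ℝ) / 2) = (yy (Real.sinh η ^ 2) (u ^ 2) ^ 3)⁻¹ := by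
    have := rpow_yy hX 3
    push_cast at this
    rw [this]; rfl
  have hy : yy (Real.sinh η ^ 2) (u ^ 2) ^ 2 = 1 + u ^ 2 * Real.sinh η ^ 2 := Real.sq_sqrt hX.le
  have hy0 : 0 < yy (Real.sinh η ^ 2) (u ^ 2) := yy_pos (by positivity) (by positivity)
  unfold coneA1 coneA2 coneA3 AA BB
  rw [e5, e3]
  set y := yy (Real.sinh η ^ 2) (u ^ 2)
  set C := Real.cosh η
  have h4 : Real.sinh η ^ 4 = (Real.sinh η ^ 2) ^ 2 := by ring
  rw [h4]
  have hSpos : 0 < Real.sinh η ^ 2 := by positivity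
  set S := Real.sinh η ^ 2
  have hu2 : u ^ 2 - 1 ≠ 0 := by
    intro h
    apply hu1
    nlinarith
  have hyC : (u ^ 2 - 1) * S = (y - C) * (y + C) := by linear_combination hCS - hy
  have hyC0 : y - C ≠ 0 := by
    intro h
    rw [h, zero_mul] at hyC
    rcases mul_eq_zero.1 hyC with h | h
    · exact hu2 h
    · exact hSpos.ne' h
  have hyC1 : y + C ≠ 0 := by positivity
  have e6 : u ^ 2 - 1 = (y - C) * (y + C) / S := by
    field_simp
    linarith
  have key : u / (24 * (u ^ 2 - 1) ^ 2) * (2 + 3 * C ^ 5 * (y ^ 5)⁻¹ - 5 * C ^ 3 * (y ^ 3)⁻¹) =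
      u * (S ^ 2 * (2 * y ^ 3 + 4 * C * y ^ 2 + 6 * C ^ 2 * y + 3 * C ^ 3) / (24 * y ^ 5 * (y + C) ^ 2)) := by
    rw [e6]
    field_simp
    ring
  rw [key]
  field_simp
  ring

lemma cone_rr {ω : ℕ} (hω : 1 ≤ ω) {η δ : ℝ} (hη : 0 < η) (hδ0 : 0 < δ) (k : ℕ) (s : ℂ) :
    coneE2 ω η δ (k + 1) s = sp s * rr (ω : ℝ) δ (AA (Real.sinh η ^ 2) (Real.cosh η)) 0 k s := by
  have hw : (1 : ℝ) ≤ (ω : ℝ) := by exact_mod_cast hω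
  rw [← E_rr hw hδ0, coneE2, sp, mul_assoc]
  have hK : ((k + 1 : ℕ) : ℝ) = KK k := by unfold KK; push_cast; ring
  have hK2 : ((k + 1 : ℕ) : ℂ) = ((KK k : ℝ) : ℂ) := by rw [← hK]; push_cast; ring
  rw [hK, hK2]
  congr 2
  · push_cast; rfl
  · refine setIntegral_congr_ae measurableSet_Ioi ?_
    have : ∀ᵐ u : ℝ, u ≠ 1 := by
      simp [ae_iff]
    filter_upwards [this] with u hu hu0
    have hu0' : 0 < u := (uk_pos hw δ k).trans hu0
    rw [cone_eq hη hu0' hu]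

end ConeAux

namespace ConeAux
open Set Topology

noncomputable def Y1 (r : ℝ) : ℝ := √(1 + r ^ 2)

lemma Y1_pos (r : ℝ) : 0 < Y1 r := Real.sqrt_pos.2 (by positivity)
lemma Y1_sq (r : ℝ) : Y1 r ^ 2 = 1 + r ^ 2 := Real.sq_sqrt (by positivity)
lemma Y1_one (r : ℝ) : 1 ≤ Y1 r := by
  have := Y1_sq r
  have := Y1_pos r
  nlinarith [sq_nonneg r]
lemma Y1_ge {r : ℝ} (hr : 0 ≤ r) : r ≤ Y1 r := by
  have := Y1_sq r
  have := Y1_pos r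
  nlinarith
lemma Y1_le {r : ℝ} (hr : 0 ≤ r) : Y1 r ≤ 1 + r := by
  have := Y1_sq r
  have := Y1_pos r
  nlinarith
lemma Y1_cont : Continuous Y1 := by unfold Y1; fun_prop
lemma Y1_zero : Y1 0 = 1 := by simp [Y1]

lemma Y1_deriv (r : ℝ) : HasDerivAt Y1 (r / Y1 r) r := by
  have h1 : HasDerivAt (fun r : ℝ => 1 + r ^ 2) (2 * r) r := by
    simpa using ((hasDerivAt_pow 2 r).const_add 1)
  have := h1.sqrt (by positivity)
  refine HasDerivAt.congr_deriv this ?_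
  unfold Y1
  rw [mul_div_mul_left _ _ two_ne_zero]

lemma Y1_tendsto : Tendsto Y1 atTop atTop :=
  tendsto_atTop_mono' _ (by filter_upwards [eventually_ge_atTop 0] with r hr using Y1_ge hr) tendsto_id

noncomputable def e3 (r : ℝ) : ℝ := r / Y1 r ^ 3
noncomputable def e5 (r : ℝ) : ℝ := r / Y1 r ^ 5

lemma e3_deriv (r : ℝ) : HasDerivAt (fun r => -(Y1 r)⁻¹) (e3 r) r := by
  have h0 := Y1_pos r
  have := ((Y1_deriv r).inv h0.ne').neg
  refine HasDerivAt.congr_deriv this ?_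
  unfold e3
  field_simp

lemma e5_deriv (r : ℝ) : HasDerivAt (fun r => -(1 / 3) * (Y1 r ^ 3)⁻¹) (e5 r) r := by
  have h0 := Y1_pos r
  have := (((Y1_deriv r).pow 3).inv (by simp; positivity)).const_mul (-(1 / 3 : ℝ))
  refine HasDerivAt.congr_deriv this ?_
  unfold e5
  simp
  field_simp

lemma e3_lim : Tendsto (fun r => -(Y1 r)⁻¹) atTop (𝓝 0) := by
  simpa using (Y1_tendsto.inv_tendsto_atTop).neg

lemma e5_lim : Tendsto (fun r => -(1 / 3) * (Y1 r ^ 3)⁻¹) atTop (𝓝 0) := by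
  have : Tendsto (fun r => Y1 r ^ 3) atTop atTop := (tendsto_pow_atTop (by norm_num)).comp Y1_tendsto
  simpa using (this.inv_tendsto_atTop).const_mul (-(1 / 3 : ℝ))

lemma e3_nonneg {r : ℝ} (hr : 0 ≤ r) : 0 ≤ e3 r := by
  have := Y1_pos r
  unfold e3; positivity
lemma e5_nonneg {r : ℝ} (hr : 0 ≤ r) : 0 ≤ e5 r := by
  have := Y1_pos r
  unfold e5; positivity
lemma e5_le {r : ℝ} (hr : 0 ≤ r) : e5 r ≤ e3 r := by
  have := Y1_pos r
  have := Y1_one r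
  unfold e5 e3
  gcongr
  norm_num
lemma e3_le {r : ℝ} (hr : 0 ≤ r) : e3 r ≤ r := by
  have := Y1_pos r
  unfold e3
  exact div_le_self hr (one_le_pow₀ (Y1_one r))
lemma e3_cont : Continuous e3 := by
  unfold e3
  exact continuous_id.div (Y1_cont.pow 3) fun r => by have := Y1_pos r; positivity
lemma e5_cont : Continuous e5 := by
  unfold e5
  exact continuous_id.div (Y1_cont.pow 5) fun r => by have := Y1_pos r; positivity

lemma e3_int : IntegrableOn e3 (Ioi 0) :=
  integrableOn_Ioi_deriv_of_nonneg' (fun r _ => e3_deriv r) (fun r hr => e3_nonneg (le_of_lt hr)) e3_lim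
lemma e5_int : IntegrableOn e5 (Ioi 0) :=
  integrableOn_Ioi_deriv_of_nonneg' (fun r _ => e5_deriv r) (fun r hr => e5_nonneg (le_of_lt hr)) e5_lim

lemma e3_val : ∫ r in Ioi 0, e3 r = 1 := by
  rw [integral_Ioi_of_hasDerivAt_of_tendsto' (fun r _ => e3_deriv r) e3_int e3_lim, Y1_zero]
  norm_num
lemma e5_val : ∫ r in Ioi 0, e5 r = 1 / 3 := by
  rw [integral_Ioi_of_hasDerivAt_of_tendsto' (fun r _ => e5_deriv r) e5_int e5_lim, Y1_zero]
  norm_num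

noncomputable def F3 (r : ℝ) : ℝ := (1 - (Y1 r)⁻¹) * Real.log r - Real.log (Y1 r + 1)
noncomputable def F5 (r : ℝ) : ℝ :=
  (1 / 3) * ((1 - (Y1 r ^ 3)⁻¹) * Real.log r + (Y1 r)⁻¹ - Real.log (Y1 r + 1))

lemma F3_deriv {r : ℝ} (hr : 0 < r) : HasDerivAt F3 (Real.log r * e3 r) r := by
  have h0 := Y1_pos r
  have hY := Y1_sq r
  have h1 := ((((Y1_deriv r).inv h0.ne').const_sub 1).mul (Real.hasDerivAt_log hr.ne')).sub
    (((Y1_deriv r).add_const 1).log (by positivity))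
  refine HasDerivAt.congr_deriv h1 ?_
  unfold e3
  simp
  field_simp
  have e : r ^ 2 = Y1 r ^ 2 - 1 := by linarith
  generalize Y1 r = y at *
  have e3' : r ^ 4 = (y ^ 2 - 1) ^ 2 := by rw [← e]; ring
  ring_nf
  simp only [e, e3']
  ring

lemma F5_deriv {r : ℝ} (hr : 0 < r) : HasDerivAt F5 (Real.log r * e5 r) r := by
  have h0 := Y1_pos r
  have hY := Y1_sq r
  have h1 := (((((((Y1_deriv r).pow 3).inv (by simp; positivity)).const_sub 1).mul (Real.hasDerivAt_log hr.ne')).add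
    ((Y1_deriv r).inv h0.ne')).sub
    (((Y1_deriv r).add_const 1).log (by positivity))).const_mul (1 / 3 : ℝ)
  refine HasDerivAt.congr_deriv h1 ?_
  unfold e5
  simp
  field_simp
  have e : r ^ 2 = Y1 r ^ 2 - 1 := by linarith
  generalize Y1 r = y at *
  ring_nf
  simp only [e]
  ring

lemma F3_eq (r : ℝ) : F3 r = r / (Y1 r * (Y1 r + 1)) * (r * Real.log r) - Real.log (Y1 r + 1) := by
  have h0 := Y1_pos r
  have hY := Y1_sq r
  have : 1 - (Y1 r)⁻¹ = r / (Y1 r * (Y1 r + 1)) * r := by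
    field_simp
    linarith
  rw [F3, this]; ring

lemma F5_eq (r : ℝ) : F5 r = (1 / 3) * (r * (Y1 r ^ 2 + Y1 r + 1) / (Y1 r ^ 3 * (Y1 r + 1)) * (r * Real.log r) +
    (Y1 r)⁻¹ - Real.log (Y1 r + 1)) := by
  have h0 := Y1_pos r
  have hY := Y1_sq r
  have : 1 - (Y1 r ^ 3)⁻¹ = r * (Y1 r ^ 2 + Y1 r + 1) / (Y1 r ^ 3 * (Y1 r + 1)) * r := by
    field_simp
    have e : r ^ 2 = Y1 r ^ 2 - 1 := by linarith
    rw [e]; ring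
  rw [F5, this]; ring

lemma F3_cont : Continuous F3 := by
  have e : F3 = _ := funext F3_eq
  rw [e]
  have h0 := Y1_pos
  refine Continuous.sub (Continuous.mul (continuous_id.div (Y1_cont.mul (Y1_cont.add continuous_const)) fun r => ?_)
    Real.continuous_mul_log) ((Y1_cont.add continuous_const).log fun r => ?_)
  · have := h0 r; exact (by positivity : (0:ℝ) < Y1 r * (Y1 r + 1)).ne'
  · have := h0 r; exact (by positivity : (0:ℝ) < Y1 r + 1).ne'

lemma F5_cont : Continuous F5 := by
  have e : F5 = _ := funext F5_eq
  rw [e]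
  have h0 := Y1_pos
  have h1 := Y1_cont
  refine continuous_const.mul (Continuous.sub (Continuous.add (Continuous.mul (Continuous.div (by fun_prop) (by fun_prop) fun r => ?_)
    Real.continuous_mul_log) (Y1_cont.inv₀ fun r => (h0 r).ne')) ((Y1_cont.add continuous_const).log fun r => ?_))
  · have := h0 r; exact (by positivity : (0:ℝ) < Y1 r ^ 3 * (Y1 r + 1)).ne'
  · have := h0 r; exact (by positivity : (0:ℝ) < Y1 r + 1).ne'

lemma logY_lim : Tendsto (fun r => Real.log r - Real.log (Y1 r + 1)) atTop (𝓝 0) := by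
  have h := (Real.tendsto_log_comp_add_sub_log 2).neg
  rw [neg_zero] at h
  refine tendsto_of_tendsto_of_tendsto_of_le_of_le' h tendsto_const_nhds ?_ ?_
  · filter_upwards [eventually_gt_atTop 0] with r hr
    have h1 := Y1_le hr.le
    have h2 := Y1_pos r
    have : Real.log (Y1 r + 1) ≤ Real.log (r + 2) := Real.log_le_log (by positivity) (by linarith)
    linarith
  · filter_upwards [eventually_gt_atTop 0] with r hr
    have h1 := Y1_ge hr.le
    have : Real.log r ≤ Real.log (Y1 r + 1) := Real.log_le_log hr (by linarith)
    linarith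

lemma logdiv_lim (n : ℕ) (hn : n ≠ 0) : Tendsto (fun r => (Y1 r ^ n)⁻¹ * Real.log r) atTop (𝓝 0) := by
  have h : Tendsto (fun r : ℝ => Real.log r / r) atTop (𝓝 0) := Real.isLittleO_log_id_atTop.tendsto_div_nhds_zero
  refine squeeze_zero' ?_ ?_ h
  · filter_upwards [eventually_ge_atTop 1] with r hr
    have h2 := Y1_pos r
    have := Real.log_nonneg hr
    positivity
  · filter_upwards [eventually_ge_atTop 1] with r hr
    have h2 := Y1_pos r
    have h3 := Real.log_nonneg hr
    rw [inv_mul_eq_div]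
    have : Y1 r ≤ Y1 r ^ n := le_self_pow₀ (Y1_one r) hn
    have := Y1_ge (r := r) (by linarith)
    gcongr
    linarith

lemma F3_lim : Tendsto F3 atTop (𝓝 0) := by
  have := logY_lim.sub (logdiv_lim 1 (by norm_num))
  rw [sub_zero] at this
  refine this.congr fun r => ?_
  unfold F3; simp; ring

lemma F5_lim : Tendsto F5 atTop (𝓝 0) := by
  have := ((logY_lim.sub (logdiv_lim 3 (by norm_num))).sub e3_lim).const_mul (1 / 3 : ℝ)
  simp only [sub_zero, mul_zero] at this
  refine this.congr fun r => ?_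
  unfold F5; ring

lemma loge3_int : IntegrableOn (fun r => Real.log r * e3 r) (Ioi 0) := by
  rw [← Ioc_union_Ioi_eq_Ioi (zero_le_one (α := ℝ)), integrableOn_union]
  constructor
  · have hc : Continuous (fun r : ℝ => (Y1 r ^ 3)⁻¹ * (r * Real.log r)) := by
      refine Continuous.mul ((Y1_cont.pow 3).inv₀ fun r => ?_) Real.continuous_mul_log
      have := Y1_pos r; simp; positivity
    refine (hc.integrableOn_Icc (a := 0) (b := 1)).mono_set Ioc_subset_Icc_self |>.congr_fun ?_ measurableSet_Ioc
    intro r _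
    simp only [e3]; ring
  · refine integrableOn_Ioi_deriv_of_nonneg' (fun r hr => F3_deriv (lt_of_lt_of_le one_pos hr)) (fun r hr => ?_) F3_lim
    have hr' : 1 < r := hr
    exact mul_nonneg (Real.log_nonneg hr'.le) (e3_nonneg (by linarith))

lemma loge5_int : IntegrableOn (fun r => Real.log r * e5 r) (Ioi 0) := by
  refine Integrable.mono loge3_int ?_ ?_
  · exact (Real.measurable_log.mul e5_cont.measurable).aestronglyMeasurable
  · refine (ae_restrict_iff' measurableSet_Ioi).2 (Eventually.of_forall fun r hr => ?_)
    have hr' : 0 < r := hr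
    rw [norm_mul, norm_mul, Real.norm_of_nonneg (e5_nonneg hr'.le), Real.norm_of_nonneg (e3_nonneg hr'.le)]
    have := e5_le hr'.le
    gcongr

lemma loge3_val : ∫ r in Ioi 0, Real.log r * e3 r = Real.log 2 := by
  rw [integral_Ioi_of_hasDerivAt_of_tendsto F3_cont.continuousWithinAt (fun r hr => F3_deriv hr) loge3_int F3_lim]
  simp [F3, Y1_zero]
  norm_num

lemma loge5_val : ∫ r in Ioi 0, Real.log r * e5 r = (Real.log 2 - 1) / 3 := by
  rw [integral_Ioi_of_hasDerivAt_of_tendsto F5_cont.continuousWithinAt (fun r hr => F5_deriv hr) loge5_int F5_lim]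
  simp [F5, Y1_zero]
  norm_num
  ring

end ConeAux

namespace ConeAux
open Set Topology

noncomputable def gg (C r : ℝ) : ℝ :=
  r * (2 * Y1 r ^ 3 + 4 * C * Y1 r ^ 2 + 6 * C ^ 2 * Y1 r + 3 * C ^ 3) / (24 * Y1 r ^ 5 * (Y1 r + C) ^ 2)

noncomputable def DD (h C r : ℝ) : ℝ :=
  (6 - C ^ 2) * C / 8 * e5 r - C / 8 * e3 r + h ^ 2 * gg C r

lemma AA_scale {h C : ℝ} (hC : 0 < C) (u : ℝ) : AA (h ^ 2) C u = h * DD h C (h * u) := by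
  have hy : yy (h ^ 2) (u ^ 2) = Y1 (h * u) := by
    unfold yy Y1; congr 1; ring
  unfold AA BB DD gg e5 e3
  rw [hy]
  have h0 := Y1_pos (h * u)
  have hY := Y1_sq (h * u)
  generalize Y1 (h * u) = y at *
  have : y + C ≠ 0 := by positivity
  have e : h * u / y ^ 3 = h * u * (1 + (h * u) ^ 2) / y ^ 5 := by
    rw [← hY]; field_simp
  rw [e]
  field_simp
  ring

lemma gg_nonneg {C r : ℝ} (hC : 0 < C) (hr : 0 ≤ r) : 0 ≤ gg C r := by
  have h0 := Y1_pos r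
  unfold gg; positivity

lemma gg_le {C r : ℝ} (hC : 0 < C) (hr : 0 ≤ r) : gg C r ≤ (1 + C) / 8 * e3 r := by
  have h0 := Y1_pos r
  have h1 := Y1_one r
  unfold gg e3
  generalize Y1 r = y at *
  have h2 : 2 * y ^ 3 + 4 * C * y ^ 2 + 6 * C ^ 2 * y + 3 * C ^ 3 ≤ 3 * (y + C) ^ 3 := by
    have : 0 ≤ y ^ 3 + 5 * C * y ^ 2 + 3 * C ^ 2 * y := by positivity
    linarith [this, show 3 * (y + C) ^ 3 - (2 * y ^ 3 + 4 * C * y ^ 2 + 6 * C ^ 2 * y + 3 * C ^ 3) =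
      y ^ 3 + 5 * C * y ^ 2 + 3 * C ^ 2 * y by ring]
  have h3 : y + C ≤ (1 + C) * y ^ 2 := by
    have : y ≤ y ^ 2 := by nlinarith
    nlinarith
  calc r * (2 * y ^ 3 + 4 * C * y ^ 2 + 6 * C ^ 2 * y + 3 * C ^ 3) / (24 * y ^ 5 * (y + C) ^ 2)
      ≤ r * (3 * (y + C) ^ 3) / (24 * y ^ 5 * (y + C) ^ 2) := by gcongr
    _ = r * (y + C) / (8 * y ^ 5) := by field_simp; ring
    _ ≤ r * ((1 + C) * y ^ 2) / (8 * y ^ 5) := by gcongr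
    _ = (1 + C) / 8 * (r / y ^ 3) := by field_simp

lemma gg_cont {C : ℝ} (hC : 0 < C) : Continuous (gg C) := by
  have h1 := Y1_cont
  unfold gg
  refine Continuous.div (by fun_prop) (by fun_prop) fun r => ?_
  have := Y1_pos r
  exact (by positivity : (0:ℝ) < 24 * Y1 r ^ 5 * (Y1 r + C) ^ 2).ne'

lemma gg_int {C : ℝ} (hC : 0 < C) : IntegrableOn (gg C) (Ioi 0) := by
  refine Integrable.mono' (e3_int.const_mul ((1 + C) / 8)) (gg_cont hC).aestronglyMeasurable ?_
  refine (ae_restrict_iff' measurableSet_Ioi).2 (Eventually.of_forall fun r hr => ?_)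
  have hr' : 0 < r := hr
  rw [Real.norm_of_nonneg (gg_nonneg hC hr'.le)]
  exact gg_le hC hr'.le

lemma loggg_bd {C r : ℝ} (hC : 0 < C) (hr : 0 < r) : ‖Real.log r * gg C r‖ ≤ (1 + C) / 8 * ‖Real.log r * e3 r‖ := by
  rw [norm_mul, norm_mul, Real.norm_of_nonneg (gg_nonneg hC hr.le), Real.norm_of_nonneg (e3_nonneg hr.le)]
  have := gg_le hC hr.le
  calc _ ≤ ‖Real.log r‖ * ((1 + C) / 8 * e3 r) := by gcongr
    _ = _ := by ring

lemma loggg_int {C : ℝ} (hC : 0 < C) : IntegrableOn (fun r => Real.log r * gg C r) (Ioi 0) := by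
  refine Integrable.mono' (loge3_int.norm.const_mul ((1 + C) / 8))
    (Real.measurable_log.mul (gg_cont hC).measurable).aestronglyMeasurable ?_
  exact (ae_restrict_iff' measurableSet_Ioi).2 (Eventually.of_forall fun r hr => loggg_bd hC hr)

noncomputable def L3 : ℝ := ∫ r in Ioi 0, ‖Real.log r * e3 r‖

lemma gg_val {C : ℝ} (hC : 0 < C) : |∫ r in Ioi 0, gg C r| ≤ (1 + C) / 8 := by
  have h := norm_integral_le_of_norm_le (μ := volume.restrict (Ioi 0)) (f := gg C) (e3_int.const_mul ((1 + C) / 8))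
    ((ae_restrict_iff' measurableSet_Ioi).2 (Eventually.of_forall fun r hr => by
      have hr' : 0 < r := hr
      rw [Real.norm_of_nonneg (gg_nonneg hC hr'.le)]
      exact gg_le hC hr'.le))
  rw [integral_const_mul, e3_val, mul_one] at h
  exact h

lemma loggg_val {C : ℝ} (hC : 0 < C) : |∫ r in Ioi 0, Real.log r * gg C r| ≤ (1 + C) / 8 * L3 := by
  have h := norm_integral_le_of_norm_le (μ := volume.restrict (Ioi 0)) (f := fun r => Real.log r * gg C r)
    (loge3_int.norm.const_mul ((1 + C) / 8))
    ((ae_restrict_iff' measurableSet_Ioi).2 (Eventually.of_forall fun r hr => loggg_bd hC hr))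
  rw [integral_const_mul] at h
  exact h

lemma DD_int (h : ℝ) {C : ℝ} (hC : 0 < C) : IntegrableOn (DD h C) (Ioi 0) :=
  ((e5_int.const_mul _).sub (e3_int.const_mul _)).add ((gg_int hC).const_mul _)

lemma DD_val (h : ℝ) {C : ℝ} (hC : 0 < C) : ∫ r in Ioi 0, DD h C r =
    (6 - C ^ 2) * C / 8 * (1 / 3) - C / 8 + h ^ 2 * ∫ r in Ioi 0, gg C r := by
  unfold DD
  rw [integral_add (f := fun r => (6 - C ^ 2) * C / 8 * e5 r - C / 8 * e3 r) ((e5_int.const_mul _).sub (e3_int.const_mul _)) ((gg_int hC).const_mul _),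
    integral_sub (e5_int.const_mul _) (e3_int.const_mul _), integral_const_mul, integral_const_mul, integral_const_mul,
    e5_val, e3_val, mul_one]

lemma logDD_eq (h C : ℝ) : (fun r => Real.log r * DD h C r) = fun r =>
    (6 - C ^ 2) * C / 8 * (Real.log r * e5 r) - C / 8 * (Real.log r * e3 r) + h ^ 2 * (Real.log r * gg C r) := by
  funext r; unfold DD; ring

lemma logDD_int (h : ℝ) {C : ℝ} (hC : 0 < C) : IntegrableOn (fun r => Real.log r * DD h C r) (Ioi 0) := by
  rw [logDD_eq]
  exact ((loge5_int.const_mul _).sub (loge3_int.const_mul _)).add ((loggg_int hC).const_mul _)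

lemma logDD_val (h : ℝ) {C : ℝ} (hC : 0 < C) : ∫ r in Ioi 0, Real.log r * DD h C r =
    (6 - C ^ 2) * C / 8 * ((Real.log 2 - 1) / 3) - C / 8 * Real.log 2 + h ^ 2 * ∫ r in Ioi 0, Real.log r * gg C r := by
  rw [logDD_eq, integral_add (f := fun r => (6 - C ^ 2) * C / 8 * (Real.log r * e5 r) - C / 8 * (Real.log r * e3 r)) ((loge5_int.const_mul _).sub (loge3_int.const_mul _)) ((loggg_int hC).const_mul _),
    integral_sub (loge5_int.const_mul _) (loge3_int.const_mul _), integral_const_mul, integral_const_mul, integral_const_mul,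
    loge5_val, loge3_val]

lemma I0_AA {h C : ℝ} (hh0 : 0 < h) (hC : 0 < C) : I0 (AA (h ^ 2) C) = ∫ r in Ioi 0, DD h C r := by
  unfold I0
  simp_rw [AA_scale hC]
  rw [integral_const_mul, integral_comp_mul_left_Ioi (DD h C) 0 hh0, mul_zero, smul_eq_mul]
  field_simp

lemma I1_AA {h C : ℝ} (hh0 : 0 < h) (hC : 0 < C) : I1 (AA (h ^ 2) C) =
    (∫ r in Ioi 0, Real.log r * DD h C r) - Real.log h * I0 (AA (h ^ 2) C) := by
  rw [I0_AA hh0 hC]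
  unfold I1
  have e : ∫ u in Ioi (0:ℝ), Real.log u * AA (h ^ 2) C u =
      ∫ u in Ioi (0:ℝ), h * ((fun r => Real.log r * DD h C r - Real.log h * DD h C r) (h * u)) := by
    refine setIntegral_congr_fun measurableSet_Ioi fun u hu => ?_
    have hu' : 0 < u := hu
    simp only []
    rw [AA_scale hC, Real.log_mul hh0.ne' hu'.ne']
    ring
  rw [e, integral_const_mul, integral_comp_mul_left_Ioi (fun r => Real.log r * DD h C r - Real.log h * DD h C r) 0 hh0, mul_zero, smul_eq_mul,
    integral_sub (logDD_int h hC) ((DD_int h hC).const_mul _), integral_const_mul]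
  field_simp

lemma DD_bd {h C r : ℝ} (hh0 : 0 ≤ h) (hh1 : h ≤ 2) (hC : 0 < C) (hC2 : C ≤ 2) (hr : 0 ≤ r) : |DD h C r| ≤ 4 * r := by
  have h1 := e3_nonneg hr
  have h2 := e5_nonneg hr
  have h3 := e3_le hr
  have h4 := e5_le hr
  have h5 := gg_nonneg hC hr
  have h6 := gg_le hC hr
  have h7 : gg C r ≤ 3 / 8 * r := by nlinarith
  have h8 : h ^ 2 ≤ 4 := by nlinarith
  have h9 : h ^ 2 * gg C r ≤ 4 * (3 / 8 * r) := by gcongr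
  have h10 : 0 ≤ h ^ 2 * gg C r := by positivity
  have h11 : 0 ≤ (6 - C ^ 2) * C / 8 := by
    have : 0 ≤ 6 - C ^ 2 := by nlinarith
    positivity
  have h12 : (6 - C ^ 2) * C / 8 ≤ 3 / 2 := by nlinarith [pow_pos hC 3]
  have h13 : 0 ≤ (6 - C ^ 2) * C / 8 * e5 r := by positivity
  have h14 : (6 - C ^ 2) * C / 8 * e5 r ≤ 3 / 2 * r := by gcongr; linarith
  have h15 : 0 ≤ C / 8 * e3 r := by positivity
  have h16 : C / 8 * e3 r ≤ 2 / 8 * r := by gcongr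
  unfold DD
  rw [abs_le]
  constructor <;> linarith

lemma AA_bd {h C u : ℝ} (hh0 : 0 ≤ h) (hh1 : h ≤ 2) (hC : 0 < C) (hC2 : C ≤ 2) (hu : 0 ≤ u) :
    |AA (h ^ 2) C u| ≤ 4 * h ^ 2 * u := by
  rw [AA_scale hC, abs_mul, abs_of_nonneg hh0]
  have := DD_bd hh0 hh1 hC hC2 (r := h * u) (by positivity)
  calc h * _ ≤ h * (4 * (h * u)) := by gcongr
    _ = _ := by ring

lemma uk_sq {w δ : ℝ} (hw : 1 ≤ w) (hδ1 : δ < 1 / 8) (k : ℕ) : uk w δ k * uk w δ k ≤ (KK k)⁻¹ := by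
  have h1 : uk w δ k ≤ KK k ^ (-(1 / 2) : ℝ) := by
    unfold uk
    have hK := KK_pos k
    refine (div_le_self (by positivity) hw).trans ?_
    exact Real.rpow_le_rpow_of_exponent_le (KK_one k) (by linarith)
  have h2 := uk_pos hw δ k
  have hK := KK_pos k
  calc uk w δ k * uk w δ k ≤ KK k ^ (-(1 / 2) : ℝ) * KK k ^ (-(1 / 2) : ℝ) := by gcongr
    _ = (KK k)⁻¹ := by
      rw [← Real.rpow_add hK, ← Real.rpow_neg_one]; norm_num

lemma PP_bd {w δ : ℝ} (hw : 1 ≤ w) (hδ1 : δ < 1 / 8) {h C : ℝ} (hh0 : 0 ≤ h) (hh1 : h ≤ 2) (hC : 0 < C) (hC2 : C ≤ 2) :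
    |PP w δ (AA (h ^ 2) C)| ≤ 4 * h ^ 2 * ∑' k, 1 / KK k ^ 2 := by
  unfold PP
  rw [← tsum_mul_left, ← Real.norm_eq_abs]
  refine tsum_of_norm_bounded (sum_sq.mul_left _).hasSum fun k => ?_
  have hK := KK_pos k
  have hu := uk_pos hw δ k
  have h1 : ‖∫ u in Ioc 0 (uk w δ k), AA (h ^ 2) C u‖ ≤ (4 * h ^ 2 * uk w δ k) * volume.real (Ioc 0 (uk w δ k)) := by
    refine norm_setIntegral_le_of_norm_le_const (by simp) fun u hu' => ?_
    refine (AA_bd hh0 hh1 hC hC2 hu'.1.le).trans ?_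
    have := hu'.2
    gcongr
  rw [Real.volume_real_Ioc_of_le hu.le, sub_zero] at h1
  have h2 := uk_sq hw hδ1 k
  rw [norm_mul, Real.norm_of_nonneg (by positivity)]
  calc (KK k * w)⁻¹ * _ ≤ (KK k)⁻¹ * (4 * h ^ 2 * uk w δ k * uk w δ k) := by
        gcongr
        exact le_mul_of_one_le_right hK.le hw
    _ = (KK k)⁻¹ * (4 * h ^ 2 * (uk w δ k * uk w δ k)) := by ring
    _ ≤ (KK k)⁻¹ * (4 * h ^ 2 * (KK k)⁻¹) := by gcongr
    _ = _ := by field_simp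

end ConeAux

namespace ConeAux
open Set Topology

noncomputable def Vd (w δ η : ℝ) : ℝ :=
  w⁻¹ * (-2 * I1 (AA (Real.sinh η ^ 2) (Real.cosh η)) - 2 * Real.log w * I0 (AA (Real.sinh η ^ 2) (Real.cosh η)) +
    2 * Real.eulerMascheroniConstant * I0 (AA (Real.sinh η ^ 2) (Real.cosh η))) -
    2 * PP w δ (AA (Real.sinh η ^ 2) (Real.cosh η))

lemma sinh_lim : Tendsto Real.sinh (𝓝[>] 0) (𝓝 0) := by
  have := (Real.continuous_sinh.tendsto 0).mono_left (nhdsWithin_le_nhds (s := Ioi 0))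
  simpa using this

lemma cosh_lim : Tendsto Real.cosh (𝓝[>] 0) (𝓝 1) := by
  have := (Real.continuous_cosh.tendsto 0).mono_left (nhdsWithin_le_nhds (s := Ioi 0))
  simpa using this

lemma ev_small : ∀ᶠ η : ℝ in 𝓝[>] 0, 0 < η ∧ 0 < Real.sinh η ∧ Real.sinh η ≤ 1 ∧ 1 ≤ Real.cosh η ∧ Real.cosh η ≤ 2 ∧
    Real.cosh η ^ 2 = 1 + Real.sinh η ^ 2 := by
  filter_upwards [self_mem_nhdsWithin, sinh_lim.eventually_lt_const zero_lt_one,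
    cosh_lim.eventually_lt_const one_lt_two] with η h1 h2 h3
  exact ⟨h1, Real.sinh_pos_iff.2 h1, h2.le, Real.one_le_cosh η, h3.le, by rw [Real.cosh_sq]; ring⟩

lemma logsinh_lim : Tendsto (fun η => Real.log (Real.sinh η) - Real.log η) (𝓝[>] 0) (𝓝 0) := by
  have h := (Real.hasDerivAt_sinh 0).tendsto_slope_zero_right
  simp only [zero_add, Real.sinh_zero, sub_zero, smul_eq_mul, Real.cosh_zero] at h
  have h2 := (Real.continuousAt_log one_ne_zero).tendsto.comp h
  rw [Real.log_one] at h2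
  refine h2.congr' ?_
  filter_upwards [ev_small] with η hη
  simp only [Function.comp]
  rw [Real.log_mul (inv_ne_zero hη.1.ne') hη.2.1.ne', Real.log_inv]; ring

lemma hlog_lim : Tendsto (fun η => Real.sinh η ^ 2 * |Real.log (Real.sinh η)|) (𝓝[>] 0) (𝓝 0) := by
  have h := (Real.continuous_mul_log.tendsto 0).comp sinh_lim
  simp only [Real.log_zero, mul_zero] at h
  have h2 := (sinh_lim.mul h.abs)
  simp only [abs_zero, mul_zero] at h2
  refine h2.congr' ?_
  filter_upwards [ev_small] with η hη
  simp only [Function.comp]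
  rw [abs_mul, abs_of_pos hη.2.1]; ring

lemma I0_close : ∀ᶠ η : ℝ in 𝓝[>] 0, |I0 (AA (Real.sinh η ^ 2) (Real.cosh η)) - 1 / 12| ≤ Real.sinh η ^ 2 := by
  filter_upwards [ev_small] with η ⟨h1, h2, h3, h4, h5, h6⟩
  have hC : 0 < Real.cosh η := by linarith
  rw [I0_AA h2 hC, DD_val _ hC]
  have h7 := gg_val hC
  set g := ∫ r in Ioi 0, gg (Real.cosh η) r
  generalize Real.cosh η = C at *
  generalize Real.sinh η = x at *
  have h8 : |x ^ 2 * g| ≤ x ^ 2 * (3 / 8) := by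
    rw [abs_mul, abs_of_nonneg (sq_nonneg x)]
    gcongr
    linarith
  have h9 : (6 - C ^ 2) * C / 8 * (1 / 3) - C / 8 - 1 / 12 = (2 * (C - 1) - x ^ 2 * C) / 24 := by
    rw [h6]; ring
  have h10 : C - 1 ≤ x ^ 2 := by nlinarith
  have h11 : 0 ≤ x ^ 2 * C := by positivity
  have h12 : x ^ 2 * C ≤ x ^ 2 * 2 := by gcongr
  have h13 := sq_nonneg x
  rw [abs_le] at h8 ⊢
  constructor <;> linarith

lemma I0_lim : Tendsto (fun η => I0 (AA (Real.sinh η ^ 2) (Real.cosh η))) (𝓝[>] 0) (𝓝 (1 / 12)) := by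
  rw [← tendsto_sub_nhds_zero_iff]
  refine squeeze_zero_norm' I0_close ?_
  simpa using sinh_lim.pow 2

lemma logI0_lim : Tendsto (fun η => Real.log (Real.sinh η) * (I0 (AA (Real.sinh η ^ 2) (Real.cosh η)) - 1 / 12))
    (𝓝[>] 0) (𝓝 0) := by
  refine squeeze_zero_norm' ?_ hlog_lim
  filter_upwards [I0_close] with η h
  rw [norm_mul, Real.norm_eq_abs, Real.norm_eq_abs, mul_comm]
  gcongr

lemma J1_lim : Tendsto (fun η => ∫ r in Ioi 0, Real.log r * DD (Real.sinh η) (Real.cosh η) r) (𝓝[>] 0)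
    (𝓝 (Real.log 2 / 12 - 5 / 24)) := by
  have h1 : Tendsto (fun η => Real.sinh η ^ 2 * ∫ r in Ioi 0, Real.log r * gg (Real.cosh η) r) (𝓝[>] 0) (𝓝 0) := by
    have : Tendsto (fun η => Real.sinh η ^ 2 * ((1 + Real.cosh η) / 8 * L3)) (𝓝[>] 0) (𝓝 (0 ^ 2 * ((1 + 1) / 8 * L3))) :=
      (sinh_lim.pow 2).mul (((cosh_lim.const_add 1).div_const 8).mul_const L3)
    simp only [ne_eq, OfNat.ofNat_ne_zero, not_false_eq_true, zero_pow, zero_mul] at this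
    refine squeeze_zero_norm' (Eventually.of_forall fun η => ?_) this
    rw [norm_mul, Real.norm_of_nonneg (sq_nonneg _)]
    have := loggg_val (Real.cosh_pos η)
    rw [← Real.norm_eq_abs] at this
    gcongr
  have h2 : Tendsto (fun η => (6 - Real.cosh η ^ 2) * Real.cosh η / 8 * ((Real.log 2 - 1) / 3) -
      Real.cosh η / 8 * Real.log 2) (𝓝[>] 0) (𝓝 ((6 - 1 ^ 2) * 1 / 8 * ((Real.log 2 - 1) / 3) - 1 / 8 * Real.log 2)) :=
    (((((cosh_lim.pow 2).const_sub 6).mul cosh_lim).div_const 8).mul_const _).sub ((cosh_lim.div_const 8).mul_const _)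
  have h3 := h2.add h1
  have e : (6 - 1 ^ 2) * 1 / 8 * ((Real.log 2 - 1) / 3) - 1 / 8 * Real.log 2 + 0 = Real.log 2 / 12 - 5 / 24 := by ring
  rw [e] at h3
  refine h3.congr fun η => ?_
  rw [logDD_val _ (Real.cosh_pos η)]

lemma PP_lim {w δ : ℝ} (hw : 1 ≤ w) (hδ1 : δ < 1 / 8) :
    Tendsto (fun η => PP w δ (AA (Real.sinh η ^ 2) (Real.cosh η))) (𝓝[>] 0) (𝓝 0) := by
  have h : Tendsto (fun η => 4 * Real.sinh η ^ 2 * ∑' k, 1 / KK k ^ 2) (𝓝[>] 0) (𝓝 (4 * 0 ^ 2 * ∑' k, 1 / KK k ^ 2)) :=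
    ((sinh_lim.pow 2).const_mul 4).mul_const _
  simp only [ne_eq, OfNat.ofNat_ne_zero, not_false_eq_true, zero_pow, zero_mul, mul_zero] at h
  refine squeeze_zero_norm' ?_ h
  filter_upwards [ev_small] with η ⟨h1, h2, h3, h4, h5, h6⟩
  exact PP_bd hw hδ1 h2.le (by linarith) (by linarith) h5

lemma Vd_lim {w δ : ℝ} (hw : 1 ≤ w) (hδ1 : δ < 1 / 8) :
    Tendsto (fun η => Vd w δ η - ((1 / 12) / w * (5 + 2 * Real.eulerMascheroniConstant - 2 * Real.log 2 - 2 * Real.log w) +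
      1 / (6 * w) * Real.log η)) (𝓝[>] 0) (𝓝 0) := by
  have hw0 : w ≠ 0 := by linarith
  have h := ((((J1_lim.const_mul (-2)).add (logI0_lim.const_mul 2)).add
    (I0_lim.const_mul (2 * Real.eulerMascheroniConstant - 2 * Real.log w))).add (logsinh_lim.const_mul (1 / 6))).const_mul w⁻¹
    |>.sub ((PP_lim hw hδ1).const_mul 2)
  have h' := h.sub_const ((1 / 12) / w * (5 + 2 * Real.eulerMascheroniConstant - 2 * Real.log 2 - 2 * Real.log w))
  refine (h'.congr' ?_).trans (le_of_eq (congrArg _ ?_))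
  · filter_upwards [ev_small] with η ⟨h1, h2, h3, h4, h5, h6⟩
    unfold Vd
    rw [I1_AA h2 (by linarith)]
    field_simp
    ring
  · field_simp
    ring

end ConeAux

open ConeAux

/-- for fixed integer `ω ≥ 1` and `δ ∈ (0,1/8)`, for every `η > 0` the series
`ζ_{E₂}(s) = Σ_{k≥1} E_{2,k}(s)` converges absolutely and locally uniformly on the strip
`1 < Re(s) < 2`, its sum extends to a meromorphic function on `ℂ` holomorphic at `s = 0`, and
the derivative at `0` satisfies
`ζ_{E₂}'(0) = -(ζ(-1)/ω)·(5 + 2γ - 2 log 2 - 2 log ω) + (1/(6ω))·log η + o(1)` as `η → 0⁺`. -/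
theorem statement8 (ω : ℕ) (hω : 1 ≤ ω) (δ : ℝ) (hδ0 : 0 < δ) (hδ1 : δ < 1 / 8) :
    ∃ F : ℝ → ℂ → ℂ,
      (∀ η : ℝ, 0 < η →
        (∀ s ∈ {s : ℂ | 1 < s.re ∧ s.re < 2},
          Summable (fun k : ℕ => ‖coneE2 ω η δ (k + 1) s‖)) ∧
        TendstoLocallyUniformlyOn
          (fun (n : ℕ) (s : ℂ) => ∑ k ∈ Finset.range n, coneE2 ω η δ (k + 1) s)
          (fun s : ℂ => ∑' k : ℕ, coneE2 ω η δ (k + 1) s)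
          atTop {s : ℂ | 1 < s.re ∧ s.re < 2} ∧
        MeromorphicOn (F η) Set.univ ∧
        Set.EqOn (F η) (fun s : ℂ => ∑' k : ℕ, coneE2 ω η δ (k + 1) s)
          {s : ℂ | 1 < s.re ∧ s.re < 2} ∧
        AnalyticAt ℂ (F η) 0) ∧
      Tendsto
        (fun η : ℝ => deriv (F η) 0 -
          (-(riemannZeta (-1) / (ω : ℂ)) *
              (5 + 2 * (Real.eulerMascheroniConstant : ℂ) - 2 * (Real.log 2 : ℂ) -
                2 * (Real.log ω : ℂ)) +
            (1 / (6 * (ω : ℂ))) * (Real.log η : ℂ)))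
        (nhdsWithin 0 (Set.Ioi 0)) (nhds 0) := by
  have hw : (1 : ℝ) ≤ (ω : ℝ) := by exact_mod_cast hω
  have hgood : ∀ η : ℝ, 0 < η → Good (AA (Real.sinh η ^ 2) (Real.cosh η)) := fun η hη =>
    AA_good (pow_pos (Real.sinh_pos_iff.2 hη) 2) (Real.cosh_pos η)
  have hex : ∀ η : ℝ, ∃ f : ℂ → ℂ, 0 < η → (MeromorphicOn f Set.univ ∧
      Set.EqOn f (SS (ω : ℝ) δ (AA (Real.sinh η ^ 2) (Real.cosh η))) (Strip 1 2) ∧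
      AnalyticAt ℂ f 0 ∧ deriv f 0 = ((Vd (ω : ℝ) δ η : ℝ) : ℂ)) := by
    intro η
    by_cases hη : 0 < η
    · obtain ⟨f, hf⟩ := abstract_main hw hδ0 hδ1 (hgood η hη)
      exact ⟨f, fun _ => hf⟩
    · exact ⟨0, fun h => absurd h hη⟩
  choose F hF using hex
  refine ⟨F, fun η hη => ?_, ?_⟩
  · obtain ⟨f1, f2, f3, -⟩ := hF η hη
    have hE : ∀ (k : ℕ) (s : ℂ), coneE2 ω η δ (k + 1) s =
        sp s * rr (ω : ℝ) δ (AA (Real.sinh η ^ 2) (Real.cosh η)) 0 k s := fun k s => cone_rr hω hη hδ0 k s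
    simp only [hE]
    refine ⟨fun s hs => ?_, abstract_unif hw hδ0 (hgood η hη), f1, f2, f3⟩
    exact abstract_summable hw hδ0 (hgood η hη) (by linarith [hs.1])
  · have hz : riemannZeta (-1) = -(1 / 12 : ℂ) := by
      have := riemannZeta_neg_nat_eq_bernoulli 1
      norm_num [bernoulli_two, bernoulli_eq_bernoulli'_of_ne_one] at this ⊢
      exact this
    have h := (Complex.continuous_ofReal.tendsto 0).comp (Vd_lim hw hδ1)
    rw [Complex.ofReal_zero] at h
    refine h.congr' ?_
    filter_upwards [self_mem_nhdsWithin] with η hη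
    rw [(hF η hη).2.2.2, hz]
    simp only [Function.comp]
    push_cast
    ring
end

section
/- Let ω ≥ 1 be an integer. The double series Ξ₃(s) = (2 sin(πs)/π) · Σ_{k≥1} Σ_{j≥0} ((s)_j/(j!·4^j)) · (kω)^{1-2s-2j} · ∫₁^{∞} (log(u) - log(u+1)) · u^{-2s-2j} du converges absolutely and locally uniformly on the strip {s ∈ ℂ : 1 < Re(s) < 2}, and its sum extends to a meromorphic function on the half-plane {Re(s) > -1/2} which is holomorphic at s = 0 with value Ξ₃(0) = -ζ(-1)·ω and derivative Ξ₃'(0) = 2ω·(ζ(-1)·log 4 - ζ(-1) - ζ'(-1)) + (1/ω)·(ζ(0)² + ζ(0)·log 2) + 2ω·ζ(-1)·log(ω). -/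
open MeasureTheory Filter

/-- The Pochhammer symbol `(s)_j = s(s+1)⋯(s+j-1)`. -/
noncomputable def pochSym (s : ℂ) (j : ℕ) : ℂ := ∏ i ∈ Finset.range j, (s + i)

/-- The `(k,j)`-term of the double series `Ξ₃(s)`:
`(2 sin(πs)/π) · ((s)_j/(j!·4^j)) · (kω)^{1-2s-2j} · ∫₁^∞ (log u - log(u+1))·u^{-2s-2j} du`. -/
noncomputable def Xi3Term (ω : ℕ) (k j : ℕ) (s : ℂ) : ℂ :=
  (2 * Complex.sin ((Real.pi : ℂ) * s) / (Real.pi : ℂ)) *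
    (pochSym s j / ((Nat.factorial j : ℂ) * 4 ^ j)) *
    (((k : ℝ) * (ω : ℝ) : ℝ) : ℂ) ^ (1 - 2 * s - 2 * (j : ℂ)) *
    ∫ u in Set.Ioi (1 : ℝ),
      ((Real.log u - Real.log (u + 1) : ℝ) : ℂ) * (u : ℂ) ^ (-(2 * s) - 2 * (j : ℂ))

namespace Xi3Aux

open Asymptotics Topology

/-- Integral transform over `(1, ∞)`. -/
noncomputable def TT (g : ℝ → ℝ) (a : ℂ) : ℂ :=
  ∫ u in Set.Ioi (1 : ℝ), ((g u : ℝ) : ℂ) * (u : ℂ) ^ (-a)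

lemma TT_integrable {g : ℝ → ℝ} {m : ℝ} (hg : ContinuousOn g (Set.Ioi 1))
    (hb : ∀ u, 1 < u → |g u| ≤ u ^ (-m)) {a : ℂ} (ha : 1 - m < a.re) :
    IntegrableOn (fun u : ℝ => ((g u : ℝ) : ℂ) * (u : ℂ) ^ (-a)) (Set.Ioi 1) := by
  have h1 : IntegrableOn (fun u : ℝ => u ^ (-m - a.re)) (Set.Ioi 1) :=
    integrableOn_Ioi_rpow_of_lt (by linarith) one_pos
  refine Integrable.mono' h1 ?_ ?_
  · refine ContinuousOn.aestronglyMeasurable ?_ measurableSet_Ioi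
    refine ContinuousOn.mul (Complex.continuous_ofReal.comp_continuousOn hg) ?_
    intro u hu
    refine ContinuousAt.continuousWithinAt ?_
    exact Complex.continuousAt_ofReal_cpow_const _ _ (Or.inr (by
      have : (1 : ℝ) < u := hu
      positivity))
  · refine (ae_restrict_iff' measurableSet_Ioi).2 (Eventually.of_forall fun u hu => ?_)
    have hu1 : (1 : ℝ) < u := hu
    have hu0 : (0 : ℝ) < u := by linarith
    rw [norm_mul, Complex.norm_cpow_eq_rpow_re_of_pos hu0, Complex.norm_real, Real.norm_eq_abs,
      sub_eq_add_neg, Real.rpow_add hu0, Complex.neg_re]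
    gcongr
    exact hb u hu1

lemma TT_bound {g : ℝ → ℝ} {m : ℝ}
    (hb : ∀ u, 1 < u → |g u| ≤ u ^ (-m)) {a : ℂ} (ha : 2 - m ≤ a.re) :
    ‖TT g a‖ ≤ 1 := by
  have h1 : IntegrableOn (fun u : ℝ => u ^ (-2 : ℝ)) (Set.Ioi 1) :=
    integrableOn_Ioi_rpow_of_lt (by norm_num) one_pos
  have h2 := integral_Ioi_rpow_of_lt (show (-2 : ℝ) < -1 by norm_num) one_pos
  have h3 : ∫ u in Set.Ioi (1 : ℝ), u ^ (-2 : ℝ) = 1 := by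
    rw [h2]; norm_num
  rw [← h3]
  refine norm_integral_le_of_norm_le h1 ?_
  refine (ae_restrict_iff' measurableSet_Ioi).2 (Eventually.of_forall fun u hu => ?_)
  have hu1 : (1 : ℝ) < u := hu
  have hu0 : (0 : ℝ) < u := by linarith
  rw [norm_mul, Complex.norm_cpow_eq_rpow_re_of_pos hu0, Complex.norm_real, Real.norm_eq_abs,
    Complex.neg_re]
  calc |g u| * u ^ (-a.re) ≤ u ^ (-m) * u ^ (-a.re) := by
        gcongr
        exact hb u hu1
    _ = u ^ (-m - a.re) := by rw [← Real.rpow_add hu0]; ring_nf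
    _ ≤ u ^ (-2 : ℝ) := Real.rpow_le_rpow_of_exponent_le hu1.le (by linarith)

lemma TT_diff {g : ℝ → ℝ} {m : ℝ} (hm : 0 ≤ m) (hg : ContinuousOn g (Set.Ioi 1))
    (hb : ∀ u, 1 < u → |g u| ≤ u ^ (-m)) {a : ℂ} (ha : 1 - m < a.re) :
    DifferentiableAt ℂ (TT g) a := by
  set f : ℝ → ℂ := (Set.Ioi (1 : ℝ)).indicator (fun u => ((g u : ℝ) : ℂ)) with hf
  have hbf : ∀ u : ℝ, ‖f u‖ ≤ 1 := by
    intro u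
    by_cases hu : u ∈ Set.Ioi (1 : ℝ)
    · rw [hf, Set.indicator_of_mem hu, Complex.norm_real, Real.norm_eq_abs]
      exact (hb u hu).trans (Real.rpow_le_one_of_one_le_of_nonpos (le_of_lt hu) (by linarith))
    · rw [hf, Set.indicator_of_notMem hu]; simp
  have hmeas : AEStronglyMeasurable f volume := by
    rw [hf, aestronglyMeasurable_indicator_iff measurableSet_Ioi]
    exact (Complex.continuous_ofReal.comp_continuousOn hg).aestronglyMeasurable measurableSet_Ioi
  have hloc : LocallyIntegrable f volume := by
    refine (locallyIntegrable_const (1 : ℝ)).mono hmeas (Eventually.of_forall fun u => ?_)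
    simpa using hbf u
  have hfun : TT g = fun a => mellin f (1 - a) := by
    funext a
    simp only [TT, mellin]
    have : ∀ t : ℝ, (t : ℂ) ^ (1 - a - 1) • f t
        = (Set.Ioi (1 : ℝ)).indicator (fun u : ℝ => ((g u : ℝ) : ℂ) * (u : ℂ) ^ (-a)) t := by
      intro t
      by_cases ht : t ∈ Set.Ioi (1 : ℝ)
      · rw [hf, Set.indicator_of_mem ht, Set.indicator_of_mem ht, smul_eq_mul, mul_comm]
        ring_nf
      · rw [hf, Set.indicator_of_notMem ht, Set.indicator_of_notMem ht]; simp
    simp_rw [this]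
    rw [setIntegral_indicator measurableSet_Ioi]
    congr 2
    ext x
    simp only [Set.mem_Ioi, Set.mem_inter_iff]
    constructor
    · intro h; exact ⟨by linarith, h⟩
    · intro h; exact h.2
  rw [hfun]
  have key : DifferentiableAt ℂ (mellin f) (1 - a) := by
    refine mellin_differentiableAt_of_isBigO_rpow (a := m) (b := (1 - a).re - 1)
      (hloc.locallyIntegrableOn _) ?_ (by simp; linarith) ?_ (by linarith)
    · refine IsBigO.of_bound 1 ?_
      filter_upwards [eventually_gt_atTop (1 : ℝ)] with u hu
      have hu0 : (0 : ℝ) < u := by linarith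
      rw [hf, Set.indicator_of_mem (show u ∈ Set.Ioi (1 : ℝ) from hu), Complex.norm_real,
        Real.norm_eq_abs, one_mul, Real.norm_eq_abs, abs_of_pos (Real.rpow_pos_of_pos hu0 _)]
      exact hb u hu
    · have : f =ᶠ[𝓝[>] 0] (fun _ => (0 : ℂ)) := by
        have : Set.Iio (1 : ℝ) ∈ 𝓝[>] (0 : ℝ) := mem_nhdsWithin_of_mem_nhds (Iio_mem_nhds one_pos)
        filter_upwards [this] with u hu
        rw [hf, Set.indicator_of_notMem]
        simp only [Set.mem_Ioi, not_lt]
        exact le_of_lt hu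
      exact this.trans_isBigO (isBigO_zero _ _)
  exact DifferentiableAt.comp a (f := fun a : ℂ => 1 - a) key (by fun_prop)

/-- `log u - log (u+1)` -/
noncomputable def LL (u : ℝ) : ℝ := Real.log u - Real.log (u + 1)

/-- regularised version -/
noncomputable def MM (u : ℝ) : ℝ := Real.log u - Real.log (u + 1) + 1 / u

lemma LL_cont : ContinuousOn LL (Set.Ioi 1) := by
  have : ∀ u ∈ Set.Ioi (1 : ℝ), ContinuousAt LL u := by
    intro u hu
    have : (1 : ℝ) < u := hu
    unfold LL
    exact (Real.continuousAt_log (by positivity)).sub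
      (ContinuousAt.comp (f := fun u : ℝ => u + 1) (Real.continuousAt_log (by positivity))
        (by fun_prop))
  exact fun u hu => (this u hu).continuousWithinAt

lemma MM_cont : ContinuousOn MM (Set.Ioi 1) := by
  refine LL_cont.add ?_
  intro u hu
  have : (1 : ℝ) < u := hu
  exact (ContinuousAt.div continuousAt_const continuousAt_id (by simp; positivity)).continuousWithinAt

lemma LL_upper {u : ℝ} (hu : 0 < u) : LL u ≤ - (1 / (u + 1)) := by
  have := Real.one_sub_inv_le_log_of_pos (show 0 < (u + 1) / u by positivity)
  rw [Real.log_div (by positivity) (by positivity)] at this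
  have h : 1 - ((u + 1) / u)⁻¹ = 1 / (u + 1) := by field_simp; ring
  rw [h] at this
  unfold LL; linarith

lemma LL_lower {u : ℝ} (hu : 0 < u) : - (1 / u) ≤ LL u := by
  have := Real.log_le_sub_one_of_pos (show 0 < (u + 1) / u by positivity)
  rw [Real.log_div (by positivity) (by positivity)] at this
  have h : (u + 1) / u - 1 = 1 / u := by field_simp; ring
  rw [h] at this
  unfold LL; linarith

lemma LL_bound : ∀ u, 1 < u → |LL u| ≤ u ^ (-1 : ℝ) := by
  intro u hu
  have h0 : 0 < u := by linarith
  rw [Real.rpow_neg_one, ← one_div, abs_le]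
  refine ⟨LL_lower h0, (LL_upper h0).trans ?_⟩
  have : 0 < 1 / (u + 1) := by positivity
  have : 0 < 1 / u := by positivity
  linarith

lemma MM_bound : ∀ u, 1 < u → |MM u| ≤ u ^ (-2 : ℝ) := by
  intro u hu
  have h0 : 0 < u := by linarith
  have e : MM u = LL u + 1 / u := rfl
  rw [Real.rpow_neg h0.le, Real.rpow_two, ← one_div, e, abs_le]
  have h1 := LL_upper h0
  have h2 := LL_lower h0
  have h3 : 1 / u - 1 / (u + 1) ≤ 1 / u ^ 2 := by
    rw [div_sub_div _ _ (by positivity) (by positivity), div_le_div_iff₀ (by positivity) (by positivity)]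
    nlinarith
  have : 0 < 1 / u ^ 2 := by positivity
  constructor <;> linarith

lemma TT_rel {a : ℂ} (ha : 0 < a.re) : TT LL a = - 1 / a + TT MM a := by
  have h1 := TT_integrable LL_cont LL_bound (a := a) (by linarith)
  have h2 := TT_integrable MM_cont MM_bound (a := a) (by linarith)
  have h3 := integral_Ioi_cpow_of_lt (a := -1 - a) (by simp; linarith) one_pos
  have ha0 : a ≠ 0 := by rintro rfl; simp at ha
  have h4 : (∫ u in Set.Ioi (1 : ℝ), (u : ℂ) ^ (-1 - a)) = TT MM a - TT LL a := by
    unfold TT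
    rw [← integral_sub h2 h1]
    refine setIntegral_congr_fun measurableSet_Ioi fun u hu => ?_
    have hu0 : (u : ℂ) ≠ 0 := by
      have : (1 : ℝ) < u := hu
      exact_mod_cast (by positivity : u ≠ 0)
    simp only [MM, LL]
    rw [sub_eq_add_neg, Complex.cpow_add _ _ hu0, Complex.cpow_neg_one]
    push_cast
    ring
  have h5 : TT LL a = TT MM a - ∫ u in Set.Ioi (1 : ℝ), (u : ℂ) ^ (-1 - a) := by
    rw [h4]; ring
  rw [h5, h3]
  simp only [Complex.ofReal_one, Complex.one_cpow]
  rw [show (-1 - a + 1) = -a by ring]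
  field_simp
  ring

lemma LL_tendsto : Tendsto LL atTop (𝓝 0) := by
  have h : Tendsto (fun u : ℝ => 1 / u) atTop (𝓝 0) := by
    simpa using tendsto_inv_atTop_zero (𝕜 := ℝ)
  have h2 : Tendsto (fun u : ℝ => - (1 / u)) atTop (𝓝 0) := by simpa using h.neg
  refine tendsto_of_tendsto_of_tendsto_of_le_of_le' h2 tendsto_const_nhds ?_ ?_
  · filter_upwards [eventually_gt_atTop 0] with u hu using LL_lower hu
  · filter_upwards [eventually_gt_atTop 0] with u hu
    have := LL_upper hu
    have : 0 < 1 / (u + 1) := by positivity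
    linarith

lemma LL_tendsto' : Tendsto (fun u => (u + 1) * LL u) atTop (𝓝 (-1)) := by
  have h : Tendsto (fun u : ℝ => 1 / u) atTop (𝓝 0) := by
    simpa using tendsto_inv_atTop_zero (𝕜 := ℝ)
  have h2 : Tendsto (fun u : ℝ => - 1 - 1 / u) atTop (𝓝 (-1)) := by simpa using h.const_sub (-1)
  refine tendsto_of_tendsto_of_tendsto_of_le_of_le' h2 tendsto_const_nhds ?_ ?_
  · filter_upwards [eventually_gt_atTop 0] with u hu
    have := mul_le_mul_of_nonneg_left (LL_lower hu) (show 0 ≤ u + 1 by positivity)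
    refine le_trans (le_of_eq ?_) this
    field_simp
    ring
  · filter_upwards [eventually_gt_atTop 0] with u hu
    have := mul_le_mul_of_nonneg_left (LL_upper hu) (show 0 ≤ u + 1 by positivity)
    refine le_trans this (le_of_eq ?_)
    field_simp

lemma LL_hasDeriv {u : ℝ} (hu : 0 < u) : HasDerivAt LL (1 / u - 1 / (u + 1)) u := by
  unfold LL
  have h1 := Real.hasDerivAt_log hu.ne'
  have h2 := ((hasDerivAt_id u).add_const 1).log (by simp; positivity)
  simpa using h1.fun_sub h2

lemma TT_MM_zero : TT MM 0 = 2 * (Real.log 2 : ℂ) - 1 := by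
  have hInt := TT_integrable MM_cont MM_bound (a := 0) (by simp)
  have h : TT MM 0 = ((∫ u in Set.Ioi (1 : ℝ), MM u : ℝ) : ℂ) := by
    unfold TT
    simp only [neg_zero, Complex.cpow_zero, mul_one]
    exact integral_ofReal
  have hInt' : IntegrableOn MM (Set.Ioi 1) := by
    simp only [neg_zero, Complex.cpow_zero, mul_one] at hInt
    have := hInt.re
    simp only [RCLike.re_to_complex, Complex.ofReal_re] at this
    exact this
  have hI : ∫ u in Set.Ioi (1 : ℝ), MM u = -1 - (1 + 1) * LL 1 := by
    refine integral_Ioi_of_hasDerivAt_of_tendsto' (f := fun u => (u + 1) * LL u) ?_ hInt' LL_tendsto'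
    intro u hu
    have hu0 : 0 < u := lt_of_lt_of_le one_pos hu
    have := ((hasDerivAt_id u).add_const 1).mul (LL_hasDeriv hu0)
    refine this.congr_deriv ?_
    have e : MM u = LL u + 1 / u := rfl
    rw [e]
    simp only [id]
    field_simp
    ring
  rw [h, hI]
  simp only [LL]
  norm_num
  ring

lemma TT_LL_two : TT LL 2 = 1 - 2 * (Real.log 2 : ℂ) := by
  have hInt := TT_integrable LL_cont LL_bound (a := 2) (by simp)
  have e : ∀ u : ℝ, ((LL u : ℝ) : ℂ) * (u : ℂ) ^ (-2 : ℂ) = ((LL u * (1 / u ^ 2) : ℝ) : ℂ) := by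
    intro u
    rw [Complex.cpow_neg, show (2 : ℂ) = ((2 : ℕ) : ℂ) by norm_num, Complex.cpow_natCast]
    push_cast
    ring
  have h : TT LL 2 = ((∫ u in Set.Ioi (1 : ℝ), LL u * (1 / u ^ 2) : ℝ) : ℂ) := by
    unfold TT
    simp only [e]
    exact integral_ofReal
  have hInt' : IntegrableOn (fun u => LL u * (1 / u ^ 2)) (Set.Ioi 1) := by
    simp only [e] at hInt
    have := hInt.re
    simp only [RCLike.re_to_complex, Complex.ofReal_re] at this
    exact this
  have hI : ∫ u in Set.Ioi (1 : ℝ), LL u * (1 / u ^ 2) = 0 - (-(1 / 1 : ℝ) * LL 1 + - (1 / 1) - LL 1) := by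
    refine integral_Ioi_of_hasDerivAt_of_tendsto'
      (f := fun u => -(1 / u) * LL u + - (1 / u) - LL u) ?_ hInt' ?_
    · intro u hu
      have hu0 : 0 < u := lt_of_lt_of_le one_pos hu
      have hi : HasDerivAt (fun u : ℝ => -(1 / u)) (1 / u ^ 2) u := by
        have := (hasDerivAt_inv hu0.ne').fun_neg
        simpa using this
      have := ((hi.mul (LL_hasDeriv hu0)).add hi).sub (LL_hasDeriv hu0)
      refine this.congr_deriv ?_
      field_simp
      ring
    · have h : Tendsto (fun u : ℝ => - (1 / u)) atTop (𝓝 0) := by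
        simpa using (tendsto_inv_atTop_zero (𝕜 := ℝ)).neg
      simpa using ((h.mul LL_tendsto).add h).sub LL_tendsto
  rw [h, hI]
  simp only [LL]
  norm_num
  ring

/-- prefactor -/
noncomputable def cc (s : ℂ) : ℂ := 2 * Complex.sin ((Real.pi : ℂ) * s) / (Real.pi : ℂ)

lemma cc_diff : Differentiable ℂ cc := by
  unfold cc
  fun_prop

lemma cc_zero : cc 0 = 0 := by simp [cc]

lemma cc_hasDeriv : HasDerivAt cc 2 0 := by
  have h1 : HasDerivAt (fun s : ℂ => (Real.pi : ℂ) * s) (Real.pi : ℂ) 0 := by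
    simpa using (hasDerivAt_id (0 : ℂ)).const_mul (Real.pi : ℂ)
  have h := ((h1.csin).const_mul 2).div_const (Real.pi : ℂ)
  refine h.congr_deriv ?_
  have : (Real.pi : ℂ) ≠ 0 := by exact_mod_cast Real.pi_ne_zero
  simp

lemma Xi3Term_eq (ω k j : ℕ) (s : ℂ) : Xi3Term ω k j s =
    cc s * (pochSym s j / ((Nat.factorial j : ℂ) * 4 ^ j)) *
      (((k : ℝ) * (ω : ℝ) : ℝ) : ℂ) ^ (1 - 2 * s - 2 * (j : ℂ)) * TT LL (2 * s + 2 * j) := by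
  simp only [Xi3Term, cc, TT, LL]
  congr 3
  funext u
  congr 2
  ring

/-- majorant of the Pochhammer coefficient -/
noncomputable def PM (M : ℝ) (j : ℕ) : ℝ :=
  (∏ i ∈ Finset.range j, (M + i)) / ((Nat.factorial j : ℝ) * 4 ^ j)

lemma PM_pos {M : ℝ} (hM : 0 < M) (j : ℕ) : 0 < PM M j := by
  unfold PM
  have : 0 < ∏ i ∈ Finset.range j, (M + (i : ℝ)) := Finset.prod_pos fun i _ => by positivity
  positivity

lemma PM_succ {M : ℝ} (hM : 0 < M) (j : ℕ) :
    PM M (j + 1) / PM M j = (1 / 4) * ((M - 1) * (1 / ((j : ℝ) + 1)) + 1) := by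
  have hp : 0 < ∏ i ∈ Finset.range j, (M + (i : ℝ)) := Finset.prod_pos fun i _ => by positivity
  unfold PM
  rw [Finset.prod_range_succ, Nat.factorial_succ]
  push_cast
  have : (0 : ℝ) < Nat.factorial j := by positivity
  field_simp
  ring

lemma PM_summable {M : ℝ} (hM : 0 < M) : Summable (PM M) := by
  refine summable_of_ratio_test_tendsto_lt_one (l := 1 / 4) (by norm_num)
    (Eventually.of_forall fun n => (PM_pos hM n).ne') ?_
  have : (fun n => ‖PM M (n + 1)‖ / ‖PM M n‖)
      = fun n : ℕ => (1 / 4) * ((M - 1) * (1 / ((n : ℝ) + 1)) + 1) := by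
    funext n
    rw [Real.norm_of_nonneg (PM_pos hM _).le, Real.norm_of_nonneg (PM_pos hM _).le, PM_succ hM]
  rw [this]
  have h := tendsto_one_div_add_atTop_nhds_zero_nat (𝕜 := ℝ)
  simpa using ((h.const_mul (M - 1)).add_const 1).const_mul (1 / 4 : ℝ)

lemma poch_bound {M : ℝ} {s : ℂ} (hs : ‖s‖ ≤ M) (j : ℕ) :
    ‖pochSym s j / ((Nat.factorial j : ℂ) * 4 ^ j)‖ ≤ PM M j := by
  unfold pochSym PM
  rw [norm_div, norm_mul, norm_pow, norm_prod]
  simp only [Complex.norm_natCast, Complex.norm_ofNat]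
  gcongr with i hi
  refine (norm_add_le _ _).trans ?_
  simp [hs]

lemma term_bound {ω : ℕ} (hω : 1 ≤ ω) {M C r : ℝ} {s : ℂ} (hs : ‖s‖ ≤ M) (hC : ‖cc s‖ ≤ C)
    (hr0 : 0 ≤ r) (k j : ℕ) (hr : r ≤ 2 * s.re + 2 * j - 1) :
    ‖Xi3Term ω (k + 1) j s‖ ≤ C * (((k : ℝ) + 1) ^ (-r) * PM M j) := by
  rw [Xi3Term_eq, norm_mul, norm_mul, norm_mul]
  have h1 := poch_bound hs j
  have h2 : ‖TT LL (2 * s + 2 * j)‖ ≤ 1 :=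
    TT_bound LL_bound (by simp; linarith)
  have hω' : (1 : ℝ) ≤ ω := by exact_mod_cast hω
  have hk0 : (0 : ℝ) < (k : ℝ) + 1 := by positivity
  have h3 : ‖((((k + 1 : ℕ) : ℝ) * (ω : ℝ) : ℝ) : ℂ) ^ (1 - 2 * s - 2 * (j : ℂ))‖
      ≤ ((k : ℝ) + 1) ^ (-r) := by
    rw [Complex.norm_cpow_eq_rpow_re_of_pos (by positivity)]
    have hk1 : (1 : ℝ) ≤ ((k + 1 : ℕ) : ℝ) := by push_cast; linarith [Nat.cast_nonneg (α := ℝ) k]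
    have hkw : ((k : ℝ) + 1) ≤ ((k + 1 : ℕ) : ℝ) * (ω : ℝ) := by
      push_cast
      nlinarith
    calc (((k + 1 : ℕ) : ℝ) * (ω : ℝ)) ^ (1 - 2 * s - 2 * (j : ℂ)).re
        ≤ (((k + 1 : ℕ) : ℝ) * (ω : ℝ)) ^ (-r) := by
          refine Real.rpow_le_rpow_of_exponent_le (by nlinarith) ?_
          simp
          linarith
      _ ≤ ((k : ℝ) + 1) ^ (-r) := Real.rpow_le_rpow_of_nonpos hk0 hkw (by linarith)
  have hP : 0 ≤ PM M j := (norm_nonneg _).trans h1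
  have hC0 : 0 ≤ C := (norm_nonneg _).trans hC
  calc _ ≤ C * PM M j * ((k : ℝ) + 1) ^ (-r) * 1 := by gcongr
    _ = _ := by ring

lemma maj_summable {M C r : ℝ} (hM : 0 < M) (hr : 1 < r) (j0 : ℕ) :
    Summable (fun p : ℕ × ℕ => C * (((p.1 : ℝ) + 1) ^ (-r) * PM M (p.2 + j0))) := by
  have h1 : Summable (fun k : ℕ => ((k : ℝ) + 1) ^ (-r)) := by
    have := (summable_nat_add_iff 1).2 (Real.summable_nat_rpow.2 (show -r < -1 by linarith))
    simpa using this
  have h2 : Summable (fun j : ℕ => PM M (j + j0)) := (summable_nat_add_iff j0).2 (PM_summable hM)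
  exact (h1.mul_of_nonneg h2 (fun k => by positivity) (fun j => (PM_pos hM _).le)).mul_left C

lemma cc_bdd (M : ℝ) : ∃ C, ∀ s : ℂ, ‖s‖ ≤ M → ‖cc s‖ ≤ C := by
  obtain ⟨C, hC⟩ := (isCompact_closedBall (0 : ℂ) M).exists_bound_of_continuousOn
    cc_diff.continuous.continuousOn
  exact ⟨C, fun s hs => hC s (by simpa using hs)⟩

/-- uniform majorant on a neighbourhood of each point of the strip -/
lemma strip_bound {ω : ℕ} (hω : 1 ≤ ω) {s₀ : ℂ} (hs : 1 < s₀.re) :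
    ∃ t ∈ 𝓝 s₀, ∃ u : ℕ × ℕ → ℝ, Summable u ∧
      ∀ p : ℕ × ℕ, ∀ s ∈ t, ‖Xi3Term ω (p.1 + 1) p.2 s‖ ≤ u p := by
  obtain ⟨C, hC⟩ := cc_bdd (‖s₀‖ + 1)
  refine ⟨{s | (1 + s₀.re) / 2 < s.re} ∩ {s | ‖s‖ < ‖s₀‖ + 1}, ?_, _,
    maj_summable (M := ‖s₀‖ + 1) (C := C) (r := s₀.re) (by positivity) hs 0, ?_⟩
  · refine IsOpen.mem_nhds (IsOpen.inter ?_ ?_) ⟨?_, ?_⟩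
    · exact isOpen_lt continuous_const Complex.continuous_re
    · exact isOpen_lt continuous_norm continuous_const
    · simp only [Set.mem_ofPred_eq]; linarith
    · simp
  · rintro ⟨k, j⟩ s ⟨h1, h2⟩
    simp only [Set.mem_ofPred_eq] at h1 h2
    have hj : (0 : ℝ) ≤ j := Nat.cast_nonneg j
    simpa using term_bound hω h2.le (hC s h2.le) (show 0 ≤ s₀.re by linarith) k j (by linarith)

lemma poch_diff (j : ℕ) : Differentiable ℂ (fun s => pochSym s j) := by
  unfold pochSym
  fun_prop

lemma poch_zero (j : ℕ) : pochSym 0 (j + 1) = 0 := by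
  unfold pochSym
  exact Finset.prod_eq_zero (i := 0) (by simp) (by simp)

lemma rest_diff {ω : ℕ} (hω : 1 ≤ ω) (k j : ℕ) {s : ℂ} (hs : 0 < 2 * s.re + 2 * j) :
    DifferentiableAt ℂ (fun s => (((k + 1 : ℕ) : ℝ) * (ω : ℝ) : ℝ) ^ (1 - 2 * s - 2 * (j : ℂ))
      * TT LL (2 * s + 2 * j)) s := by
  have hne : ((((k + 1 : ℕ) : ℝ) * (ω : ℝ) : ℝ) : ℂ) ≠ 0 := by
    have : ((k + 1 : ℕ) : ℝ) * (ω : ℝ) ≠ 0 := by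
      have : (0 : ℝ) < ω := by exact_mod_cast hω
      positivity
    exact_mod_cast this
  refine DifferentiableAt.mul ?_ ?_
  · exact DifferentiableAt.const_cpow (by fun_prop) (Or.inl hne)
  · exact DifferentiableAt.comp s (f := fun s : ℂ => 2 * s + 2 * (j : ℂ))
      (TT_diff zero_le_one LL_cont LL_bound (by simp; linarith)) (by fun_prop)

lemma term_fun (ω k j : ℕ) : Xi3Term ω k j = fun s => cc s *
    (pochSym s j) * ((1 / ((Nat.factorial j : ℂ) * 4 ^ j)) * ((((k : ℝ) * (ω : ℝ) : ℝ) : ℂ) ^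
      (1 - 2 * s - 2 * (j : ℂ)) * TT LL (2 * s + 2 * j))) := by
  funext s
  rw [Xi3Term_eq]
  ring

lemma term_diff {ω : ℕ} (hω : 1 ≤ ω) (k j : ℕ) {s : ℂ} (hs : 0 < 2 * s.re + 2 * j) :
    DifferentiableAt ℂ (Xi3Term ω (k + 1) j) s := by
  rw [term_fun]
  exact ((cc_diff s).mul (poch_diff j s)).mul ((rest_diff hω k j hs).const_mul _)

lemma term_deriv {ω : ℕ} (hω : 1 ≤ ω) (k j : ℕ) :
    deriv (Xi3Term ω (k + 1) (j + 1)) 0 = 0 := by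
  rw [term_fun]
  have h := ((cc_diff 0).hasDerivAt.mul (poch_diff (j + 1) 0).hasDerivAt).mul
    (((rest_diff hω k (j + 1) (s := 0)
      (by simp; positivity)).const_mul (1 / ((Nat.factorial (j + 1) : ℂ) * 4 ^ (j + 1)))).hasDerivAt)
  refine h.deriv.trans ?_
  simp [cc_zero, poch_zero]

lemma term_zero (ω k j : ℕ) : Xi3Term ω k j 0 = 0 := by
  rw [term_fun]; simp [cc_zero]

/-- tail part -/
noncomputable def F2 (ω : ℕ) (s : ℂ) : ℂ := ∑' p : ℕ × ℕ, Xi3Term ω (p.1 + 1) (p.2 + 2) s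

lemma tail_bound {ω : ℕ} (hω : 1 ≤ ω) (M : ℝ) (hM : 0 < M) :
    ∃ u : ℕ × ℕ → ℝ, Summable u ∧ ∀ p : ℕ × ℕ, ∀ s ∈ {s : ℂ | -(1 / 2) < s.re} ∩ {s | ‖s‖ < M},
      ‖Xi3Term ω (p.1 + 1) (p.2 + 2) s‖ ≤ u p := by
  obtain ⟨C, hC⟩ := cc_bdd M
  refine ⟨_, maj_summable (M := M) (C := C) (r := 2) hM (by norm_num) 2, ?_⟩
  rintro ⟨k, j⟩ s ⟨h1, h2⟩
  simp only [Set.mem_ofPred_eq] at h1 h2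
  have hj : (0 : ℝ) ≤ j := Nat.cast_nonneg j
  exact term_bound hω h2.le (hC s h2.le) (by norm_num) k (j + 2) (by push_cast; linarith)

lemma domain_open (M : ℝ) : IsOpen ({s : ℂ | -(1 / 2) < s.re} ∩ {s | ‖s‖ < M}) :=
  (isOpen_lt continuous_const Complex.continuous_re).inter
    (isOpen_lt continuous_norm continuous_const)

lemma tail_term_diff {ω : ℕ} (hω : 1 ≤ ω) (M : ℝ) (p : ℕ × ℕ) :
    DifferentiableOn ℂ (Xi3Term ω (p.1 + 1) (p.2 + 2))
      ({s : ℂ | -(1 / 2) < s.re} ∩ {s | ‖s‖ < M}) := by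
  rintro s ⟨h1, h2⟩
  simp only [Set.mem_ofPred_eq] at h1 h2
  have hj : (0 : ℝ) ≤ p.2 := Nat.cast_nonneg _
  exact (term_diff hω _ _ (by push_cast; linarith)).differentiableWithinAt

lemma F2_analytic {ω : ℕ} (hω : 1 ≤ ω) {s : ℂ} (hs : -(1 / 2) < s.re) : AnalyticAt ℂ (F2 ω) s := by
  obtain ⟨u, hu, hb⟩ := tail_bound hω (‖s‖ + 1) (by positivity)
  have := Complex.differentiableOn_tsum_of_summable_norm hu (tail_term_diff hω _) (domain_open _) hb
  exact this.analyticAt ((domain_open (‖s‖ + 1)).mem_nhds ⟨hs, by simp⟩)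

lemma F2_zero (ω : ℕ) : F2 ω 0 = 0 := by
  simp [F2, term_zero]

lemma F2_deriv {ω : ℕ} (hω : 1 ≤ ω) : deriv (F2 ω) 0 = 0 := by
  obtain ⟨u, hu, hb⟩ := tail_bound hω 1 (by positivity)
  have := Complex.hasSum_deriv_of_summable_norm hu (tail_term_diff hω _) (domain_open _) hb
    (z := 0) (by simp)
  simp only [term_deriv hω] at this
  exact (this.unique hasSum_zero)

lemma row_sum {ω : ℕ} (j : ℕ) {s : ℂ} (hs : 1 < s.re) :
    ∑' k : ℕ, Xi3Term ω (k + 1) j s = cc s * (pochSym s j / ((Nat.factorial j : ℂ) * 4 ^ j)) *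
      (ω : ℂ) ^ (1 - 2 * s - 2 * (j : ℂ)) * riemannZeta (2 * s + 2 * j - 1) *
      TT LL (2 * s + 2 * j) := by
  have hj : (0 : ℝ) ≤ j := Nat.cast_nonneg _
  rw [zeta_eq_tsum_one_div_nat_add_one_cpow (by simp; linarith)]
  rw [← tsum_mul_left, ← tsum_mul_right]
  congr 1
  funext k
  rw [Xi3Term_eq]
  push_cast
  have := Complex.mul_cpow_ofReal_nonneg (a := (k : ℝ) + 1) (b := (ω : ℝ)) (by positivity)
    (by positivity) (1 - 2 * s - 2 * (j : ℂ))
  push_cast at this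
  rw [this, one_div, ← Complex.cpow_neg]
  ring_nf

lemma total_split {ω : ℕ} (hω : 1 ≤ ω) {s : ℂ} (hs : 1 < s.re) :
    ∑' p : ℕ × ℕ, Xi3Term ω (p.1 + 1) p.2 s =
      ∑' k : ℕ, Xi3Term ω (k + 1) 0 s + ∑' k : ℕ, Xi3Term ω (k + 1) 1 s + F2 ω s := by
  obtain ⟨t, ht, u, hu, hb⟩ := strip_bound hω hs
  have hsum : Summable (fun p : ℕ × ℕ => Xi3Term ω (p.1 + 1) p.2 s) :=
    Summable.of_norm_bounded hu fun p => hb p s (mem_of_mem_nhds ht)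
  have hswap : Summable (fun p : ℕ × ℕ => Xi3Term ω (p.2 + 1) p.1 s) := by
    have := (Equiv.prodComm ℕ ℕ).summable_iff.2 hsum
    exact this
  have hinj : Function.Injective (fun p : ℕ × ℕ => (p.1 + 2, p.2)) := by
    rintro ⟨a, b⟩ ⟨c, d⟩ h
    simpa using h
  have hswap2 : Summable (fun p : ℕ × ℕ => Xi3Term ω (p.2 + 1) (p.1 + 2) s) := by
    have := hswap.comp_injective hinj
    exact this
  have e1 : ∑' p : ℕ × ℕ, Xi3Term ω (p.1 + 1) p.2 s
      = ∑' j : ℕ, ∑' k : ℕ, Xi3Term ω (k + 1) j s := by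
    rw [← hswap.tsum_prod]
    exact ((Equiv.prodComm ℕ ℕ).tsum_eq (fun p : ℕ × ℕ => Xi3Term ω (p.1 + 1) p.2 s)).symm
  have e2 : F2 ω s = ∑' j : ℕ, ∑' k : ℕ, Xi3Term ω (k + 1) (j + 2) s := by
    rw [← hswap2.tsum_prod]
    exact ((Equiv.prodComm ℕ ℕ).tsum_eq
      (fun p : ℕ × ℕ => Xi3Term ω (p.1 + 1) (p.2 + 2) s)).symm
  rw [e1, e2, ← hswap.prod.sum_add_tsum_nat_add 2]
  simp [Finset.sum_range_succ]

/-- `cc s / s` continued -/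
noncomputable def DD : ℂ → ℂ := dslope cc 0

lemma DD_diff : Differentiable ℂ DD := by
  have := (Complex.differentiableOn_dslope (f := cc) (c := 0) (s := Set.univ) univ_mem).2
    cc_diff.differentiableOn
  exact differentiableOn_univ.1 this

lemma DD_zero : DD 0 = 2 := by
  rw [DD, dslope_same, cc_hasDeriv.deriv]

lemma DD_of_ne {s : ℂ} (hs : s ≠ 0) : DD s = cc s / s := by
  rw [DD, dslope_of_ne _ hs, slope_def_field, cc_zero]
  simp

lemma DD_even (s : ℂ) : DD (-s) = DD s := by
  by_cases h : s = 0
  · simp [h]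
  · rw [DD_of_ne h, DD_of_ne (neg_ne_zero.2 h)]
    simp only [cc, mul_neg, Complex.sin_neg]
    field_simp

lemma DD_deriv : deriv DD 0 = 0 := by
  have h : deriv (fun s => DD (-s)) 0 = -deriv DD (-0) := deriv_comp_neg DD 0
  simp only [DD_even, neg_zero] at h
  have h2 : (2 : ℂ) * deriv DD 0 = 0 := by linear_combination h
  simpa using h2

/-- `s ζ(2s+1)` continued -/
noncomputable def ZZ : ℂ → ℂ := Function.update (fun s => s * riemannZeta (2 * s + 1)) 0 (1 / 2)

lemma ZZ_of_ne {s : ℂ} (hs : s ≠ 0) : ZZ s = s * riemannZeta (2 * s + 1) := by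
  simp [ZZ, Function.update_of_ne hs]

lemma ZZ_zero : ZZ 0 = 1 / 2 := by simp [ZZ]

lemma ZZ_analytic (s : ℂ) : AnalyticAt ℂ ZZ s := by
  have hd : ∀ z : ℂ, z ≠ 0 → DifferentiableAt ℂ ZZ z := by
    intro z hz
    have h1 : DifferentiableAt ℂ (fun s => s * riemannZeta (2 * s + 1)) z := by
      refine DifferentiableAt.mul (by fun_prop) ?_
      exact DifferentiableAt.comp z (f := fun s : ℂ => 2 * s + 1)
        (differentiableAt_riemannZeta (by simpa using hz)) (by fun_prop)
    refine h1.congr_of_eventuallyEq ?_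
    filter_upwards [isOpen_ne.mem_nhds hz] with w hw using ZZ_of_ne hw
  refine Complex.analyticAt_of_differentiable_on_punctured_nhds_of_continuousAt ?_ ?_
  · by_cases hs : s = 0
    · subst hs
      filter_upwards [self_mem_nhdsWithin] with w hw using hd w hw
    · exact nhdsWithin_le_nhds (by
        filter_upwards [isOpen_ne.mem_nhds hs] with w hw using hd w hw)
  · by_cases hs : s = 0
    · subst hs
      rw [ZZ, continuousAt_update_same]
      have ht : Tendsto (fun s : ℂ => 2 * s + 1) (𝓝[≠] 0) (𝓝[≠] 1) := by
        refine tendsto_nhdsWithin_iff.2 ⟨?_, ?_⟩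
        · have : ContinuousAt (fun s : ℂ => 2 * s + 1) 0 := by fun_prop
          have h := this.tendsto
          simp only [mul_zero, zero_add] at h
          exact h.mono_left nhdsWithin_le_nhds
        · filter_upwards [self_mem_nhdsWithin] with w hw
          simpa using hw
      have h := (riemannZeta_residue_one.comp ht).const_mul (1 / 2 : ℂ)
      rw [mul_one] at h
      refine h.congr fun w => ?_
      simp only [Function.comp]
      ring
    · exact (hd s hs).continuousAt

/-- `j = 0` part -/
noncomputable def F0 (ω : ℕ) (s : ℂ) : ℂ :=
  (ω : ℂ) ^ (1 - 2 * s) * riemannZeta (2 * s - 1) * (-DD s / 2 + cc s * TT MM (2 * s))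

/-- `j = 1` part -/
noncomputable def F1 (ω : ℕ) (s : ℂ) : ℂ :=
  cc s * ((1 / 4) * (ω : ℂ) ^ (-1 - 2 * s) * ZZ s * TT LL (2 * s + 2))

lemma half_open : IsOpen {s : ℂ | -(1 / 2) < s.re} :=
  isOpen_lt continuous_const Complex.continuous_re

lemma TT_MM_diff {s : ℂ} (hs : -(1 / 2) < s.re) :
    DifferentiableAt ℂ (fun s => TT MM (2 * s)) s :=
  DifferentiableAt.comp s (f := fun s : ℂ => 2 * s)
    (TT_diff zero_le_two MM_cont MM_bound (by simp; linarith)) (by fun_prop)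

lemma TT_LL_diff {s : ℂ} (hs : -(1 / 2) < s.re) :
    DifferentiableAt ℂ (fun s => TT LL (2 * s + 2)) s :=
  DifferentiableAt.comp s (f := fun s : ℂ => 2 * s + 2)
    (TT_diff zero_le_one LL_cont LL_bound (by simp; linarith)) (by fun_prop)

lemma zeta_mero (s : ℂ) : MeromorphicAt (fun s => riemannZeta (2 * s - 1)) s := by
  have h1 : AnalyticAt ℂ (fun s : ℂ => s - 1) s := by fun_prop
  have h : MeromorphicAt (fun s => ZZ (s - 1) / (s - 1)) s := by
    refine MeromorphicAt.div ?_ h1.meromorphicAt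
    exact (AnalyticAt.fun_comp (f := fun s : ℂ => s - 1) (ZZ_analytic (s - 1)) h1).meromorphicAt
  refine h.congr ?_
  have hev : ∀ᶠ w in 𝓝[≠] s, w ≠ 1 := by
    by_cases hs : s = 1
    · subst hs; exact self_mem_nhdsWithin
    · exact nhdsWithin_le_nhds (isOpen_ne.mem_nhds hs)
  filter_upwards [hev] with w hw
  have hw' : w - 1 ≠ 0 := sub_ne_zero.2 hw
  rw [ZZ_of_ne hw']
  field_simp
  ring_nf

lemma pow_diff {ω : ℕ} (hω : 1 ≤ ω) (c : ℂ) : Differentiable ℂ (fun s => (ω : ℂ) ^ (c - 2 * s)) := by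
  intro s
  have : (ω : ℂ) ≠ 0 := by exact_mod_cast (by omega : ω ≠ 0)
  exact DifferentiableAt.const_cpow (by fun_prop) (Or.inl this)

lemma F0_mero {ω : ℕ} (hω : 1 ≤ ω) {s : ℂ} (hs : -(1 / 2) < s.re) : MeromorphicAt (F0 ω) s := by
  refine MeromorphicAt.mul (MeromorphicAt.mul ?_ (zeta_mero s)) ?_
  · exact ((pow_diff hω 1).analyticAt s).meromorphicAt
  · refine AnalyticAt.meromorphicAt ?_
    refine DifferentiableOn.analyticAt (s := {s : ℂ | -(1 / 2) < s.re}) ?_ (half_open.mem_nhds hs)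
    intro w hw
    refine DifferentiableAt.differentiableWithinAt ?_
    exact ((DD_diff w).neg.div_const 2).add ((cc_diff w).mul (TT_MM_diff hw))

lemma F0_analytic {ω : ℕ} (hω : 1 ≤ ω) : AnalyticAt ℂ (F0 ω) 0 := by
  have ho : IsOpen ({s : ℂ | -(1 / 2) < s.re} ∩ {s | s ≠ 1}) := half_open.inter isOpen_ne
  refine DifferentiableOn.analyticAt (s := {s : ℂ | -(1 / 2) < s.re} ∩ {s | s ≠ 1}) ?_
    (ho.mem_nhds (by simp))
  rintro w ⟨hw, hw1⟩
  refine DifferentiableAt.differentiableWithinAt ?_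
  refine DifferentiableAt.mul (DifferentiableAt.mul (pow_diff hω 1 w) ?_) ?_
  · refine DifferentiableAt.comp w (f := fun s : ℂ => 2 * s - 1)
      (differentiableAt_riemannZeta ?_) (by fun_prop)
    intro h
    exact hw1 (by linear_combination h / 2)
  · exact ((DD_diff w).neg.div_const 2).add ((cc_diff w).mul (TT_MM_diff hw))

lemma F1_rest_diff {ω : ℕ} (hω : 1 ≤ ω) {s : ℂ} (hs : -(1 / 2) < s.re) : DifferentiableAt ℂ
    (fun s => (1 / 4) * (ω : ℂ) ^ (-1 - 2 * s) * ZZ s * TT LL (2 * s + 2)) s :=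
  (((pow_diff hω (-1) s).const_mul (1 / 4)).mul (ZZ_analytic s).differentiableAt).mul
    (TT_LL_diff hs)

lemma F1_analytic {ω : ℕ} (hω : 1 ≤ ω) {s : ℂ} (hs : -(1 / 2) < s.re) : AnalyticAt ℂ (F1 ω) s := by
  refine DifferentiableOn.analyticAt (s := {s : ℂ | -(1 / 2) < s.re}) ?_ (half_open.mem_nhds hs)
  intro w hw
  exact ((cc_diff w).mul (F1_rest_diff hω hw)).differentiableWithinAt

lemma F1_hasDeriv {ω : ℕ} (hω : 1 ≤ ω) :
    HasDerivAt (F1 ω) ((1 / (ω : ℂ)) * (1 / 4 - (Real.log 2 : ℂ) / 2)) 0 := by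
  have h := cc_hasDeriv.mul (F1_rest_diff hω (s := 0) (by simp)).hasDerivAt
  refine h.congr_deriv ?_
  rw [cc_zero, ZZ_zero]
  simp only [mul_zero, zero_add, sub_zero, zero_mul, add_zero, TT_LL_two, Complex.cpow_neg_one]
  ring

lemma F0_hasDeriv {ω : ℕ} (hω : 1 ≤ ω) :
    HasDerivAt (F0 ω) (2 * (ω : ℂ) * (riemannZeta (-1) * (2 * (Real.log 2 : ℂ)) - riemannZeta (-1) -
            deriv riemannZeta (-1)) + 2 * (ω : ℂ) * riemannZeta (-1) * (Real.log ω : ℂ)) 0 := by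
  have hω0 : (ω : ℂ) ≠ 0 := by exact_mod_cast (by omega : ω ≠ 0)
  have hp : HasDerivAt (fun s : ℂ => (ω : ℂ) ^ (1 - 2 * s)) (-2 * (ω : ℂ) * Complex.log ω) 0 := by
    have h1 : HasDerivAt (fun s : ℂ => 1 - 2 * s) (-2) 0 := by
      simpa using ((hasDerivAt_id (0 : ℂ)).const_mul 2).const_sub 1
    refine (h1.const_cpow (Or.inl hω0)).congr_deriv ?_
    simp only [mul_zero, sub_zero, Complex.cpow_one]
    ring
  have hz : HasDerivAt (fun s : ℂ => riemannZeta (2 * s - 1)) (deriv riemannZeta (-1) * 2) 0 := by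
    have h1 : HasDerivAt (fun s : ℂ => 2 * s - 1) 2 0 := by
      simpa using ((hasDerivAt_id (0 : ℂ)).const_mul 2).sub_const 1
    have h2 : HasDerivAt riemannZeta (deriv riemannZeta (-1)) (2 * 0 - 1) := by
      rw [show (2 * 0 - 1 : ℂ) = -1 by ring]
      exact (differentiableAt_riemannZeta (by norm_num)).hasDerivAt
    exact h2.comp 0 h1
  have hD : HasDerivAt DD 0 0 := by
    have := (DD_diff 0).hasDerivAt
    rwa [DD_deriv] at this
  have hr := (hD.neg.div_const 2).add
    (cc_hasDeriv.mul (TT_MM_diff (s := 0) (by simp)).hasDerivAt)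
  have h := (hp.mul hz).mul hr
  refine h.congr_deriv ?_
  simp only [Pi.mul_apply, Pi.add_apply, Pi.neg_apply, cc_zero, DD_zero, mul_zero, sub_zero,
    zero_sub, zero_mul, add_zero, TT_MM_zero, Complex.cpow_one, Complex.natCast_log]
  ring

lemma F0_zero (ω : ℕ) : F0 ω 0 = -riemannZeta (-1) * (ω : ℂ) := by
  simp only [F0, cc_zero, DD_zero, mul_zero, sub_zero, zero_sub, zero_mul, add_zero,
    Complex.cpow_one]
  ring

lemma F1_zero (ω : ℕ) : F1 ω 0 = 0 := by simp [F1, cc_zero]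

lemma F0_eq {ω : ℕ} {s : ℂ} (hs : 1 < s.re) : ∑' k : ℕ, Xi3Term ω (k + 1) 0 s = F0 ω s := by
  have hs0 : s ≠ 0 := by rintro rfl; simp at hs; linarith
  rw [row_sum 0 hs, F0, DD_of_ne hs0]
  simp only [pochSym, Finset.range_zero, Finset.prod_empty, Nat.factorial_zero, Nat.cast_zero,
    Nat.cast_one, pow_zero, mul_zero, sub_zero, add_zero, mul_one, div_one]
  rw [TT_rel (by simp; linarith)]
  field_simp

lemma F1_eq {ω : ℕ} {s : ℂ} (hs : 1 < s.re) : ∑' k : ℕ, Xi3Term ω (k + 1) 1 s = F1 ω s := by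
  have hs0 : s ≠ 0 := by rintro rfl; simp at hs; linarith
  rw [row_sum 1 hs, F1, ZZ_of_ne hs0]
  simp only [pochSym, Finset.prod_range_one, Nat.factorial_one, Nat.cast_zero,
    Nat.cast_one, pow_one, add_zero, mul_one, one_mul]
  rw [show 2 * s + 2 - 1 = 2 * s + 1 by ring, show 1 - 2 * s - 2 = -1 - 2 * s by ring]
  ring

end Xi3Aux

open Xi3Aux
/-- for a fixed integer `ω ≥ 1`, the double series
`Ξ₃(s) = (2 sin(πs)/π)·Σ_{k≥1}Σ_{j≥0} ((s)_j/(j!·4^j))·(kω)^{1-2s-2j}·∫₁^∞(log u - log(u+1))u^{-2s-2j} du`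
converges absolutely and locally uniformly on the strip `1 < Re(s) < 2`, and its sum extends to
a meromorphic function on the half-plane `Re(s) > -1/2` which is holomorphic at `s = 0`, with
value `Ξ₃(0) = -ζ(-1)·ω` and derivative
`Ξ₃'(0) = 2ω·(ζ(-1)·log 4 - ζ(-1) - ζ'(-1)) + (1/ω)·(ζ(0)² + ζ(0)·log 2) + 2ω·ζ(-1)·log ω`. -/
theorem statement9 (ω : ℕ) (hω : 1 ≤ ω) :
    (∀ s ∈ {s : ℂ | 1 < s.re ∧ s.re < 2},
      Summable (fun p : ℕ × ℕ => ‖Xi3Term ω (p.1 + 1) p.2 s‖)) ∧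
    TendstoLocallyUniformlyOn
      (fun (N : Finset (ℕ × ℕ)) (s : ℂ) => ∑ p ∈ N, Xi3Term ω (p.1 + 1) p.2 s)
      (fun s : ℂ => ∑' p : ℕ × ℕ, Xi3Term ω (p.1 + 1) p.2 s)
      atTop {s : ℂ | 1 < s.re ∧ s.re < 2} ∧
    ∃ F : ℂ → ℂ,
      MeromorphicOn F {s : ℂ | -(1 / 2) < s.re} ∧
      Set.EqOn F (fun s : ℂ => ∑' p : ℕ × ℕ, Xi3Term ω (p.1 + 1) p.2 s)
        {s : ℂ | 1 < s.re ∧ s.re < 2} ∧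
      AnalyticAt ℂ F 0 ∧
      F 0 = -riemannZeta (-1) * (ω : ℂ) ∧
      deriv F 0 =
        2 * (ω : ℂ) * (riemannZeta (-1) * (Real.log 4 : ℂ) - riemannZeta (-1) -
            deriv riemannZeta (-1)) +
          (1 / (ω : ℂ)) * (riemannZeta 0 ^ 2 + riemannZeta 0 * (Real.log 2 : ℂ)) +
          2 * (ω : ℂ) * riemannZeta (-1) * (Real.log ω : ℂ) := by
  refine ⟨?_, ?_, fun s => F0 ω s + F1 ω s + F2 ω s, ?_, ?_, ?_, ?_, ?_⟩
  · rintro s ⟨hs, -⟩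
    obtain ⟨t, ht, u, hu, hb⟩ := strip_bound hω hs
    exact Summable.of_nonneg_of_le (fun _ => norm_nonneg _)
      (fun p => hb p s (mem_of_mem_nhds ht)) hu
  · rintro V hV s ⟨hs, -⟩
    obtain ⟨t, ht, u, hu, hb⟩ := strip_bound hω hs
    exact ⟨t, mem_nhdsWithin_of_mem_nhds ht, tendstoUniformlyOn_tsum hu hb V hV⟩
  · intro s hs
    exact ((F0_mero hω hs).add (F1_analytic hω hs).meromorphicAt).add
      (F2_analytic hω hs).meromorphicAt
  · rintro s ⟨hs, -⟩
    simp only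
    rw [total_split hω hs, F0_eq hs, F1_eq hs]
  · exact ((F0_analytic hω).add (F1_analytic hω (by simp))).add (F2_analytic hω (by simp))
  · simp only [F0_zero, F1_zero, F2_zero, add_zero]
  · have h2 : HasDerivAt (F2 ω) 0 0 := by
      have := (F2_analytic hω (s := 0) (by simp)).differentiableAt.hasDerivAt
      rwa [F2_deriv hω] at this
    refine (((F0_hasDeriv hω).add (F1_hasDeriv hω)).add h2).deriv.trans ?_
    have h4 : (Real.log 4 : ℂ) = 2 * (Real.log 2 : ℂ) := by
      rw [show (4 : ℝ) = 2 ^ 2 by norm_num, Real.log_pow]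
      push_cast
      ring
    rw [h4, riemannZeta_zero]
    ring
end
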